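/- Let R = k[x_1,…,x_d] with d ≥ 3 and let E be a torsion-free R-module of rank e and projective dimension one with μ(E) = d+e, minimal free resolution 0 → R^d →φ R^{d+e} → E → 0 where φ = [φ′ | φ″] with φ′ having d−2 columns of linear forms and φ″ two columns of quadrics, I_1(φ) = (x_1,…,x_d), and E satisfying G_d. Let A = H^0_m(S(E)) with m = (x_1,…,x_d), and let ρ be the first map in the graded strand K_2 of the bigraded Koszul complex of ℓ_1,…,ℓ_d resolving S(E)_2. Then A_0 is a principal ideal of T, and if ht I(ρ) ≥ 2 then its generator has bidegree (0, 4d−4). -/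

import Mathlib

/-!
STATEMENT 11: With `R`, `E`, `φ` as in Statement 7, `A = H⁰_m(S(E))`, and `ρ` the first
map in the graded strand of the Koszul complex of `ℓ_1,…,ℓ_d` resolving `S(E)_2` (i.e. a
presentation matrix of `S(E)_2` over `T`): `A_0` is a principal ideal of `T`, and if
`ht I(ρ) ≥ 2` then its generator has bidegree `(0, 4d−4)`.
-/

open MvPolynomial

noncomputable section

namespace Stmt11

variable (k : Type) [Field k] (d n : ℕ)

/-- `B = R ⊗_k T = k[x_1,…,x_d,y_1,…,y_n]`. -/
abbrev B := MvPolynomial (Fin d ⊕ Fin n) k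

/-- `T = k[y_1,…,y_n]`. -/
abbrev T := MvPolynomial (Fin n) k

/-- `B` is a `T`-algebra via `y_j ↦ y_j`. -/
instance : Algebra (T k n) (B k d n) :=
  ((rename Sum.inr : T k n →ₐ[k] B k d n).toRingHom).toAlgebra

/-- The bigrading weight: `bideg x_i = (1,0)`, `bideg y_j = (0,1)`. -/
def bwt : (Fin d ⊕ Fin n) → ℕ × ℕ := Sum.elim (fun _ => (1, 0)) (fun _ => (0, 1))

/-- The `x`-degree weight. -/
def wx : (Fin d ⊕ Fin n) → ℕ := Sum.elim (fun _ => 1) (fun _ => 0)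

/-- The ideal `m = (x_1,…,x_d)B`. -/
def mxB : Ideal (B k d n) := Ideal.span (Set.range fun i : Fin d => (X (Sum.inl i) : B k d n))

variable (I : Ideal (B k d n))

/-- `A = H⁰_m(S)`: elements of `S = B/I` annihilated by a power of `m`. -/
def H0 : Submodule (B k d n) (B k d n ⧸ I) :=
  ⨆ N : ℕ, Submodule.torsionBySet (B k d n) (B k d n ⧸ I)
    ((mxB k d n ^ N : Ideal (B k d n)) : Set (B k d n))

/-- The bigraded component of `S = B/I` in bidegree `p`. -/
def Scomp (p : ℕ × ℕ) : Submodule k (B k d n ⧸ I) :=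
  (weightedHomogeneousSubmodule k (bwt d n) p).map (Ideal.Quotient.mkₐ k I).toLinearMap

/-- The graded strand `S_j = ⊕_b S_{(j,b)}` of `S` in `x`-degree `j`, as a `T`-module. -/
def SxDeg (j : ℕ) : Submodule (T k n) (B k d n ⧸ I) :=
  Submodule.span (T k n) ((Ideal.Quotient.mk I) '' {g : B k d n | g.IsWeightedHomogeneous (wx d n) j})

/-- The graded strand of `S` in (possibly negative) `x`-degree `i : ℤ`. -/
def SxDegZ (i : ℤ) : Submodule (T k n) (B k d n ⧸ I) :=
  if 0 ≤ i then SxDeg k d n I i.toNat else ⊥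

/-- The graded strand `A_i = ⊕_b A_{(i,b)}` of `A = H⁰_m(S)`, as a `T`-module. -/
def AcompZ (i : ℤ) : Submodule (T k n) (B k d n ⧸ I) :=
  (H0 k d n I).restrictScalars (T k n) ⊓ SxDegZ k d n I i

/-- The graded component of `T` in (possibly negative) degree `j`. -/
def TcompZ (j : ℤ) : Submodule k (T k n) :=
  if 0 ≤ j then homogeneousSubmodule (Fin n) k j.toNat else ⊥

/-- The ideal of `t × t` minors of a matrix. -/
def minorsIdeal {R : Type} [CommRing R] {m' n' : Type} (M : Matrix m' n' R) (t : ℕ) :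
    Ideal R :=
  Ideal.span {x | ∃ (f : Fin t → m') (g : Fin t → n'), x = (M.submatrix f g).det}

/-- `ht I ≥ c`: every prime containing `I` has height (= dimension of the localization)
at least `c`. -/
def htGE {R : Type} [CommRing R] (I : Ideal R) (c : ℕ) : Prop :=
  ∀ (p : Ideal R) (_ : p.IsPrime), I ≤ p →
    (c : WithBot ℕ∞) ≤ ringKrullDim (Localization.AtPrime p)

/-!
Write `d = m + 2`. Over `T = k[y]` the ideal `L` is generated by `m` linear forms and two quadrics
in `x`, and `G_d` forces its height to be at least `m + 2`. Writing the generators as a matrix of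
linear forms applied to `x`, let `σ` be the determinant of that matrix, a quadric in `x`.

At a height-one prime of `T` the localization is a discrete valuation ring, and the Smith normal
form of the linear forms reduces to systems in two or three variables, for which `σ` generates the
degree-two part of the saturation of `L`. Let `ψ` be a `T`-linear functional on quadrics that
vanishes on `L`. For `u ∈ A_0` and a quadric `f` the product `u f` lies, locally, in `T σ` modulo
`L`, so that `u ψ(f) = c ψ(σ)` for a scalar `c` independent of `ψ`. If the values of `ψ` have no
common prime divisor, then `ψ(σ)` divides every `u ∈ A_0`. Conversely, over the chart `x_j ≠ 0` of
the projective scheme of `L` the forms have the tautological zero, which puts `σ` into `L` after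
base change; hence `ψ(σ) ∈ A_0`, and `A_0 = (ψ(σ))`.

To find the degree of `ψ`, solve the linear forms by Cramer's rule. Omitting two of the variables
gives a pair of points spanning a plane in the common kernel, and the determinant of the two
quadrics of `L` and a third one, as binary quadratic forms on that plane, is a functional `Ψᵢⱼ`
vanishing on `L`. When `ht I(ρ) ≥ 2`, the functionals modulo a prime element of `T` still have rank
one, hence the `Ψᵢⱼ` have no common prime divisor where the minors do not, and `Ψᵢⱼ` is the cube of
the minor times `ψ`. Counting degrees in `y` gives `4m + 4 = 4d - 4`.
-/

section Saturation

variable {σ R : Type*} [CommRing R]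

/-- The saturation of an ideal of `R[x_i : i ∈ σ]` with respect to the variables. For finite `σ`
it is the preimage of the local cohomology `H⁰` of the quotient, supported at `(x_i : i ∈ σ)`. -/
def saturation (I : Ideal (MvPolynomial σ R)) : Ideal (MvPolynomial σ R) where
  carrier := {f | ∃ N, ∀ i, X i ^ N * f ∈ I}
  zero_mem' := ⟨0, by simp⟩
  add_mem' := by
    rintro f g ⟨N, hf⟩ ⟨M, hg⟩
    refine ⟨N + M, fun i => ?_⟩
    rw [show X i ^ (N + M) * (f + g) = X i ^ M * (X i ^ N * f) + X i ^ N * (X i ^ M * g) by ring]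
    exact I.add_mem (I.mul_mem_left _ (hf i)) (I.mul_mem_left _ (hg i))
  smul_mem' := by
    rintro f g ⟨N, hg⟩
    refine ⟨N, fun i => ?_⟩
    rw [smul_eq_mul, mul_left_comm]
    exact I.mul_mem_left _ (hg i)

theorem saturation_mono {I J : Ideal (MvPolynomial σ R)} (h : I ≤ J) :
    saturation I ≤ saturation J := fun _ ⟨N, hN⟩ => ⟨N, fun i => h (hN i)⟩

theorem mem_saturation_sup_span_of_add_mul_mem {K : Ideal (MvPolynomial σ R)}
    {b x k w : MvPolynomial σ R} (hreg : ∀ f, b * f ∈ K → f ∈ K) (hk : k ∈ K)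
    (h : k + b * w ∈ saturation (K ⊔ Ideal.span {b * x})) :
    w ∈ saturation (K ⊔ Ideal.span {x}) := by
  obtain ⟨N, hN⟩ := h
  refine ⟨N, fun i => ?_⟩
  obtain ⟨k', hk', _, hr, hsum⟩ := Submodule.mem_sup.mp (hN i)
  obtain ⟨r, rfl⟩ := Ideal.mem_span_singleton.mp hr
  refine Submodule.mem_sup.mpr ⟨X i ^ N * w - r * x, hreg _ ?_, r * x,
    Ideal.mul_mem_left _ _ (Ideal.mem_span_singleton_self _), by ring⟩
  rw [show b * (X i ^ N * w - r * x) = k' - X i ^ N * k by linear_combination -hsum]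
  exact K.sub_mem hk' (K.mul_mem_left _ hk)

theorem mem_saturation_iff_exists_pow [Finite σ] {I : Ideal (MvPolynomial σ R)}
    {f : MvPolynomial σ R} :
    f ∈ saturation I ↔ ∃ N, ∀ g ∈ idealOfVars σ R ^ N, g * f ∈ I := by
  refine ⟨fun ⟨N, hN⟩ => ?_, fun ⟨N, hN⟩ => ⟨N, fun i => hN _ (Ideal.pow_mem_pow ?_ N)⟩⟩
  · have hrad : idealOfVars σ R ≤ (I.colon {f}).radical := by
      rw [idealOfVars, Ideal.span_le, Set.range_subset_iff]
      exact fun i => ⟨N, by simpa [Submodule.mem_colon] using hN i⟩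
    obtain ⟨M, hM⟩ := Ideal.exists_pow_le_of_le_radical_of_fg hrad (idealOfVars_fg σ R)
    exact ⟨M, fun g hg => by simpa using Submodule.mem_colon.mp (hM hg)⟩
  · exact Ideal.subset_span ⟨i, rfl⟩

theorem map_mem_saturation_map [Finite σ] {τ R' F : Type*} [Finite τ] [CommRing R']
    [FunLike F (MvPolynomial σ R) (MvPolynomial τ R')]
    [RingHomClass F (MvPolynomial σ R) (MvPolynomial τ R')] (g : F)
    (hg : idealOfVars τ R' ≤ (idealOfVars σ R).map g) {I : Ideal (MvPolynomial σ R)}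
    {f : MvPolynomial σ R} (hf : f ∈ saturation I) : g f ∈ saturation (I.map g) := by
  obtain ⟨N, hN⟩ := mem_saturation_iff_exists_pow.mp hf
  refine mem_saturation_iff_exists_pow.mpr ⟨N, fun u hu => ?_⟩
  have hle : (idealOfVars σ R ^ N).map g ≤ (I.map g).colon {g f} :=
    Ideal.map_le_iff_le_comap.mpr fun v hv => by
      simpa [Submodule.mem_colon] using Ideal.mem_map_of_mem g (hN v hv)
  rw [Ideal.map_pow] at hle
  simpa [Submodule.mem_colon] using hle (Ideal.pow_right_mono hg N hu)

theorem X_pow_mul_mem_of_le {I : Ideal (MvPolynomial σ R)} {f : MvPolynomial σ R} {i : σ}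
    {N M : ℕ} (hNM : N ≤ M) (h : X i ^ N * f ∈ I) : X i ^ M * f ∈ I := by
  rw [← Nat.sub_add_cancel hNM, pow_add, mul_assoc]
  exact I.mul_mem_left _ h

theorem mem_span_X_pow_of_X_pow_mul_mem {s : Set σ} {k : σ} (hk : k ∉ s) {N M : ℕ}
    {h : MvPolynomial σ R} (hh : X k ^ M * h ∈ Ideal.span ((fun i => X i ^ N) '' s)) :
    h ∈ Ideal.span ((fun i => X i ^ N : σ → MvPolynomial σ R) '' s) := by
  have hs : ((fun i => X i ^ N : σ → MvPolynomial σ R) '' s) =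
      (fun a => monomial a 1) '' ((fun i => Finsupp.single i N) '' s) := by
    simp only [Set.image_image, X_pow_eq_monomial]
  rw [hs, mem_ideal_span_monomial_image] at hh ⊢
  intro v hv
  have hv' : v + Finsupp.single k M ∈ (X k ^ M * h).support := by
    rwa [mem_support_iff, X_pow_eq_monomial, add_comm, coeff_monomial_mul, one_mul,
      ← mem_support_iff]
  obtain ⟨_, ⟨i, hi, rfl⟩, hle⟩ := hh _ hv'
  refine ⟨_, ⟨i, hi, rfl⟩, ?_⟩
  have hik : i ≠ k := fun h => hk (h ▸ hi)
  rw [Finsupp.single_le_iff] at hle ⊢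
  simpa [hik] using hle

theorem X_pow_dvd_of_X_pow_mul_eq {i j : σ} (hij : i ≠ j) {N M : ℕ} {f g : MvPolynomial σ R}
    (h : X j ^ M * f = X i ^ N * g) : X i ^ N ∣ f := by
  have := mem_span_X_pow_of_X_pow_mul_mem (s := {i}) (N := N) (M := M) (h := f) (mt Eq.symm hij)
  simp only [Set.image_singleton, Ideal.mem_span_singleton] at this
  exact this ⟨g, h⟩

end Saturation

section KoszulSyzygies

variable {A : Type*} [CommRing A]

/-- Every syzygy of `(a, b)` is a multiple of the Koszul syzygy `(b, -a)`, i.e. the Koszul homology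
`H₁(a, b)` vanishes. -/
def HasKoszulSyzygies (a b : A) : Prop :=
  ∀ α β : A, α * a + β * b = 0 → ∃ h, α = h * b ∧ β = -(h * a)

theorem hasKoszulSyzygies_of_isRelPrime [IsDomain A] [DecompositionMonoid A] {a b : A}
    (hab : IsRelPrime a b) : HasKoszulSyzygies a b := by
  intro α β h
  rcases eq_or_ne b 0 with rfl | hb
  · obtain ⟨u, rfl⟩ := isRelPrime_zero_right.mp hab
    refine ⟨-(β * (u⁻¹ : Aˣ)), by simpa using h, by simp⟩
  · obtain ⟨g, hg⟩ := hab.symm.dvd_of_dvd_mul_right (⟨-β, by linear_combination h⟩ : b ∣ α * a)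
    refine ⟨g, by rw [hg, mul_comm], mul_right_cancel₀ hb ?_⟩
    linear_combination h - a * hg

theorem HasKoszulSyzygies.isUnit_of_right_eq_zero {a : A} (h : HasKoszulSyzygies a 0) :
    IsUnit a := by
  obtain ⟨g, -, hg⟩ := h 0 1 (by simp)
  exact .of_mul_eq_one (-g) (by linear_combination -hg)

end KoszulSyzygies

section LowDimension

variable {σ R : Type*} [CommRing R]

theorem homogeneousComponent_add_mul_of_isHomogeneous (p : MvPolynomial σ R)
    {q : MvPolynomial σ R} (i : ℕ) {j : ℕ} (hq : q.IsHomogeneous j) :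
    homogeneousComponent (i + j) (p * q) = homogeneousComponent i p * q := by
  let := gradedAlgebra (σ := σ) (R := R)
  have := DirectSum.coe_decompose_mul_add_of_right_mem (homogeneousSubmodule σ R) (i := i)
    (a := p) hq
  rwa [← DirectSum.Decomposition.decompose'_eq, decomposition.decompose'_apply,
    decomposition.decompose'_apply] at this

theorem exists_isHomogeneous_mul_add_mul_eq {p q f : MvPolynomial σ R} {i j : ℕ}
    (hp : p.IsHomogeneous j) (hq : q.IsHomogeneous j) (hf : f.IsHomogeneous (i + j))
    (h : f ∈ Ideal.span {p, q}) :
    ∃ α β : MvPolynomial σ R, α.IsHomogeneous i ∧ β.IsHomogeneous i ∧ α * p + β * q = f := by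
  obtain ⟨α, β, hab⟩ := Ideal.mem_span_pair.mp h
  refine ⟨_, _, homogeneousComponent_isHomogeneous i α, homogeneousComponent_isHomogeneous i β, ?_⟩
  rw [← homogeneousComponent_add_mul_of_isHomogeneous _ _ hp,
    ← homogeneousComponent_add_mul_of_isHomogeneous _ _ hq, ← map_add, hab,
    homogeneousComponent_eq_self hf]

theorem exists_eq_C_mul_add_of_isHomogeneous {M : ℕ} {h : MvPolynomial (Fin 2) R}
    (hh : h.IsHomogeneous (2 * M)) :
    ∃ (c : R) (h₀ h₁ : MvPolynomial (Fin 2) R),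
      h = C c * (X 0 ^ M * X 1 ^ M) + X 0 ^ (M + 1) * h₀ + X 1 ^ (M + 1) * h₁ := by
  rw [h.as_sum]
  refine Finset.sum_induction _ (fun f => ∃ (c : R) (h₀ h₁ : MvPolynomial (Fin 2) R),
    f = C c * (X 0 ^ M * X 1 ^ M) + X 0 ^ (M + 1) * h₀ + X 1 ^ (M + 1) * h₁) ?_
    ⟨0, 0, 0, by simp⟩ fun v hv => ?_
  · rintro a b ⟨c, h₀, h₁, rfl⟩ ⟨c', h₀', h₁', rfl⟩
    exact ⟨c + c', h₀ + h₀', h₁ + h₁', by rw [C_add]; ring⟩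
  have hdeg : v 0 + v 1 = 2 * M := by
    simpa [Finsupp.weight_apply, Finsupp.sum_fintype] using hh (mem_support_iff.mp hv)
  have hmon : monomial v (coeff v h) = C (coeff v h) * (X 0 ^ v 0 * X 1 ^ v 1) := by
    simp [monomial_eq, Finsupp.prod_fintype]
  rw [hmon]
  rcases lt_trichotomy (v 0) M with h0 | h0 | h0
  · obtain ⟨r, hr⟩ := Nat.exists_eq_add_of_le (show M + 1 ≤ v 1 by lia)
    exact ⟨0, 0, C (coeff v h) * (X 0 ^ v 0 * X 1 ^ r), by rw [hr, C_0]; ring⟩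
  · exact ⟨coeff v h, 0, 0, by rw [h0, show v 1 = M by lia]; ring⟩
  · obtain ⟨r, hr⟩ := Nat.exists_eq_add_of_le (show M + 1 ≤ v 0 from h0)
    exact ⟨0, C (coeff v h) * (X 0 ^ r * X 1 ^ v 1), 0, by rw [hr, C_0]; ring⟩

/-- Two expressions of `x₀ᴺ⁺¹ v` and `x₁ᴺ⁺¹ v` through the quadrics `p` and `q` differ by a Koszul
syzygy, and taking homogeneous components makes its coefficient a form of degree `2N`. -/
theorem exists_cech_cocycle {p q v : MvPolynomial (Fin 2) R} (hp : p.IsHomogeneous 2)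
    (hq : q.IsHomogeneous 2) (hsyz : HasKoszulSyzygies p q) (hv : v.IsHomogeneous 2)
    (hsat : v ∈ saturation (Ideal.span {p, q})) :
    ∃ (N : ℕ) (α β : Fin 2 → MvPolynomial (Fin 2) R) (h : MvPolynomial (Fin 2) R),
      h.IsHomogeneous (2 * N) ∧ (∀ i, α i * p + β i * q = X i ^ (N + 1) * v) ∧
      X 1 ^ (N + 1) * α 0 - X 0 ^ (N + 1) * α 1 = h * q ∧
      X 1 ^ (N + 1) * β 0 - X 0 ^ (N + 1) * β 1 = -(h * p) := by
  obtain ⟨N, hN⟩ := hsat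
  have hX (i : Fin 2) : (X i ^ (N + 1) : MvPolynomial (Fin 2) R).IsHomogeneous (N + 1) :=
    isHomogeneous_X_pow i _
  have hrep (i : Fin 2) := exists_isHomogeneous_mul_add_mul_eq hp hq ((hX i).mul hv)
    (X_pow_mul_mem_of_le N.le_succ (hN i))
  choose α β hα hβ hαβ using hrep
  have hcross {γ : Fin 2 → MvPolynomial (Fin 2) R} (hγ : ∀ i, (γ i).IsHomogeneous (N + 1)) :
      (X 1 ^ (N + 1) * γ 0 - X 0 ^ (N + 1) * γ 1).IsHomogeneous (2 * N + 2) := by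
    rw [show 2 * N + 2 = N + 1 + (N + 1) by ring]
    exact ((hX 1).mul (hγ 0)).sub ((hX 0).mul (hγ 1))
  obtain ⟨h, hhq, hhp⟩ := hsyz (X 1 ^ (N + 1) * α 0 - X 0 ^ (N + 1) * α 1)
    (X 1 ^ (N + 1) * β 0 - X 0 ^ (N + 1) * β 1)
    (by linear_combination X 1 ^ (N + 1) * hαβ 0 - X 0 ^ (N + 1) * hαβ 1)
  refine ⟨N, α, β, homogeneousComponent (2 * N) h, homogeneousComponent_isHomogeneous _ _, hαβ,
    ?_, ?_⟩
  · rw [← homogeneousComponent_add_mul_of_isHomogeneous _ _ hq, ← hhq,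
      homogeneousComponent_eq_self (hcross hα)]
  · rw [← homogeneousComponent_add_mul_of_isHomogeneous _ _ hp, ← map_neg, ← hhp,
      homogeneousComponent_eq_self (hcross hβ)]

/-- Modulo `x₀ᴺ⁺¹` and `x₁ᴺ⁺¹` only the coefficient `c` of `x₀ᴺ x₁ᴺ` in the Čech cocycle survives,
and the cocycle `x₀ᴺ x₁ᴺ` comes from `det P`. -/
theorem exists_sub_C_mul_det_mem_span_of_mem_saturation
    {P : Matrix (Fin 2) (Fin 2) (MvPolynomial (Fin 2) R)} (hP : ∀ i j, (P i j).IsHomogeneous 1)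
    {q : Fin 2 → MvPolynomial (Fin 2) R} (hq : q = P.mulVec X)
    (hsyz : HasKoszulSyzygies (q 0) (q 1)) {v : MvPolynomial (Fin 2) R} (hv : v.IsHomogeneous 2)
    (hsat : v ∈ saturation (Ideal.span {q 0, q 1})) :
    ∃ c : R, v - C c * P.det ∈ Ideal.span {q 0, q 1} := by
  have hq' (i : Fin 2) : q i = P i 0 * X 0 + P i 1 * X 1 := by
    rw [hq, Matrix.mulVec, dotProduct, Fin.sum_univ_two]
  have hqh (i : Fin 2) : (q i).IsHomogeneous 2 := by
    rw [hq']
    exact ((hP i 0).mul (isHomogeneous_X _ _)).add ((hP i 1).mul (isHomogeneous_X _ _))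
  obtain ⟨N, α, β, h, hh, hαβ, hα, hβ⟩ := exists_cech_cocycle (hqh 0) (hqh 1) hsyz hv hsat
  obtain ⟨c, h₀, h₁, rfl⟩ := exists_eq_C_mul_add_of_isHomogeneous hh
  obtain ⟨α', hα'⟩ := X_pow_dvd_of_X_pow_mul_eq (i := (0 : Fin 2)) (j := 1) (by decide)
    (N := N + 1) (M := N + 1) (f := α 0 - C c * (X 0 ^ N * P 1 1) - h₁ * q 1)
    (g := α 1 + C c * (X 1 ^ N * P 1 0) + h₀ * q 1)
    (by linear_combination hα + C c * X 0 ^ N * X 1 ^ N * hq' 1)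
  obtain ⟨β', hβ'⟩ := X_pow_dvd_of_X_pow_mul_eq (i := (0 : Fin 2)) (j := 1) (by decide)
    (N := N + 1) (M := N + 1) (f := β 0 + C c * (X 0 ^ N * P 0 1) + h₁ * q 0)
    (g := β 1 - C c * (X 1 ^ N * P 0 0) - h₀ * q 0)
    (by linear_combination hβ - C c * X 0 ^ N * X 1 ^ N * hq' 0)
  refine ⟨c, Ideal.mem_span_pair.mpr ⟨α', β', (isRegular_X_pow (n := (0 : Fin 2)) (N + 1)).left ?_⟩⟩
  simp only [Matrix.det_fin_two]
  linear_combination hαβ 0 - hα' * q 0 - hβ' * q 1 - C c * X 0 ^ N * P 1 1 * hq' 0 +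
    C c * X 0 ^ N * P 0 1 * hq' 1

theorem saturation_span_pair_le [IsDomain R] {i j k : σ} (hij : i ≠ j) (hik : i ≠ k) (hjk : j ≠ k)
    {p q : MvPolynomial σ R} (hsyz : HasKoszulSyzygies p q) :
    saturation (Ideal.span {p, q}) ≤ Ideal.span {p, q} := by
  rintro v ⟨N, hN⟩
  rcases eq_or_ne q 0 with rfl | hq
  · rw [Ideal.eq_top_of_isUnit_mem _ (Ideal.subset_span (Set.mem_insert p _))
      hsyz.isUnit_of_right_eq_zero]
    trivial
  choose α β hαβ using fun l => Ideal.mem_span_pair.mp (hN l)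
  have hkos (l l' : σ) : ∃ h, X l' ^ N * α l - X l ^ N * α l' = h * q ∧
      X l' ^ N * β l - X l ^ N * β l' = -(h * p) :=
    hsyz _ _ (by linear_combination X l' ^ N * hαβ l - X l ^ N * hαβ l')
  obtain ⟨a, ha, ha'⟩ := hkos i j
  obtain ⟨b, hb, -⟩ := hkos i k
  obtain ⟨e, he, -⟩ := hkos j k
  have hcocycle : X k ^ N * a = b * X j ^ N + -e * X i ^ N := by
    apply mul_right_cancel₀ hq
    linear_combination -X k ^ N * ha + X j ^ N * hb - X i ^ N * he
  have hmem := mem_span_X_pow_of_X_pow_mul_mem (s := {i, j}) (k := k) (N := N) (M := N) (h := a)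
    (by simp [hik.symm, hjk.symm]) (by
      rw [Set.image_pair, Ideal.mem_span_pair]
      exact ⟨-e, b, by rw [hcocycle]; ring⟩)
  rw [Set.image_pair, Ideal.mem_span_pair] at hmem
  obtain ⟨f, g, hfg⟩ := hmem
  rw [← hfg] at ha ha'
  obtain ⟨α', hα'⟩ := X_pow_dvd_of_X_pow_mul_eq hij (N := N) (M := N)
    (f := α i - g * q) (g := α j + f * q) (by linear_combination ha)
  obtain ⟨β', hβ'⟩ := X_pow_dvd_of_X_pow_mul_eq hij (N := N) (M := N)
    (f := β i + g * p) (g := β j - f * p) (by linear_combination ha')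
  refine Ideal.mem_span_pair.mpr ⟨α', β', (isRegular_X_pow (n := i) N).left ?_⟩
  linear_combination hαβ i - hα' * p - hβ' * q

end LowDimension

section SmithForm

open Matrix

theorem exists_eq_mul_fromCols_diagonal_mul {O κ : Type*} [CommRing O] [IsDomain O]
    [IsPrincipalIdealRing O] [Fintype κ] [DecidableEq κ] {m : ℕ} (A : Matrix (Fin m) (Fin m ⊕ κ) O)
    (hA : LinearIndependent O A.row) :
    ∃ (P : Matrix (Fin m) (Fin m) O) (a : Fin m → O) (W : Matrix (Fin m ⊕ κ) (Fin m ⊕ κ) O),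
      IsUnit P ∧ IsUnit W ∧
        A = P * (fromCols (diagonal a) 0 : Matrix (Fin m) (Fin m ⊕ κ) O) * W := by
  let std := Pi.basisFun O (Fin m ⊕ κ)
  let bA := Module.Basis.span hA
  obtain ⟨r, snf⟩ := Submodule.smithNormalForm std (Submodule.span O (Set.range A.row))
  obtain rfl : r = m := by
    simpa using (Module.finrank_eq_card_basis snf.bN).symm.trans (Module.finrank_eq_card_basis bA)
  have := Equiv.Perm.isMultiplyPretransitive (Fin r ⊕ κ) r
  obtain ⟨e, he⟩ := MulAction.exists_smul_eq (Equiv.Perm (Fin r ⊕ κ)) Function.Embedding.inl snf.f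
  let bM := snf.bM.reindex e.symm
  have hbM (j : Fin r) : (snf.bN j : Fin r ⊕ κ → O) = snf.a j • bM (Sum.inl j) := by
    rw [snf.snf j, ← he]
    simp [bM]
  let P : Matrix (Fin r) (Fin r) O := snf.bN.toMatrix bA
  let W : Matrix (Fin r ⊕ κ) (Fin r ⊕ κ) O := std.toMatrix bM
  have : Invertible P := snf.bN.invertibleToMatrix bA
  have : Invertible W := std.invertibleToMatrix bM
  have hW : (fromCols (diagonal snf.a) 0 : Matrix (Fin r) (Fin r ⊕ κ) O) * Wᵀ =
      Matrix.of fun j => (snf.bN j : Fin r ⊕ κ → O) := by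
    ext j l
    simp [hbM, mul_apply, diagonal_apply, W, Module.Basis.toMatrix_apply, std]
  refine ⟨Pᵀ, snf.a, Wᵀ, isUnit_of_invertible Pᵀ, isUnit_of_invertible Wᵀ, ?_⟩
  rw [Matrix.mul_assoc, hW]
  ext i l
  have := congrArg (fun v : Submodule.span O (Set.range A.row) => v.1 l)
    (snf.bN.sum_toMatrix_smul_self bA i)
  simpa [-Module.Basis.sum_toMatrix_smul_self, Matrix.mul_apply, P, bA, Module.Basis.span_apply]
    using this.symm

end SmithForm

theorem toMvPolynomial_eq_sum_C_mul_X {ι τ R : Type*} [Fintype τ] [CommRing R] (A : Matrix ι τ R)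
    (i : ι) : A.toMvPolynomial i = ∑ j, C (A i j) * X j := by
  simp only [Matrix.toMvPolynomial, C_mul_X_eq_monomial]

/-- The index set of `m` linear and two quadratic forms, and also of their `m + 2` variables. -/
abbrev V (m : ℕ) := Fin m ⊕ Fin 2

/-- A system of `m` linear forms and two quadratic forms in `m + 2` variables over `S`, given by
the coefficients of the linear forms and by Gram matrices of the quadratic ones. The Gram matrices
need not be symmetric, so they carry a choice of how to write the quadrics as linear combinations
of the variables. -/
structure FormSystem (m : ℕ) (S : Type*) where
  lin : Matrix (Fin m) (V m) S
  gram : Fin 2 → Matrix (V m) (V m) S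

namespace FormSystem

open Matrix

variable {m : ℕ} {S S' : Type*} [CommRing S] [CommRing S'] (F : FormSystem m S)

/-- The matrix expressing the forms of the system through the variables: constant rows for the
linear forms, rows of linear forms for the quadrics. -/
def coeffMatrix : Matrix (V m) (V m) (MvPolynomial (V m) S) :=
  fromRows (F.lin.map C) (of fun a => (F.gram a).toMvPolynomial)

/-- The forms of the system. -/
def form : V m → MvPolynomial (V m) S := F.coeffMatrix *ᵥ X

/-- The ideal `L` generated by the forms of the system. -/
def ideal : Ideal (MvPolynomial (V m) S) := Ideal.span (Set.range F.form)

/-- The quadric `σ = det` of the coefficient matrix; by Cramer's rule it is annihilated by the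
variables modulo the forms, and it generates the socle of the complete intersection. -/
def socle : MvPolynomial (V m) S := F.coeffMatrix.det

theorem form_inl (i : Fin m) : F.form (Sum.inl i) = F.lin.toMvPolynomial i := by
  simp [form, coeffMatrix, mulVec, dotProduct, toMvPolynomial, C_mul_X_eq_monomial]

theorem form_inr (a : Fin 2) :
    F.form (Sum.inr a) = ∑ j, (F.gram a).toMvPolynomial j * X j := by
  simp [form, coeffMatrix, mulVec, dotProduct]

theorem isHomogeneous_form_inl (i : Fin m) : (F.form (Sum.inl i)).IsHomogeneous 1 := by
  rw [form_inl]
  exact toMvPolynomial_isHomogeneous _ _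

theorem isHomogeneous_form_inr (a : Fin 2) : (F.form (Sum.inr a)).IsHomogeneous 2 := by
  rw [form_inr]
  exact .sum _ _ _ fun j _ => (toMvPolynomial_isHomogeneous _ _).mul (isHomogeneous_X _ _)

theorem form_mem_ideal (i : V m) : F.form i ∈ F.ideal := Ideal.subset_span ⟨i, rfl⟩

theorem ideal_le {J : Ideal (MvPolynomial (V m) S)} : F.ideal ≤ J ↔ ∀ i, F.form i ∈ J := by
  rw [ideal, Ideal.span_le, Set.range_subset_iff]
  rfl

theorem constantCoeff_form (i : V m) : constantCoeff (F.form i) = 0 := by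
  rcases i with i | a
  · rw [form_inl, toMvPolynomial_constantCoeff]
  · simp [form_inr]

/-- Extension of scalars. -/
@[simps] protected def map (g : S →+* S') : FormSystem m S' where
  lin := F.lin.map g
  gram a := (F.gram a).map g

theorem coeffMatrix_map (g : S →+* S') :
    (F.map g).coeffMatrix = F.coeffMatrix.map (MvPolynomial.map g) := by
  ext (i | i) j : 2 <;> simp [coeffMatrix, toMvPolynomial_map]

theorem form_map (g : S →+* S') (i : V m) :
    (F.map g).form i = MvPolynomial.map g (F.form i) := by
  simp [form, coeffMatrix_map, mulVec, dotProduct]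

theorem ideal_map (g : S →+* S') :
    (F.map g).ideal = F.ideal.map (MvPolynomial.map g) := by
  rw [ideal, ideal, Ideal.map_span, ← Set.range_comp]
  exact congrArg _ (congrArg _ (funext (F.form_map g)))

theorem socle_map (g : S →+* S') : (F.map g).socle = MvPolynomial.map g F.socle := by
  rw [socle, coeffMatrix_map, socle, RingHom.map_det, RingHom.mapMatrix_apply]

/-- The system obtained by the row operation `P` on the linear forms, the substitution
`x ↦ Q x` of variables, and re-expansion of the quadrics in the new variables. -/
@[simps] def transform (P : Matrix (Fin m) (Fin m) S) (Q : Matrix (V m) (V m) S) :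
    FormSystem m S where
  lin := P * F.lin * Q
  gram a := Qᵀ * F.gram a * Q

theorem coeffMatrix_transform (P : Matrix (Fin m) (Fin m) S) (Q : Matrix (V m) (V m) S) :
    (F.transform P Q).coeffMatrix = fromBlocks (P.map C) 0 0 1 *
      F.coeffMatrix.map (bind₁ Q.toMvPolynomial) * Q.map C := by
  have hgram (a : Fin 2) (j : V m) : (Qᵀ * F.gram a * Q).toMvPolynomial j =
      ∑ i, bind₁ Q.toMvPolynomial ((F.gram a).toMvPolynomial i) * C (Q i j) := by
    simp only [Matrix.mul_assoc, toMvPolynomial_mul Qᵀ, toMvPolynomial_eq_sum_C_mul_X Qᵀ, map_sum,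
      map_mul, bind₁_C_right, bind₁_X_right, toMvPolynomial_mul (F.gram a), transpose_apply,
      mul_comm (C _)]
  ext (i | i) j : 2
  · simp [coeffMatrix, mul_apply]
  · simp [coeffMatrix, mul_apply, hgram, one_apply]

theorem socle_transform (P : Matrix (Fin m) (Fin m) S) (Q : Matrix (V m) (V m) S) :
    (F.transform P Q).socle = C (P.det * Q.det) * bind₁ Q.toMvPolynomial F.socle := by
  have hC (ι : Type) [Fintype ι] [DecidableEq ι] (M : Matrix ι ι S) :
      (M.map C).det = (C M.det : MvPolynomial (V m) S) := (RingHom.map_det C M).symm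
  have hβ : (F.coeffMatrix.map (bind₁ Q.toMvPolynomial)).det = bind₁ Q.toMvPolynomial F.socle :=
    (AlgHom.map_det _ _).symm
  rw [socle, coeffMatrix_transform, det_mul, det_mul, det_fromBlocks_zero₁₂, det_one, hC, hC, hβ,
    C_mul]
  ring

theorem span_range_mulVec_of_isUnit {A ι : Type*} [CommRing A] [Fintype ι] [DecidableEq ι]
    {U : Matrix ι ι A} (hU : IsUnit U) (v : ι → A) :
    Ideal.span (Set.range (U *ᵥ v)) = Ideal.span (Set.range v) := by
  have hle (U : Matrix ι ι A) (v : ι → A) :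
      Ideal.span (Set.range (U *ᵥ v)) ≤ Ideal.span (Set.range v) := by
    rw [Ideal.span_le, Set.range_subset_iff]
    exact fun i => Ideal.sum_mem _ fun j _ => Ideal.mul_mem_left _ _ (Ideal.subset_span ⟨j, rfl⟩)
  obtain ⟨U, rfl⟩ := hU
  refine (hle U.1 v).antisymm ?_
  simpa [mulVec_mulVec] using hle U⁻¹.1 (U.1 *ᵥ v)

theorem ideal_transform {P : Matrix (Fin m) (Fin m) S} (hP : IsUnit P)
    (Q : Matrix (V m) (V m) S) :
    (F.transform P Q).ideal = F.ideal.map (bind₁ Q.toMvPolynomial) := by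
  have hU : IsUnit (fromBlocks (P.map C) 0 0 1 : Matrix (V m) (V m) (MvPolynomial (V m) S)) := by
    rw [isUnit_iff_isUnit_det, det_fromBlocks_zero₁₂, det_one, mul_one,
      show P.map C = C.mapMatrix P from rfl, ← RingHom.map_det]
    exact ((isUnit_iff_isUnit_det P).mp hP).map C
  have hX : Q.map C *ᵥ X = bind₁ Q.toMvPolynomial ∘ (X : V m → MvPolynomial (V m) S) := by
    ext1 i
    simp [mulVec, dotProduct, toMvPolynomial_eq_sum_C_mul_X]
  have hform : (F.transform P Q).form =
      fromBlocks (P.map C) 0 0 1 *ᵥ (bind₁ Q.toMvPolynomial ∘ F.form) := by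
    rw [form, coeffMatrix_transform, ← mulVec_mulVec, ← mulVec_mulVec, hX]
    congr 1
    ext1 i
    simp [form, mulVec, dotProduct]
  rw [ideal, hform, span_range_mulVec_of_isUnit hU, ideal, Ideal.map_span, ← Set.range_comp]

theorem bind₁_toMvPolynomial_of_mul_eq_one {ι : Type*} [Fintype ι] [DecidableEq ι]
    {Q W : Matrix ι ι S} (h : W * Q = 1) (f : MvPolynomial ι S) :
    bind₁ Q.toMvPolynomial (bind₁ W.toMvPolynomial f) = f := by
  rw [bind₁_bind₁]
  simp only [← toMvPolynomial_mul, h, toMvPolynomial_one]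
  rw [bind₁_X_left, AlgHom.id_apply]

end FormSystem

section SaturationReduction

variable {σ τ R R' : Type*} [CommRing R] [CommRing R']

theorem saturation_le_of_saturation_map_le {F : Type*} [Finite σ] [Finite τ]
    [FunLike F (MvPolynomial σ R) (MvPolynomial τ R')]
    [RingHomClass F (MvPolynomial σ R) (MvPolynomial τ R')] {g : F} (hg : Function.Surjective g)
    (hvars : idealOfVars τ R' ≤ (idealOfVars σ R).map g) {I : Ideal (MvPolynomial σ R)}
    (hker : RingHom.ker g ≤ I) (h : saturation (I.map g) ≤ I.map g) : saturation I ≤ I :=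
  fun _ hf => by
    have := Ideal.mem_comap.mpr (h (map_mem_saturation_map g hvars hf))
    rwa [Ideal.comap_map_of_surjective' _ hg, sup_eq_left.mpr hker] at this

theorem mul_pow_mem_of_mul_mem {A : Type*} [CommRing A] {K : Ideal A} {z : A}
    (hz : ∀ f, z * f ∈ K → f ∈ K) (e : ℕ) {f : A} (hf : z ^ e * f ∈ K) : f ∈ K := by
  induction e with
  | zero => simpa using hf
  | succ e ih => exact ih (hz _ (by rwa [← mul_assoc, ← pow_succ']))

theorem saturation_sup_span_pow_le {K : Ideal (MvPolynomial σ R)} {z : MvPolynomial σ R}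
    (hz : ∀ f, z * f ∈ K → f ∈ K)
    (hK : saturation (K ⊔ Ideal.span {z}) ≤ K ⊔ Ideal.span {z}) (e : ℕ) :
    saturation (K ⊔ Ideal.span {z ^ e}) ≤ K ⊔ Ideal.span {z ^ e} := by
  induction e with
  | zero => simp
  | succ e ih =>
    intro f hf
    have hle : K ⊔ Ideal.span {z ^ (e + 1)} ≤ K ⊔ Ideal.span {z} :=
      sup_le_sup_left (Ideal.span_singleton_le_span_singleton.mpr ⟨z ^ e, pow_succ' z e⟩) K
    obtain ⟨r, hr, _, hw, rfl⟩ := Submodule.mem_sup.mp (hK (saturation_mono hle hf))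
    obtain ⟨w, rfl⟩ := Ideal.mem_span_singleton.mp hw
    rw [pow_succ'] at hf
    obtain ⟨r', hr', _, hw', h⟩ := Submodule.mem_sup.mp
      (ih (mem_saturation_sup_span_of_add_mul_mem hz hr hf))
    obtain ⟨w', rfl⟩ := Ideal.mem_span_singleton'.mp hw'
    refine Submodule.mem_sup.mpr ⟨r + r' * z, K.add_mem hr (K.mul_mem_right _ hr'),
      w' * z ^ (e + 1), Ideal.mul_mem_left _ _ (Ideal.mem_span_singleton_self _), ?_⟩
    linear_combination z * h

end SaturationReduction

section KillCompl

variable {σ τ R : Type*} [CommRing R] {g : σ → τ} (hg : Function.Injective g)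

theorem killCompl_X_of_notMem_range {i : τ} (hi : i ∉ Set.range g) :
    killCompl (R := R) hg (X i) = 0 := by
  rw [killCompl, aeval_X, dif_neg hi]

theorem ker_killCompl : RingHom.ker (killCompl (R := R) hg) =
    Ideal.span (X '' (Set.range g)ᶜ) := by
  refine le_antisymm (fun f hf => ?_) (Ideal.span_le.mpr ?_)
  swap
  · rintro _ ⟨i, hi, rfl⟩
    exact killCompl_X_of_notMem_range hg hi
  rw [mem_ideal_span_X_image]
  intro s hs
  by_contra! h
  refine mem_support_iff.mp hs ?_
  rw [← Finsupp.mapDomain_comapDomain g hg s fun i hi => ?_, ← coeff_killCompl hg,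
    RingHom.mem_ker.mp hf, coeff_zero]
  by_contra hi'
  exact Finsupp.mem_support_iff.mp hi (h i hi')

theorem killCompl_surjective : Function.Surjective (killCompl (R := R) hg) :=
  fun p => ⟨_, killCompl_rename_app hg p⟩

theorem isHomogeneous_killCompl {f : MvPolynomial τ R} {e : ℕ} (hf : f.IsHomogeneous e) :
    (killCompl hg f).IsHomogeneous e := by
  rw [← one_mul e]
  refine hf.aeval _ fun i => ?_
  split_ifs
  exacts [isHomogeneous_X _ _, isHomogeneous_zero _ _ _]

theorem idealOfVars_le_map_killCompl :
    idealOfVars σ R ≤ (idealOfVars τ R).map (killCompl hg) := by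
  rw [idealOfVars, Ideal.span_le, Set.range_subset_iff]
  intro i
  have h : killCompl (R := R) hg (X (g i)) = X i := by rw [← rename_X, killCompl_rename_app]
  exact h ▸ Ideal.mem_map_of_mem _ (Ideal.subset_span ⟨g i, rfl⟩)

end KillCompl

section Height

theorem span_eq_top_of_card_lt_height {A : Type*} [CommRing A] [IsNoetherianRing A] {I : Ideal A}
    {s : Finset A} (hs : (s.card : ℕ∞) < I.height) (h : I ≤ Ideal.span s) :
    Ideal.span (s : Set A) = ⊤ := by
  by_contra hne
  have : (Submodule.spanFinrank (Ideal.span (s : Set A)) : ℕ∞) ≤ s.card := by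
    exact_mod_cast (Submodule.spanFinrank_span_le_ncard_of_finite s.finite_toSet).trans_eq
      (Set.ncard_coe_finset s)
  exact hs.not_ge ((Ideal.height_mono h).trans ((Ideal.height_le_spanFinrank _ hne).trans this))

theorem isRelPrime_of_card_add_one_lt_height {A B : Type*} [CommRing A] [IsNoetherianRing A]
    [CommRing B] {φ : A →+* B} (hφ : Function.Surjective φ) {I : Ideal A} {s : Finset A}
    (hs : (s.card + 1 : ℕ∞) < I.height) (hker : RingHom.ker φ = Ideal.span s) {p q : B}
    (hI : I.map φ ≤ Ideal.span {p, q}) : IsRelPrime p q := by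
  classical
  intro b hp hq
  obtain ⟨a, rfl⟩ := hφ b
  have hle : I ≤ Ideal.span (insert a s : Finset A) := by
    have h : I.map φ ≤ (Ideal.span {a}).map φ := by
      refine hI.trans (Ideal.span_le.mpr ?_)
      rw [Ideal.map_span, Set.image_singleton]
      rintro _ (rfl | rfl)
      exacts [Ideal.mem_span_singleton.mpr hp, Ideal.mem_span_singleton.mpr hq]
    rw [Ideal.map_le_iff_le_comap, Ideal.comap_map_of_surjective' _ hφ] at h
    rw [Finset.coe_insert, Ideal.span_insert]
    exact h.trans (sup_le_sup_left hker.le _)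
  have htop := span_eq_top_of_card_lt_height
    (hs.trans_le' (by exact_mod_cast Finset.card_insert_le a s)) hle
  rw [Finset.coe_insert, Ideal.span_insert, ← hker] at htop
  have := congrArg (Ideal.map φ) htop
  rwa [Ideal.map_sup, (Ideal.map_eq_bot_iff_le_ker φ).mpr le_rfl, sup_bot_eq, Ideal.map_span,
    Set.image_singleton, Ideal.map_top, Ideal.span_singleton_eq_top] at this

end Height

section Residue

theorem mem_span_pair_of_mul_mem {A B : Type*} [CommRing A] [IsDomain A] [CommRing B] {φ : A →+* B}
    {z : A} (hz : z ≠ 0) (hφ : Function.Surjective φ) (hker : RingHom.ker φ = Ideal.span {z})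
    {p q : A} (hsyz : HasKoszulSyzygies (φ p) (φ q)) {f : A} (hf : z * f ∈ Ideal.span {p, q}) :
    f ∈ Ideal.span {p, q} := by
  have hφz : φ z = 0 := by
    rw [← RingHom.mem_ker, hker]
    exact Ideal.mem_span_singleton_self z
  have hdvd {x y : A} (h : φ x = φ y) : ∃ w, x = y + z * w := by
    obtain ⟨w, hw⟩ := Ideal.mem_span_singleton.mp (hker ▸ (RingHom.sub_mem_ker_iff φ).mpr h)
    exact ⟨w, by linear_combination hw⟩
  obtain ⟨α, β, h⟩ := Ideal.mem_span_pair.mp hf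
  obtain ⟨t, hα, hβ⟩ := hsyz (φ α) (φ β) (by rw [← map_mul, ← map_mul, ← map_add, h]; simp [hφz])
  obtain ⟨t, rfl⟩ := hφ t
  obtain ⟨α', rfl⟩ := hdvd (y := t * q) (by rw [hα, map_mul])
  obtain ⟨β', rfl⟩ := hdvd (y := -(t * p)) (by rw [hβ, map_neg, map_mul])
  exact Ideal.mem_span_pair.mpr ⟨α', β', mul_left_cancel₀ hz (by linear_combination h)⟩

variable {σ τ R κ : Type*} [CommRing R] [CommRing κ] {g : σ → τ} (hg : Function.Injective g)
  {π : R →+* κ}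

theorem ker_map_comp_killCompl {z : R} (hker : RingHom.ker π = Ideal.span {z}) :
    RingHom.ker ((map π).comp (killCompl hg).toRingHom) =
      Ideal.span (insert (C z) (X '' (Set.range g)ᶜ)) := by
  have hC : RingHom.ker (map (σ := σ) π) =
      (Ideal.span {C z}).map (killCompl (R := R) hg).toRingHom := by
    rw [ker_map, hker, Ideal.map_span, Ideal.map_span, Set.image_singleton, Set.image_singleton]
    simp
  rw [← RingHom.comap_ker, hC,
    Ideal.comap_map_of_surjective' (killCompl (R := R) hg).toRingHom (killCompl_surjective hg),
    Ideal.span_insert, ← ker_killCompl hg]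
  rfl

end Residue

namespace FormSystem

open Matrix

variable {m : ℕ}

/-- The degree-two part of the saturation of the ideal of `F` is spanned by the socle quadric,
modulo the ideal. -/
def IsSocleGenerated {S : Type*} [CommRing S] (F : FormSystem m S) : Prop :=
  ∀ f : MvPolynomial (V m) S, f.IsHomogeneous 2 → f ∈ saturation F.ideal →
    ∃ c, f - C c * F.socle ∈ F.ideal

/-- The system with linear forms `a i * x_i`. -/
@[simps] def diag {S : Type*} [CommRing S] (a : Fin m → S) (G : Fin 2 → Matrix (V m) (V m) S) :
    FormSystem m S where
  lin := fromCols (diagonal a) 0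
  gram := G

section CommRing

variable {S : Type*} [CommRing S] (F : FormSystem m S) (a : Fin m → S)
  (G : Fin 2 → Matrix (V m) (V m) S)

theorem ideal_map_eq_span_pair {A : Type*} [CommRing A] (φ : MvPolynomial (V m) S →+* A)
    (h : ∀ i, φ (F.form (Sum.inl i)) = 0) :
    F.ideal.map φ = Ideal.span {φ (F.form (Sum.inr 0)), φ (F.form (Sum.inr 1))} := by
  refine le_antisymm (Ideal.map_le_iff_le_comap.mpr (F.ideal_le.mpr ?_)) (Ideal.span_le.mpr ?_)
  · rintro (i | b)
    · simp [h]
    · fin_cases b <;> exact Ideal.subset_span (by simp)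
  · rintro _ (rfl | rfl) <;> exact Ideal.mem_map_of_mem _ (F.form_mem_ideal _)

theorem form_diag_inl (i : Fin m) :
    (diag a G).form (Sum.inl i) = C (a i) * X (Sum.inl i) := by
  simp [form_inl, toMvPolynomial_eq_sum_C_mul_X, diagonal_apply, apply_ite C]

theorem form_diag_inr (b : Fin 2) :
    (diag a G).form (Sum.inr b) = ∑ j, (G b).toMvPolynomial j * X j :=
  form_inr _ b

theorem socle_diag : (diag a G).socle = C (∏ i, a i) *
    (of fun b j => (G b).toMvPolynomial (Sum.inr j)).det := by
  have : (diag a G).coeffMatrix = fromBlocks (diagonal fun i => C (a i)) 0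
      (of fun b j => (G b).toMvPolynomial (Sum.inl j))
      (of fun b j => (G b).toMvPolynomial (Sum.inr j)) := by
    ext (i | i) (j | j) : 2 <;> simp [coeffMatrix, diagonal_apply, apply_ite C]
  rw [socle, this, det_fromBlocks_zero₁₂, det_diagonal, map_prod]

theorem ideal_diag_le_of_dvd {a a' : Fin m → S} (h : ∀ i, a' i ∣ a i) :
    (diag a G).ideal ≤ (diag a' G).ideal := by
  refine (ideal_le _).mpr ?_
  rintro (i | b)
  · obtain ⟨c, hc⟩ := h i
    rw [form_diag_inl, hc, C_mul, mul_right_comm, ← form_diag_inl a' G]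
    exact Ideal.mul_mem_right _ _ (form_mem_ideal _ _)
  · exact form_mem_ideal (diag a' G) (Sum.inr b)

theorem X_mem_ideal_diag {i : Fin m} (h : IsUnit (a i)) : X (Sum.inl i) ∈ (diag a G).ideal :=
  (Ideal.unit_mul_mem_iff_mem _ (h.map C)).mp (form_diag_inl a G i ▸ form_mem_ideal _ _)

theorem ideal_diag_update (i : Fin m) (b : S) :
    (diag (Function.update a i b) G).ideal =
      (diag (Function.update a i 0) G).ideal ⊔ Ideal.span {C b * X (Sum.inl i)} := by
  have hi : (diag (Function.update a i b) G).form (Sum.inl i) = C b * X (Sum.inl i) := by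
    rw [form_diag_inl, Function.update_self]
  refine le_antisymm ((ideal_le _).mpr ?_) (sup_le (ideal_diag_le_of_dvd G fun j => ?_) ?_)
  · rintro (j | c)
    · rcases eq_or_ne j i with rfl | hj
      · exact hi ▸ Ideal.mem_sup_right (Ideal.mem_span_singleton_self _)
      · refine Ideal.mem_sup_left ?_
        rw [form_diag_inl, Function.update_of_ne hj, ← Function.update_of_ne hj 0 a,
          ← form_diag_inl _ G]
        exact form_mem_ideal _ _
    · exact Ideal.mem_sup_left (form_mem_ideal (diag (Function.update a i 0) G) (Sum.inr c))
  · rcases eq_or_ne j i with rfl | hj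
    · simp
    · simp [hj]
  · rw [Ideal.span_singleton_le_iff_mem, ← hi]
    exact form_mem_ideal _ _

end CommRing

end FormSystem

namespace FormSystem

open Matrix

variable {m : ℕ} {O : Type*} [CommRing O]

section Units

variable (a : Fin m → O) (G : Fin 2 → Matrix (V m) (V m) O)

theorem killCompl_inr_X_inl (i : Fin m) :
    killCompl (R := O) (Sum.inr_injective (α := Fin m) (β := Fin 2)) (X (Sum.inl i)) = 0 :=
  killCompl_X_of_notMem_range _ (by simp)

theorem ker_killCompl_inr_le (ha : ∀ i, IsUnit (a i)) :
    RingHom.ker (killCompl (R := O) (Sum.inr_injective (α := Fin m) (β := Fin 2))) ≤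
      (diag a G).ideal := by
  rw [ker_killCompl, Ideal.span_le]
  rintro _ ⟨i | b, hi, rfl⟩
  · exact X_mem_ideal_diag a G (ha i)
  · exact (hi ⟨b, rfl⟩).elim

theorem killCompl_inr_form_inr (b : Fin 2) :
    killCompl Sum.inr_injective ((diag a G).form (Sum.inr b)) =
      ((of fun b j => killCompl Sum.inr_injective ((G b).toMvPolynomial (Sum.inr j))) *ᵥ
        (X : Fin 2 → MvPolynomial (Fin 2) O)) b := by
  have hX (c : Fin 2) : killCompl (R := O) (Sum.inr_injective (α := Fin m)) (X (Sum.inr c)) =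
      X c := by
    rw [← rename_X, killCompl_rename_app]
  simp [form_diag_inr, mulVec, dotProduct, hX, killCompl_inr_X_inl]

theorem isRelPrime_killCompl_inr [IsNoetherianRing O]
    (h : (m + 2 : ℕ∞) ≤ (diag a G).ideal.height) :
    IsRelPrime (killCompl Sum.inr_injective ((diag a G).form (Sum.inr 0)))
      (killCompl (Sum.inr_injective (α := Fin m) (β := Fin 2))
        ((diag a G).form (Sum.inr 1))) := by
  classical
  refine isRelPrime_of_card_add_one_lt_height (φ := (killCompl Sum.inr_injective).toRingHom)
    (killCompl_surjective _) (I := (diag a G).ideal)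
    (s := Finset.univ.image fun i : Fin m => X (Sum.inl i)) (h.trans_lt' ?_) ?_ ?_
  · have := Finset.card_image_le (s := Finset.univ)
      (f := fun i : Fin m => (X (Sum.inl i) : MvPolynomial (V m) O))
    rw [Finset.card_fin] at this
    exact_mod_cast (by omega)
  · refine (ker_killCompl _).trans (congrArg _ ?_)
    rw [Finset.coe_image, Finset.coe_univ, Set.image_univ,
      ← Set.isCompl_range_inl_range_inr.eq_compl, ← Set.range_comp]
    rfl
  · exact (ideal_map_eq_span_pair _ _ fun i => by simp [form_diag_inl, killCompl_inr_X_inl]).le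

theorem isSocleGenerated_diag_of_isUnit [IsDomain O] [UniqueFactorizationMonoid O]
    [IsNoetherianRing O] (ha : ∀ i, IsUnit (a i)) (h : (m + 2 : ℕ∞) ≤ (diag a G).ideal.height) :
    (diag a G).IsSocleGenerated := by
  intro f hf hsat
  let φ := killCompl (R := O) (Sum.inr_injective (α := Fin m) (β := Fin 2))
  let q (b : Fin 2) := φ ((diag a G).form (Sum.inr b))
  have hmap : (diag a G).ideal.map φ = Ideal.span {q 0, q 1} :=
    ideal_map_eq_span_pair _ φ.toRingHom fun i => by
      simp [form_diag_inl, φ, killCompl_inr_X_inl]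
  have hφsat : φ f ∈ saturation (Ideal.span {q 0, q 1}) := by
    rw [← hmap]
    exact map_mem_saturation_map φ (idealOfVars_le_map_killCompl _) hsat
  have hsyz : HasKoszulSyzygies (q 0) (q 1) :=
    hasKoszulSyzygies_of_isRelPrime (isRelPrime_killCompl_inr a G h)
  let P : Matrix (Fin 2) (Fin 2) (MvPolynomial (Fin 2) O) :=
    of fun b j => φ ((G b).toMvPolynomial (Sum.inr j))
  have hP (i j : Fin 2) : (P i j).IsHomogeneous 1 :=
    isHomogeneous_killCompl Sum.inr_injective (toMvPolynomial_isHomogeneous (G i) (Sum.inr j))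
  have hq : q = P *ᵥ X := _root_.funext fun b => killCompl_inr_form_inr a G b
  have hφf : (φ f).IsHomogeneous 2 := isHomogeneous_killCompl Sum.inr_injective hf
  have hmain := exists_sub_C_mul_det_mem_span_of_mem_saturation hP hq hsyz hφf hφsat
  obtain ⟨c, hc⟩ := hmain
  obtain ⟨u, hu⟩ := IsUnit.prod_univ_iff.mpr ha
  refine ⟨c * (u⁻¹ : Oˣ), ?_⟩
  have hdet : φ (C (c * (u⁻¹ : Oˣ)) * (diag a G).socle) = C c * P.det := by
    rw [socle_diag, ← mul_assoc, ← C_mul, ← hu, Units.inv_mul_cancel_right, map_mul, killCompl_C,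
      AlgHom.map_det]
    rfl
  rw [← hmap] at hc
  have := Ideal.comap_map_of_surjective' φ (killCompl_surjective _) (diag a G).ideal
  rw [sup_eq_left.mpr (ker_killCompl_inr_le a G ha)] at this
  rw [← this, Ideal.mem_comap, map_sub, hdet]
  exact hc

end Units

end FormSystem

namespace FormSystem

open Matrix

variable {m : ℕ} {O : Type*} [CommRing O]

theorem homogeneousComponent_mem_ideal (F : FormSystem m O) {f : MvPolynomial (V m) O}
    (hf : f ∈ F.ideal) (e : ℕ) : homogeneousComponent e f ∈ F.ideal := by
  let := gradedAlgebra (σ := V m) (R := O)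
  have h : F.ideal.IsHomogeneous (homogeneousSubmodule (V m) O) := by
    refine Ideal.homogeneous_span _ _ ?_
    rintro _ ⟨i | b, rfl⟩
    exacts [⟨1, F.isHomogeneous_form_inl i⟩, ⟨2, F.isHomogeneous_form_inr b⟩]
  have := h e hf
  rwa [← DirectSum.Decomposition.decompose'_eq, decomposition.decompose'_apply] at this

theorem not_ideal_le_span [IsNoetherianRing O] [IsLocalRing O] {F : FormSystem m O}
    (hF : (m + 2 : ℕ∞) ≤ F.ideal.height) {s : Finset (MvPolynomial (V m) O)}
    (hcard : s.card ≤ m + 1) (hs : ∀ f ∈ s, constantCoeff f ∈ IsLocalRing.maximalIdeal O) :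
    ¬ F.ideal ≤ Ideal.span s := by
  intro h
  have htop := span_eq_top_of_card_lt_height (hF.trans_lt' (by exact_mod_cast (by omega))) h
  have hle : Ideal.span (s : Set (MvPolynomial (V m) O)) ≤
      (IsLocalRing.maximalIdeal O).comap constantCoeff := Ideal.span_le.mpr hs
  rw [htop, top_le_iff] at hle
  exact Ideal.comap_ne_top _ (IsLocalRing.maximalIdeal.isMaximal O).ne_top hle

theorem linearIndependent_row_lin [IsDomain O] [IsPrincipalIdealRing O] [IsLocalRing O]
    {F : FormSystem m O} (hF : (m + 2 : ℕ∞) ≤ F.ideal.height) :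
    LinearIndependent O F.lin.row := by
  classical
  by_contra hdep
  rw [linearIndependent_iff_card_le_finrank_span, not_le, Fintype.card_fin] at hdep
  let Λ : (V m → O) →ₗ[O] MvPolynomial (V m) O := Fintype.linearCombination O X
  have hΛ (v : V m → O) : Λ v = ∑ j, C (v j) * X j := by
    simp [Λ, Fintype.linearCombination_apply, smul_eq_C_mul]
  let b := Module.finBasis O (Submodule.span O (Set.range F.lin.row))
  refine not_ideal_le_span hF
    (s := Finset.univ.image (fun j => Λ (b j)) ∪ Finset.univ.image fun c => F.form (Sum.inr c))
    ((Finset.card_union_le _ _).trans ?_) ?_ (F.ideal_le.mpr ?_)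
  · have h₁ := Finset.card_image_le (s := Finset.univ) (f := fun j => Λ (b j))
    have h₂ := Finset.card_image_le (s := Finset.univ) (f := fun c => F.form (Sum.inr c))
    rw [Finset.card_fin] at h₁ h₂
    change Set.finrank O _ < m at hdep
    rw [Set.finrank] at hdep
    omega
  · simp only [Finset.mem_union, Finset.mem_image]
    rintro _ (⟨j, -, rfl⟩ | ⟨c, -, rfl⟩)
    · simp [hΛ]
    · simp [constantCoeff_form]
  · rintro (i | c)
    · let v : Submodule.span O (Set.range F.lin.row) := ⟨F.lin i, Submodule.subset_span ⟨i, rfl⟩⟩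
      have hv : F.form (Sum.inl i) = ∑ j, b.repr v j • Λ (b j) := by
        rw [form_inl, toMvPolynomial_eq_sum_C_mul_X, ← hΛ]
        simpa [-Module.Basis.sum_repr] using congrArg (Λ ∘ Subtype.val) (b.sum_repr v).symm
      rw [hv]
      refine Submodule.sum_mem _ fun j _ => Submodule.smul_of_tower_mem _ _ (Ideal.subset_span ?_)
      simp
    · exact Ideal.subset_span (by simp)

section Diag

variable {a : Fin m → O} {G : Fin 2 → Matrix (V m) (V m) O}

theorem isUnit_of_ne_of_not_isUnit [IsNoetherianRing O] [IsLocalRing O] {ϖ : O}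
    (hϖ : IsLocalRing.maximalIdeal O = Ideal.span {ϖ})
    (h : (m + 2 : ℕ∞) ≤ (diag a G).ideal.height) {i j : Fin m} (hij : j ≠ i)
    (hi : ¬ IsUnit (a i)) : IsUnit (a j) := by
  classical
  by_contra hj
  let s : Finset (V m) := {Sum.inl i, Sum.inl j}
  have hs : s.card = 2 := Finset.card_pair (by simpa using hij.symm)
  refine not_ideal_le_span h (s := insert (C ϖ) (sᶜ.image (diag a G).form))
    ((Finset.card_insert_le _ _).trans ?_) ?_ ((ideal_le _).mpr fun l => ?_)
  · have := Finset.card_image_le (s := sᶜ) (f := (diag a G).form)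
    rw [Finset.card_compl, hs, Fintype.card_sum, Fintype.card_fin, Fintype.card_fin] at this
    omega
  · simp only [Finset.mem_insert, Finset.mem_image]
    rintro _ (rfl | ⟨l, -, rfl⟩)
    · simp [hϖ]
    · simp [constantCoeff_form]
  have hmem {l : Fin m} (hl : ¬ IsUnit (a l)) :
      (diag a G).form (Sum.inl l) ∈ Ideal.span {C ϖ} := by
    rw [← mem_nonunits_iff, ← IsLocalRing.mem_maximalIdeal, hϖ, Ideal.mem_span_singleton] at hl
    rw [form_diag_inl, Ideal.mem_span_singleton]
    exact (map_dvd C hl).mul_right _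
  rw [Finset.coe_insert, Ideal.span_insert]
  by_cases hl : l ∈ s
  · rw [Finset.mem_insert, Finset.mem_singleton] at hl
    rcases hl with rfl | rfl
    exacts [Ideal.mem_sup_left (hmem hi), Ideal.mem_sup_left (hmem hj)]
  · exact Ideal.mem_sup_right (Ideal.subset_span
      (Finset.mem_image_of_mem _ (Finset.mem_compl.mpr hl)))

end Diag

end FormSystem

namespace FormSystem

open Matrix

section Diag

variable {m : ℕ} {O : Type*} [CommRing O] (a : Fin m → O) (G : Fin 2 → Matrix (V m) (V m) O)
  (i : Fin m)

/-- The inclusion of the last two variables and `x_i`. -/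
def lastTwoAnd : Option (Fin 2) → V m := fun o => o.elim (Sum.inl i) Sum.inr

theorem lastTwoAnd_injective : Function.Injective (lastTwoAnd i) := by
  rintro (_ | b) (_ | c) h <;> simp_all [lastTwoAnd]

theorem compl_range_lastTwoAnd :
    (Set.range (lastTwoAnd i))ᶜ = Sum.inl '' {j : Fin m | j ≠ i} := by
  ext (j | b)
  · simp [lastTwoAnd, Option.exists, eq_comm]
  · simp [lastTwoAnd, Option.exists]

theorem killCompl_lastTwoAnd_form_inl {j : Fin m} (hj : j ≠ i) :
    killCompl (lastTwoAnd_injective i) ((diag a G).form (Sum.inl j)) = 0 := by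
  rw [form_diag_inl, map_mul, killCompl_X_of_notMem_range, mul_zero]
  rw [← Set.mem_compl_iff, compl_range_lastTwoAnd]
  exact ⟨j, hj, rfl⟩

variable {a i}

theorem ker_killCompl_lastTwoAnd_le (ha : ∀ j ≠ i, IsUnit (a j)) :
    RingHom.ker (killCompl (R := O) (lastTwoAnd_injective i)) ≤ (diag a G).ideal := by
  rw [ker_killCompl, compl_range_lastTwoAnd, Ideal.span_le]
  rintro _ ⟨_, ⟨j, hj, rfl⟩, rfl⟩
  exact X_mem_ideal_diag a G (ha j hj)

variable [IsLocalRing O] {ϖ : O}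
  (hϖ : IsLocalRing.maximalIdeal O = Ideal.span {ϖ})

/-- Reduction of the coefficients to the residue field, killing all variables but the last two
and `x_i`. -/
abbrev reduction (i : Fin m) :
    MvPolynomial (V m) O →+* MvPolynomial (Option (Fin 2)) (IsLocalRing.ResidueField O) :=
  (map (IsLocalRing.residue O)).comp (killCompl (lastTwoAnd_injective i)).toRingHom

theorem reduction_surjective : Function.Surjective (reduction (O := O) i) :=
  (map_surjective _ IsLocalRing.residue_surjective).comp (killCompl_surjective _)

include hϖ in
theorem ker_reduction : RingHom.ker (reduction i) =
    Ideal.span (insert (C ϖ) (X '' (Sum.inl '' {j : Fin m | j ≠ i}))) := by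
  rw [← compl_range_lastTwoAnd]
  exact ker_map_comp_killCompl _ (by rw [IsLocalRing.ker_residue, hϖ])

theorem reduction_form_inl (hi : ¬ IsUnit (a i)) (j : Fin m) :
    reduction i ((diag a G).form (Sum.inl j)) = 0 := by
  rcases eq_or_ne j i with rfl | hj
  · have : IsLocalRing.residue O (a j) = 0 :=
      (IsLocalRing.residue_eq_zero_iff _).mpr hi
    simp [form_diag_inl, this]
  · simpa using congrArg (map (IsLocalRing.residue O)) (killCompl_lastTwoAnd_form_inl a G i hj)

include hϖ in
theorem hasKoszulSyzygies_reduction [IsNoetherianRing O]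
    (h : (m + 2 : ℕ∞) ≤ (diag a G).ideal.height)
    (hi : ¬ IsUnit (a i)) :
    HasKoszulSyzygies (reduction i ((diag a G).form (Sum.inr 0)))
      (reduction i ((diag a G).form (Sum.inr 1))) := by
  classical
  refine hasKoszulSyzygies_of_isRelPrime (isRelPrime_of_card_add_one_lt_height
    reduction_surjective (I := (diag a G).ideal)
    (s := insert (C ϖ) ((Finset.univ.erase i).image fun j => X (Sum.inl j)))
    (h.trans_lt' ?_) ?_ (ideal_map_eq_span_pair _ _ (reduction_form_inl G hi)).le)
  · have h₁ := Finset.card_insert_le (C ϖ : MvPolynomial (V m) O)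
      ((Finset.univ.erase i).image fun j => X (Sum.inl j))
    have h₂ := Finset.card_image_le (s := Finset.univ.erase i)
      (f := fun j => (X (Sum.inl j) : MvPolynomial (V m) O))
    rw [Finset.card_erase_of_mem (Finset.mem_univ i), Finset.card_fin] at h₂
    have := i.pos
    exact_mod_cast (by omega)
  · rw [ker_reduction hϖ, Finset.coe_insert, Finset.coe_image, Set.image_image, Finset.coe_erase,
      Finset.coe_univ]
    congr 3
    ext j
    simp

include hϖ in
theorem saturation_ideal_diag_sup_span_le [IsDomain O] (ha : ∀ j ≠ i, IsUnit (a j))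
    (hai : a i = 0)
    (hsyz : HasKoszulSyzygies (reduction i ((diag a G).form (Sum.inr 0)))
      (reduction i ((diag a G).form (Sum.inr 1)))) :
    saturation ((diag a G).ideal ⊔ Ideal.span {C ϖ}) ≤
      (diag a G).ideal ⊔ Ideal.span {C ϖ} := by
  have hvars : idealOfVars (Option (Fin 2)) (IsLocalRing.ResidueField O) ≤
      (idealOfVars (V m) O).map (reduction i) := by
    rw [reduction, ← Ideal.map_map]
    refine le_trans ?_ (Ideal.map_mono (idealOfVars_le_map_killCompl _))
    rw [idealOfVars, idealOfVars, Ideal.map_span, ← Set.range_comp]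
    exact (congrArg _ (by ext; simp)).le
  have hker : RingHom.ker (reduction i) ≤ (diag a G).ideal ⊔ Ideal.span {C ϖ} := by
    rw [ker_reduction hϖ, Ideal.span_insert, sup_comm]
    refine sup_le_sup_right ?_ _
    rw [← compl_range_lastTwoAnd, ← ker_killCompl]
    exact ker_killCompl_lastTwoAnd_le G ha
  have hmap : ((diag a G).ideal ⊔ Ideal.span {C ϖ}).map (reduction i) =
      Ideal.span {reduction i ((diag a G).form (Sum.inr 0)),
        reduction i ((diag a G).form (Sum.inr 1))} := by
    have hz : Ideal.span {C ϖ} ≤ RingHom.ker (reduction (O := O) i) := by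
      rw [ker_reduction hϖ]
      exact Ideal.span_mono (by simp)
    rw [Ideal.map_sup, (Ideal.map_eq_bot_iff_le_ker _).mpr hz, sup_bot_eq,
      ideal_map_eq_span_pair _ _ (reduction_form_inl G (by simp [hai]))]
  refine saturation_le_of_saturation_map_le reduction_surjective hvars hker ?_
  rw [hmap]
  exact saturation_span_pair_le (i := none) (j := some 0) (k := some 1) (by simp) (by simp)
    (by simp) hsyz

include hϖ in
theorem mem_ideal_diag_of_C_mul_mem [IsDomain O] (hϖ0 : ϖ ≠ 0) (ha : ∀ j ≠ i, IsUnit (a j))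
    (hai : a i = 0)
    (hsyz : HasKoszulSyzygies (reduction i ((diag a G).form (Sum.inr 0)))
      (reduction i ((diag a G).form (Sum.inr 1)))) {f : MvPolynomial (V m) O}
    (hf : C ϖ * f ∈ (diag a G).ideal) : f ∈ (diag a G).ideal := by
  let φ := killCompl (R := O) (lastTwoAnd_injective i)
  have hmap : (diag a G).ideal.map φ = Ideal.span {φ ((diag a G).form (Sum.inr 0)),
      φ ((diag a G).form (Sum.inr 1))} := by
    refine ideal_map_eq_span_pair _ φ.toRingHom fun j => ?_
    rcases eq_or_ne j i with rfl | hj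
    · simp [form_diag_inl, hai]
    · exact killCompl_lastTwoAnd_form_inl a G i hj
  have hker : RingHom.ker (map (σ := Option (Fin 2)) (IsLocalRing.residue O)) =
      Ideal.span {C ϖ} := by
    rw [ker_map, IsLocalRing.ker_residue, hϖ, Ideal.map_span, Set.image_singleton]
  have := Ideal.mem_map_of_mem φ hf
  rw [hmap, map_mul, killCompl_C] at this
  have hφf : φ f ∈ Ideal.span {φ ((diag a G).form (Sum.inr 0)), φ ((diag a G).form (Sum.inr 1))} :=
    mem_span_pair_of_mul_mem (by simpa using hϖ0)
      (map_surjective _ IsLocalRing.residue_surjective) hker hsyz this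
  rwa [← hmap, ← Ideal.mem_comap, Ideal.comap_map_of_surjective' _ (killCompl_surjective _),
    sup_eq_left.mpr (ker_killCompl_lastTwoAnd_le G ha)] at hφf

end Diag

end FormSystem

namespace FormSystem

open Matrix

variable {m : ℕ} {O : Type*} [CommRing O]

theorem exists_add_C_mul_eq_of_mem_sup {F : FormSystem m O} {c : O} {n : ℕ}
    {f : MvPolynomial (V m) O} (hf : f.IsHomogeneous n)
    (h : f ∈ F.ideal ⊔ Ideal.span {C c}) :
    ∃ k ∈ F.ideal, ∃ w : MvPolynomial (V m) O, w.IsHomogeneous n ∧ k + C c * w = f := by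
  obtain ⟨k, hk, _, hw, hkw⟩ := Submodule.mem_sup.mp h
  obtain ⟨w, rfl⟩ := Ideal.mem_span_singleton.mp hw
  refine ⟨_, homogeneousComponent_mem_ideal _ hk n, homogeneousComponent n w,
    homogeneousComponent_isHomogeneous n w, ?_⟩
  rw [← homogeneousComponent_C_mul, ← map_add, hkw, homogeneousComponent_eq_self hf]

theorem socle_diag_update (a : Fin m → O) (G : Fin 2 → Matrix (V m) (V m) O) (i : Fin m) :
    (diag a G).socle = C (a i) * (diag (Function.update a i 1) G).socle := by
  rw [socle_diag, socle_diag, Finset.prod_update_of_mem (Finset.mem_univ i), one_mul,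
    ← Finset.prod_sdiff (Finset.subset_univ {i}), Finset.prod_singleton, C_mul]
  ring

theorem isSocleGenerated_diag_of_update_one {a : Fin m → O} {G : Fin 2 → Matrix (V m) (V m) O}
    {i : Fin m} (hone : (diag (Function.update a i 1) G).IsSocleGenerated)
    (hreg : ∀ f, C (a i) * f ∈ (diag (Function.update a i 0) G).ideal →
      f ∈ (diag (Function.update a i 0) G).ideal)
    (hsat : saturation ((diag (Function.update a i 0) G).ideal ⊔ Ideal.span {C (a i)}) ≤
      (diag (Function.update a i 0) G).ideal ⊔ Ideal.span {C (a i)}) :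
    (diag a G).IsSocleGenerated := by
  intro f hf hfsat
  have hL := ideal_diag_update a G i (a i)
  have hL' := ideal_diag_update a G i 1
  rw [Function.update_eq_self] at hL
  rw [C_1, one_mul] at hL'
  rw [hL] at hfsat ⊢
  set K := (diag (Function.update a i 0) G).ideal
  have hle : K ⊔ Ideal.span {C (a i) * X (Sum.inl i)} ≤ K ⊔ Ideal.span {C (a i)} :=
    sup_le_sup_left (Ideal.span_singleton_le_span_singleton.mpr (dvd_mul_right _ _)) K
  obtain ⟨k, hk, w, hw, rfl⟩ :=
    exists_add_C_mul_eq_of_mem_sup hf (hsat (saturation_mono hle hfsat))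
  have hwsat : w ∈ saturation (diag (Function.update a i 1) G).ideal :=
    hL' ▸ mem_saturation_sup_span_of_add_mul_mem hreg hk hfsat
  obtain ⟨c, hc⟩ := hone w hw hwsat
  rw [hL'] at hc
  obtain ⟨k', hk', _, hr, h⟩ := Submodule.mem_sup.mp hc
  obtain ⟨r, rfl⟩ := Ideal.mem_span_singleton.mp hr
  refine ⟨c, Submodule.mem_sup.mpr ⟨k + C (a i) * k', K.add_mem hk (K.mul_mem_left _ hk'),
    C (a i) * X (Sum.inl i) * r, Ideal.mul_mem_right _ _ (Ideal.mem_span_singleton_self _), ?_⟩⟩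
  rw [socle_diag_update a G i]
  linear_combination C (a i) * h

/-- The automorphism `x ↦ Q x` of the polynomial ring. -/
def linearSubst {ι : Type*} [Fintype ι] [DecidableEq ι] (Q : (Matrix ι ι O)ˣ) :
    MvPolynomial ι O ≃ₐ[O] MvPolynomial ι O :=
  AlgEquiv.ofAlgHom (bind₁ Q.1.toMvPolynomial) (bind₁ Q⁻¹.1.toMvPolynomial)
    (AlgHom.ext fun f => bind₁_toMvPolynomial_of_mul_eq_one Q.inv_mul f)
    (AlgHom.ext fun f => bind₁_toMvPolynomial_of_mul_eq_one Q.mul_inv f)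

theorem idealOfVars_le_map_linearSubst {ι : Type*} [Fintype ι] [DecidableEq ι]
    (Q : (Matrix ι ι O)ˣ) : idealOfVars ι O ≤ (idealOfVars ι O).map (linearSubst Q) := by
  rw [idealOfVars, Ideal.span_le, Set.range_subset_iff]
  intro i
  have hQ : (X i : MvPolynomial ι O) = linearSubst Q (∑ j, C (Q⁻¹.1 i j) * X j) := by
    rw [← toMvPolynomial_eq_sum_C_mul_X, ← bind₁_X_right Q⁻¹.1.toMvPolynomial i]
    exact ((linearSubst Q).apply_symm_apply (X i)).symm
  rw [hQ]
  exact Ideal.mem_map_of_mem _ (Ideal.sum_mem _ fun j _ =>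
    Ideal.mul_mem_left _ _ (Ideal.subset_span ⟨j, rfl⟩))

theorem isSocleGenerated_of_transform {F : FormSystem m O} {P : (Matrix (Fin m) (Fin m) O)ˣ}
    {Q : (Matrix (V m) (V m) O)ˣ} (h : (F.transform P Q).IsSocleGenerated) :
    F.IsSocleGenerated := by
  intro f hf hsat
  have hideal : (F.transform P Q).ideal = F.ideal.map (linearSubst Q) :=
    F.ideal_transform P.isUnit Q
  have hφf : (linearSubst Q f).IsHomogeneous 2 := by
    have := hf.aeval _ fun i => toMvPolynomial_isHomogeneous Q.1 i
    rwa [one_mul] at this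
  obtain ⟨c, hc⟩ := h _ hφf
    (hideal ▸ map_mem_saturation_map (linearSubst Q) (idealOfVars_le_map_linearSubst Q) hsat)
  refine ⟨c * (P.1.det * Q.1.det), ?_⟩
  have hmap : linearSubst Q (f - C (c * (P.1.det * Q.1.det)) * F.socle) =
      linearSubst Q f - C c * (F.transform P Q).socle := by
    rw [socle_transform, map_sub, map_mul, C_mul, map_mul, ← mul_assoc]
    simp [linearSubst]
  rw [← hmap, hideal] at hc
  rwa [← Ideal.mem_comap, Ideal.comap_map_of_bijective _ (linearSubst Q).bijective] at hc

variable [IsDomain O] [IsDiscreteValuationRing O]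

theorem isSocleGenerated_diag {a : Fin m → O} {G : Fin 2 → Matrix (V m) (V m) O}
    (h : (m + 2 : ℕ∞) ≤ (diag a G).ideal.height) :
    (diag a G).IsSocleGenerated := by
  by_cases hunit : ∀ i, IsUnit (a i)
  · exact isSocleGenerated_diag_of_isUnit a G hunit h
  push Not at hunit
  obtain ⟨i, hi⟩ := hunit
  obtain ⟨ϖ, hϖ⟩ := IsDiscreteValuationRing.exists_irreducible O
  have hmax := hϖ.maximalIdeal_eq
  have hne {j : Fin m} (hj : j ≠ i) : IsUnit (a j) := isUnit_of_ne_of_not_isUnit hmax h hj hi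
  have hsyz := hasKoszulSyzygies_reduction G hmax h hi
  have hzero (j : Fin m) (hj : j ≠ i) : IsUnit (Function.update a i 0 j) := by
    rw [Function.update_of_ne hj]
    exact hne hj
  have hmem (f : MvPolynomial (V m) O) (hf : C ϖ * f ∈ (diag (Function.update a i 0) G).ideal) :
      f ∈ (diag (Function.update a i 0) G).ideal :=
    mem_ideal_diag_of_C_mul_mem G hmax hϖ.ne_zero hzero (Function.update_self ..) hsyz hf
  have hai : a i ≠ 0 := fun h0 => (linearIndependent_row_lin h).ne_zero i <| by
    ext (j | j) <;> simp [diagonal_apply, h0]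
  obtain ⟨e, u, hu⟩ := IsDiscreteValuationRing.eq_unit_mul_pow_irreducible hai hϖ
  have hCu : IsUnit (C (u : O) : MvPolynomial (V m) O) := u.isUnit.map C
  refine isSocleGenerated_diag_of_update_one (i := i)
    (isSocleGenerated_diag_of_isUnit _ G ?_ ?_) ?_ ?_
  · intro j
    rcases eq_or_ne j i with rfl | hj
    · simp
    · simpa [hj] using hne hj
  · refine h.trans (Ideal.height_mono (ideal_diag_le_of_dvd G fun j => ?_))
    rcases eq_or_ne j i with rfl | hj <;> simp [*]
  · intro f hf
    rw [hu, C_mul, C_pow, mul_assoc, Ideal.unit_mul_mem_iff_mem _ hCu] at hf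
    exact mul_pow_mem_of_mul_mem hmem e hf
  · rw [hu, C_mul, C_pow, Ideal.span_singleton_mul_left_unit hCu]
    exact saturation_sup_span_pow_le hmem (saturation_ideal_diag_sup_span_le G hmax hzero
      (Function.update_self ..) hsyz) e

/-- By Smith normal form the system may be taken diagonal. -/
theorem isSocleGenerated_of_isDiscreteValuationRing {F : FormSystem m O}
    (h : (m + 2 : ℕ∞) ≤ F.ideal.height) : F.IsSocleGenerated := by
  obtain ⟨P, a, W, ⟨P, rfl⟩, ⟨W, rfl⟩, hF⟩ :=
    exists_eq_mul_fromCols_diagonal_mul F.lin (linearIndependent_row_lin h)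
  have hdiag : F.transform P⁻¹.1 W⁻¹.1 = diag a (F.transform P⁻¹.1 W⁻¹.1).gram := by
    have : P⁻¹.1 * F.lin * W⁻¹.1 = (fromCols (diagonal a) 0 : Matrix (Fin m) (V m) O) := by
      rw [hF, ← Matrix.mul_assoc, ← Matrix.mul_assoc, P.inv_mul, Matrix.one_mul,
        Matrix.mul_assoc, W.mul_inv, Matrix.mul_one]
    rw [transform, diag, this]
  refine isSocleGenerated_of_transform (P := P⁻¹) (Q := W⁻¹) ?_
  have hheight : (F.transform P⁻¹.1 W⁻¹.1).ideal.height = F.ideal.height := by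
    rw [F.ideal_transform P⁻¹.isUnit]
    exact RingEquiv.height_map (linearSubst W⁻¹).toRingEquiv _
  rw [hdiag] at hheight ⊢
  exact isSocleGenerated_diag (hheight ▸ h)

end FormSystem

section Alternating

open Matrix

variable {A ι : Type*} [CommRing A] [Fintype ι] [DecidableEq ι] {I : Ideal A} {z : ι → A}

theorem mul_adjugate_sub_mul_adjugate_mem {N : Matrix ι ι A} (hN : ∀ i, (N *ᵥ z) i ∈ I)
    (i j a : ι) : z i * N.adjugate j a - z j * N.adjugate i a ∈ I := by
  let N' := N.updateRow a (Pi.single j 1)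
  have hz : N' *ᵥ z = Function.update (N *ᵥ z) a 0 + z j • Pi.single a 1 := by
    ext b
    rcases eq_or_ne b a with rfl | hb
    · simp [N', mulVec]
    · simp [N', mulVec, hb]
  have hcramer : z i * N.adjugate j a - z j * N.adjugate i a =
      (N'.adjugate *ᵥ Function.update (N *ᵥ z) a 0) i := by
    have h := congrFun (congrArg (N'.adjugate *ᵥ ·) hz) i
    have hij : N'.adjugate i a = N.adjugate i a := by
      simp only [adjugate_apply, N', updateRow_idem]
    have hdet : N'.det = N.adjugate j a := (adjugate_apply N j a).symm
    simp only [mulVec_mulVec, adjugate_mul, smul_mulVec, one_mulVec, mulVec_add, mulVec_smul,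
      Pi.add_apply, Pi.smul_apply, smul_eq_mul, mulVec_single_one, col_apply, hij, hdet] at h
    linear_combination h
  rw [hcramer]
  refine I.sum_mem fun b _ => I.mul_mem_left _ ?_
  rcases eq_or_ne b a with rfl | hb
  · simp
  · simpa [hb] using hN b

theorem det_updateRow_sub_det_mem {N : Matrix ι ι A} (hN : ∀ i, (N *ᵥ z) i ∈ I) (a j : ι)
    (v : ι → A) :
    (N.updateRow a (N a + ((v ⬝ᵥ z) • Pi.single j 1 - z j • v))).det - N.det ∈ I := by
  have hv : (N.updateRow a v).det = ∑ i, v i * N.adjugate i a := by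
    rw [← cramer_transpose_apply, cramer_eq_adjugate_mulVec, ← adjugate_transpose]
    simp [mulVec, dotProduct, mul_comm]
  have : (N.updateRow a (N a + ((v ⬝ᵥ z) • Pi.single j 1 - z j • v))).det - N.det =
      ∑ i, v i * (z i * N.adjugate j a - z j * N.adjugate i a) := by
    rw [sub_eq_add_neg (_ • _), ← neg_smul, det_updateRow_add, det_updateRow_add,
      det_updateRow_smul, det_updateRow_smul, updateRow_eq_self, ← adjugate_apply, hv, dotProduct]
    simp only [mul_sub, Finset.sum_sub_distrib, ← mul_assoc, ← Finset.sum_mul]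
    simp only [mul_comm _ (z j), mul_assoc, ← Finset.mul_sum]
    ring
  rw [this]
  exact I.sum_mem fun i _ => I.mul_mem_left _ (mul_adjugate_sub_mul_adjugate_mem hN i j a)

/-- Each row changes by an alternating combination of the coordinates of `z`, so `N *ᵥ z` stays
the same. -/
theorem det_add_sub_det_mem {N : Matrix ι ι A} (hN : ∀ i, (N *ᵥ z) i ∈ I) (j : ι)
    (v : Matrix ι ι A) :
    (N + (vecMulVec (v *ᵥ z) (Pi.single j 1) - z j • v)).det - N.det ∈ I := by
  let N' (s : Finset ι) : Matrix ι ι A := of fun a => if a ∈ s then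
    N a + ((v a ⬝ᵥ z) • Pi.single j 1 - z j • v a) else N a
  have hN' (s : Finset ι) : N' s *ᵥ z = N *ᵥ z := by
    ext a
    change (if a ∈ s then _ else N a) ⬝ᵥ z = N a ⬝ᵥ z
    split_ifs <;> simp [add_dotProduct, sub_dotProduct, smul_dotProduct, mul_comm]
  have hmem (s : Finset ι) : (N' s).det - N.det ∈ I := by
    induction s using Finset.induction_on with
    | empty => simp [show N' ∅ = N by ext; simp [N']]
    | insert a s ha ih =>
      have hins : N' (insert a s) =
          (N' s).updateRow a (N' s a + ((v a ⬝ᵥ z) • Pi.single j 1 - z j • v a)) := by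
        ext1 b
        rcases eq_or_ne b a with rfl | hb
        · simp [N', ha]
        · simp [N', hb]
      rw [hins, ← sub_add_sub_cancel _ (N' s).det]
      exact I.add_mem (det_updateRow_sub_det_mem (by rwa [hN']) a j (v a)) ih
  convert hmem Finset.univ using 3
  ext a b
  simp [N', vecMulVec_apply, mulVec]

end Alternating

namespace FormSystem

open Matrix

variable {m : ℕ} {S : Type*} [CommRing S] (F : FormSystem m S)

theorem exists_coeffMatrix_dotProduct_eq {p : V m → S} (hp : ∀ i, eval p (F.form i) = 0) :
    ∃ w : Matrix (V m) (V m) (MvPolynomial (V m) S), ∀ i,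
      F.coeffMatrix i ⬝ᵥ (C ∘ p) = w i ⬝ᵥ X ∧ w i ⬝ᵥ (C ∘ p) = 0 := by
  refine ⟨(fromRows 0 (of fun a => p ᵥ* F.gram a)).map C, ?_⟩
  rintro (i | a)
  · have := congrArg (C (σ := V m)) (hp (Sum.inl i))
    rw [form_inl, toMvPolynomial_eval_eq_apply] at this
    simpa [coeffMatrix, dotProduct, mulVec] using this
  · have hq := hp (Sum.inr a)
    simp only [form_inr, map_sum, map_mul, toMvPolynomial_eval_eq_apply, eval_X] at hq
    have hq' : (p ᵥ* F.gram a) ⬝ᵥ p = 0 := by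
      rwa [← dotProduct_mulVec, dotProduct_comm]
    refine ⟨?_, by simpa [dotProduct] using congrArg (C (σ := V m)) hq'⟩
    simp only [coeffMatrix, dotProduct, toMvPolynomial_eq_sum_C_mul_X, fromRows_apply_inr,
      of_apply, map_apply, vecMul, map_sum, map_mul, Finset.sum_mul, Function.comp_apply]
    rw [Finset.sum_comm]
    exact Finset.sum_congr rfl fun _ _ => Finset.sum_congr rfl fun _ _ => by ring

/-- An alternating change of the Gram matrices makes the coefficient matrix annihilate the
point `p`, without changing its determinant modulo the ideal. -/
theorem socle_mem_ideal_of_eval_form_eq_zero {p : V m → S} {j : V m} (hj : IsUnit (p j))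
    (hp : ∀ i, eval p (F.form i) = 0) : F.socle ∈ F.ideal := by
  obtain ⟨u, hu⟩ := hj.exists_left_inv
  have hu' : C u * C (p j) = (1 : MvPolynomial (V m) S) := by rw [← C_mul, hu, C_1]
  obtain ⟨w, hw⟩ := F.exists_coeffMatrix_dotProduct_eq hp
  let v : Matrix (V m) (V m) (MvPolynomial (V m) S) := (-C u : MvPolynomial (V m) S) • w
  let M := F.coeffMatrix + (vecMulVec (v *ᵥ X) (Pi.single j 1) - (X j : MvPolynomial (V m) S) • v)
  have hM : M *ᵥ (C ∘ p) = 0 := by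
    ext1 i
    have hMi : M i = F.coeffMatrix i +
        ((v i ⬝ᵥ X) • Pi.single j 1 - (X j : MvPolynomial (V m) S) • v i) := by
      ext1 l
      simp [M, vecMulVec_apply, mulVec]
    have hv : v i = (-C u : MvPolynomial (V m) S) • w i := rfl
    simp only [mulVec, hMi, hv, add_dotProduct, sub_dotProduct, smul_dotProduct, (hw i).1, (hw i).2,
      single_one_dotProduct, smul_eq_mul, Function.comp_apply, Pi.zero_apply]
    linear_combination -(w i ⬝ᵥ X) * hu'
  have hdet : M.det = 0 := by
    have h := congrFun (congrArg (M.adjugate *ᵥ ·) hM) j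
    simp only [mulVec_mulVec, adjugate_mul, smul_mulVec, one_mulVec, mulVec_zero, Pi.smul_apply,
      Function.comp_apply, smul_eq_mul, Pi.zero_apply] at h
    linear_combination C u * h - M.det * hu'
  have := det_add_sub_det_mem (I := F.ideal) (z := X) F.form_mem_ideal j v
  rwa [show (_ : Matrix _ _ _).det = M.det from rfl, hdet, zero_sub, neg_mem_iff] at this

end FormSystem

section ExtendScalars

variable {σ S A : Type*} [CommRing S] [CommRing A] [Algebra S A]

variable (A) in
/-- The `A`-linear extension to `A[x]` of a functional on `S[x]`. -/
def extendScalars (ψ : MvPolynomial σ S →ₗ[S] S) : MvPolynomial σ A →ₗ[A] A :=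
  (basisMonomials σ A).constr A fun α => algebraMap S A (ψ (monomial α 1))

theorem extendScalars_monomial_mul_map (ψ : MvPolynomial σ S →ₗ[S] S) (α : σ →₀ ℕ) (a : A)
    (f : MvPolynomial σ S) : extendScalars A ψ (monomial α a * map (algebraMap S A) f) =
      a * algebraMap S A (ψ (monomial α 1 * f)) := by
  have hmon (α : σ →₀ ℕ) (a : A) :
      extendScalars A ψ (monomial α a) = a * algebraMap S A (ψ (monomial α 1)) := by
    have h := (basisMonomials σ A).constr_basis A (fun α => algebraMap S A (ψ (monomial α 1))) α
    rw [coe_basisMonomials] at h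
    rw [← mul_one a, ← smul_eq_mul, ← smul_monomial, map_smul, smul_eq_mul, smul_eq_mul, mul_one,
      extendScalars, h]
  induction f using MvPolynomial.induction_on' with
  | monomial β b =>
    have hb : monomial (α + β) b = b • monomial (α + β) 1 := by simp [smul_monomial]
    rw [map_monomial, monomial_mul, hmon, monomial_mul, one_mul, hb, map_smul, smul_eq_mul,
      map_mul, mul_assoc]
  | add p q hp hq => simp only [mul_add, map_add, hp, hq]

theorem extendScalars_map (ψ : MvPolynomial σ S →ₗ[S] S) (f : MvPolynomial σ S) :
    extendScalars A ψ (map (algebraMap S A) f) = algebraMap S A (ψ f) := by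
  simpa using extendScalars_monomial_mul_map ψ 0 (1 : A) f

theorem extendScalars_eq_zero {ψ : MvPolynomial σ S →ₗ[S] S} {I : Ideal (MvPolynomial σ S)}
    (hψ : ∀ f ∈ I, ψ f = 0) {f : MvPolynomial σ A} (hf : f ∈ I.map (map (algebraMap S A))) :
    extendScalars A ψ f = 0 := by
  suffices h : ∀ H, extendScalars A ψ (H * f) = 0 by simpa using h 1
  refine Submodule.span_induction (p := fun f _ => ∀ H, extendScalars A ψ (H * f) = 0) ?_ (by simp)
    (fun f g _ _ hf hg H => by rw [mul_add, map_add, hf, hg, add_zero])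
    (fun a f _ hf H => by rw [smul_eq_mul, ← mul_assoc, hf]) hf
  rintro _ ⟨l, hl, rfl⟩ H
  induction H using MvPolynomial.induction_on' with
  | monomial α a =>
    rw [extendScalars_monomial_mul_map, hψ _ (I.mul_mem_left _ hl), map_zero, mul_zero]
  | add p q hp hq => rw [add_mul, map_add, hp, hq, add_zero]

end ExtendScalars

namespace FormSystem

open Matrix

variable {m : ℕ} {S : Type*} [CommRing S] (F : FormSystem m S)

/-- Over the coordinate ring of the projective scheme cut out by `F` on the chart `x_j ≠ 0`, the
forms have the tautological zero, so that `σ` becomes an element of the ideal. -/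
theorem C_apply_socle_mem_saturation {ψ : MvPolynomial (V m) S →ₗ[S] S}
    (hψ : ∀ f ∈ F.ideal, ψ f = 0) : C (ψ F.socle) ∈ saturation F.ideal := by
  have hloc (j : V m) : ∃ N, X j ^ N * C (ψ F.socle) ∈ F.ideal := by
    let π := Ideal.Quotient.mk F.ideal
    let A := Localization.Away (π (X j))
    let ι := (algebraMap (MvPolynomial (V m) S ⧸ F.ideal) A).comp π
    have hι (c : S) : ι (C c) = algebraMap S A c := rfl
    have hmem : (F.map (algebraMap S A)).socle ∈ (F.map (algebraMap S A)).ideal := by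
      refine socle_mem_ideal_of_eval_form_eq_zero _ (p := fun i => ι (X i)) (j := j)
        (IsLocalization.Away.algebraMap_isUnit (π (X j))) fun i => ?_
      have heval : eval₂Hom (algebraMap S A) (fun i => ι (X i)) = ι := by
        ext <;> simp [hι]
      rw [form_map, eval_map, ← coe_eval₂Hom, heval]
      simp [ι, π, Ideal.Quotient.eq_zero_iff_mem.mpr (F.form_mem_ideal i)]
    rw [socle_map, ideal_map] at hmem
    have hzero : ι (C (ψ F.socle)) = 0 := by
      rw [hι, ← extendScalars_map, extendScalars_eq_zero hψ hmem]
    obtain ⟨⟨_, N, rfl⟩, hN⟩ := (IsLocalization.map_eq_zero_iff (.powers (π (X j))) A _).mp hzero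
    exact ⟨N, Ideal.Quotient.eq_zero_iff_mem.mp (by simpa [π] using hN)⟩
  choose N hN using hloc
  exact ⟨∑ j, N j, fun j => X_pow_mul_mem_of_le
    (Finset.single_le_sum (fun _ _ => Nat.zero_le _) (Finset.mem_univ j)) (hN j)⟩

end FormSystem

namespace FormSystem

section Localization

variable {m : ℕ} {T : Type*} [CommRing T] (F : FormSystem m T)

theorem height_ideal_le_height_ideal_map (M : Submonoid T) (O : Type*) [CommRing O] [Algebra T O]
    [IsLocalization M O] : F.ideal.height ≤ (F.map (algebraMap T O)).ideal.height := by
  let := MvPolynomial.algebraMvPolynomial (σ := V m) (R := T) (S := O)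
  have hloc := IsLocalization.height_under (M.map (C : T →+* MvPolynomial (V m) T))
    (F.ideal.map (algebraMap _ (MvPolynomial (V m) O)))
  rw [ideal_map, ← algebraMap_def, ← hloc]
  exact Ideal.height_mono Ideal.le_comap_map

theorem isDiscreteValuationRing_localization_atPrime [IsDomain T] [IsNoetherianRing T]
    {P : Ideal T} [P.IsPrime] (hP : P.IsPrincipal) (hne : P ≠ ⊥) :
    IsDiscreteValuationRing (Localization.AtPrime P) := by
  obtain ⟨p, hp⟩ := hP
  have hmax := Localization.AtPrime.map_eq_maximalIdeal (I := P)
  have : IsNoetherianRing (Localization.AtPrime P) :=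
    IsLocalization.isNoetherianRing P.primeCompl _ inferInstance
  have hnf : ¬ IsField (Localization.AtPrime P) := by
    rwa [IsLocalRing.isField_iff_maximalIdeal_eq, ← hmax, Ideal.map_eq_bot_iff_of_injective
      (IsLocalization.injective _ P.primeCompl_le_nonZeroDivisors)]
  refine ((IsDiscreteValuationRing.TFAE _ hnf).out 0 4).mpr ?_
  rw [← hmax]
  exact ⟨algebraMap T _ p, (congrArg (Ideal.map _) hp).trans
    (by rw [Ideal.submodule_span_eq, Ideal.map_span, Set.image_singleton])⟩

theorem exists_C_mul_sub_C_mul_socle_mem [IsDomain T] [IsNoetherianRing T]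
    (h : (m + 2 : ℕ∞) ≤ F.ideal.height) {P : Ideal T} [P.IsPrime] (hP : P.IsPrincipal)
    (hne : P ≠ ⊥) {f : MvPolynomial (V m) T} (hf : f.IsHomogeneous 2)
    (hsat : f ∈ saturation F.ideal) : ∃ τ ∉ P, ∃ c, C τ * f - C c * F.socle ∈ F.ideal := by
  let O := Localization.AtPrime P
  have := isDiscreteValuationRing_localization_atPrime hP hne
  let := MvPolynomial.algebraMvPolynomial (σ := V m) (R := T) (S := O)
  have hvars : idealOfVars (V m) O ≤ (idealOfVars (V m) T).map (map (algebraMap T O)) := by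
    rw [idealOfVars, Ideal.span_le, Set.range_subset_iff]
    intro i
    rw [SetLike.mem_coe, ← map_X (algebraMap T O) i]
    exact Ideal.mem_map_of_mem _ (Ideal.subset_span ⟨i, rfl⟩)
  obtain ⟨c, hc⟩ := isSocleGenerated_of_isDiscreteValuationRing
    (h.trans (F.height_ideal_le_height_ideal_map P.primeCompl O)) _ (hf.map (algebraMap T O))
    (by rw [ideal_map]; exact map_mem_saturation_map _ hvars hsat)
  obtain ⟨a, s, rfl⟩ := IsLocalization.exists_mk'_eq P.primeCompl c
  have hmem : algebraMap _ (MvPolynomial (V m) O) (C s.1 * f - C a * F.socle) ∈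
      F.ideal.map (algebraMap _ (MvPolynomial (V m) O)) := by
    rw [algebraMap_def, ← ideal_map]
    convert Ideal.mul_mem_left _ (C (algebraMap T O s)) hc using 1
    rw [mul_sub, ← mul_assoc, ← C_mul, IsLocalization.mk'_spec', socle_map]
    simp
  rw [IsLocalization.algebraMap_mem_map_algebraMap_iff (P.primeCompl.map C)] at hmem
  obtain ⟨_, ⟨t, ht, rfl⟩, hmem⟩ := hmem
  refine ⟨t * s, P.primeCompl.mul_mem ht s.2, t * a, ?_⟩
  convert hmem using 1
  simp only [C_mul]
  ring

end Localization

section Dual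

theorem exists_prime_of_not_isField {T : Type*} [CommRing T] [IsDomain T]
    [UniqueFactorizationMonoid T] (hT : ¬ IsField T) : ∃ p : T, Prime p := by
  obtain ⟨P, hne, hP⟩ := Ring.not_isField_iff_exists_prime.mp hT
  obtain ⟨p, -, hp⟩ := hP.exists_mem_prime_of_ne_bot hne
  exact ⟨p, hp⟩

variable {m : ℕ} {T : Type*} [CommRing T] (F : FormSystem m T)

/-- The `T`-dual of the degree-two part of `T[x] ⧸ F.ideal`, as functionals on `T[x]`. -/
def dual : Submodule T (MvPolynomial (V m) T →ₗ[T] T) where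
  carrier := {ψ | (∀ f ∈ F.ideal, ψ f = 0) ∧ ∀ f, ψ (homogeneousComponent 2 f) = ψ f}
  zero_mem' := by simp
  add_mem' := fun hψ hχ => ⟨fun f hf => by simp [hψ.1 f hf, hχ.1 f hf],
    fun f => by simp [hψ.2 f, hχ.2 f]⟩
  smul_mem' := fun c _ hψ => ⟨fun f hf => by simp [hψ.1 f hf], fun f => by simp [hψ.2 f]⟩

/-- The ideal `A₀` of scalars whose image in `T[x] ⧸ F.ideal` is supported at the variables. -/
def torsionIdeal : Ideal T := (saturation F.ideal).comap C

theorem apply_socle_mem_torsionIdeal {ψ : MvPolynomial (V m) T →ₗ[T] T} (hψ : ψ ∈ F.dual) :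
    ψ F.socle ∈ F.torsionIdeal := F.C_apply_socle_mem_saturation hψ.1

variable [IsDomain T] [IsNoetherianRing T] {F} (h : (m + 2 : ℕ∞) ≤ F.ideal.height)
include h

theorem exists_mul_apply_eq_mul_apply_socle {P : Ideal T} [P.IsPrime] (hP : P.IsPrincipal)
    (hne : P ≠ ⊥) {u : T} (hu : u ∈ F.torsionIdeal) (f : MvPolynomial (V m) T) :
    ∃ τ ∉ P, ∃ c, ∀ ψ ∈ F.dual, τ * u * ψ f = c * ψ F.socle := by
  obtain ⟨τ, hτ, c, hc⟩ := F.exists_C_mul_sub_C_mul_socle_mem h hP hne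
    (f := C u * homogeneousComponent 2 f)
    (by simpa using (isHomogeneous_C _ u).mul (homogeneousComponent_isHomogeneous 2 f))
    (Ideal.mul_mem_right _ _ hu)
  refine ⟨τ, hτ, c, fun ψ hψ => ?_⟩
  have := hψ.1 _ hc
  rw [← mul_assoc, ← C_mul, ← smul_eq_C_mul, ← smul_eq_C_mul, map_sub, map_smul, map_smul, hψ.2,
    sub_eq_zero] at this
  exact this

variable [UniqueFactorizationMonoid T]

theorem exists_mul_apply_eq_mul_apply_socle_of_torsionIdeal_ne_bot (hT : ¬ IsField T)
    (htor : F.torsionIdeal ≠ ⊥) (f : MvPolynomial (V m) T) :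
    ∃ τ ≠ 0, ∃ c, ∀ ψ ∈ F.dual, τ * ψ f = c * ψ F.socle := by
  obtain ⟨u, hu, hu0⟩ := Submodule.exists_mem_ne_zero_of_ne_bot htor
  obtain ⟨p, hp⟩ := exists_prime_of_not_isField hT
  have := (Ideal.span_singleton_prime hp.ne_zero).mpr hp
  obtain ⟨τ, hτ, c, hc⟩ := exists_mul_apply_eq_mul_apply_socle h (P := Ideal.span {p}) ⟨p, rfl⟩
    (by simpa using hp.ne_zero) hu f
  exact ⟨τ * u, mul_ne_zero (fun h0 => hτ (h0 ▸ zero_mem _)) hu0, c, hc⟩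

theorem eq_zero_of_apply_socle_eq_zero (hT : ¬ IsField T) (htor : F.torsionIdeal ≠ ⊥)
    {ψ : MvPolynomial (V m) T →ₗ[T] T} (hψ : ψ ∈ F.dual) (h0 : ψ F.socle = 0) : ψ = 0 := by
  refine LinearMap.ext fun f => ?_
  obtain ⟨τ, hτ, c, hc⟩ :=
    exists_mul_apply_eq_mul_apply_socle_of_torsionIdeal_ne_bot h hT htor f
  simpa [h0, hτ] using hc ψ hψ

end Dual

end FormSystem

section Primitive

variable {T M : Type*} [CommRing T] [AddCommGroup M] [Module T M]

/-- A functional whose values have no common prime divisor. -/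
def IsPrimitive (ψ : M →ₗ[T] T) : Prop := ∀ p, Prime p → ∃ f, ¬ p ∣ ψ f

variable [IsDomain T]

theorem exists_eq_smul_of_forall_dvd {ψ : M →ₗ[T] T} {a : T} (ha : a ≠ 0) (h : ∀ f, a ∣ ψ f) :
    ∃ χ : M →ₗ[T] T, ψ = a • χ := by
  choose χ hχ using h
  refine ⟨⟨⟨χ, fun f g => mul_left_cancel₀ ha ?_⟩, fun c f => mul_left_cancel₀ ha ?_⟩,
    LinearMap.ext hχ⟩
  · rw [← hχ, map_add, hχ, hχ, mul_add]
  · rw [← hχ, map_smul, hχ, RingHom.id_apply, smul_eq_mul, smul_eq_mul, mul_left_comm]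

theorem exists_isPrimitive_mem [WfDvdMonoid T] {N : Submodule T (M →ₗ[T] T)} (hN : N ≠ ⊥)
    (hsat : ∀ a : T, a ≠ 0 → ∀ ψ, a • ψ ∈ N → ψ ∈ N) : ∃ ψ ∈ N, IsPrimitive ψ := by
  obtain ⟨ψ, hψ, hψ0⟩ := Submodule.exists_mem_ne_zero_of_ne_bot hN
  obtain ⟨f, hf⟩ := DFunLike.exists_ne hψ0
  obtain ⟨a, ⟨ha, ψ, hψ, rfl⟩, hmin⟩ := (wellFounded_dvdNotUnit (α := T)).has_min
    {a : T | a ≠ 0 ∧ ∃ ψ ∈ N, ψ f = a} ⟨ψ f, hf, ψ, hψ, rfl⟩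
  refine ⟨ψ, hψ, fun p hp => ?_⟩
  by_contra! hdvd
  obtain ⟨χ, rfl⟩ := exists_eq_smul_of_forall_dvd hp.ne_zero hdvd
  have hχ : χ f ≠ 0 := right_ne_zero_of_mul ha
  exact hmin (χ f) ⟨hχ, χ, hsat p hp.ne_zero χ hψ, rfl⟩ ⟨hχ, p, hp.not_isUnit, mul_comm p (χ f)⟩

theorem dvd_of_forall_prime_exists_dvd_mul [UniqueFactorizationMonoid T] {a b : T} (ha : a ≠ 0)
    (h : ∀ p, Prime p → ∃ τ, ¬ p ∣ τ ∧ a ∣ τ * b) : a ∣ b := by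
  refine (UniqueFactorizationMonoid.dvd_iff_emultiplicity_le ha).mpr fun p hp => ?_
  obtain ⟨τ, hτ, hdvd⟩ := h p hp
  calc emultiplicity p a ≤ emultiplicity p (τ * b) :=
        emultiplicity_le_emultiplicity_of_dvd_right hdvd
    _ = emultiplicity p b := by
      rw [emultiplicity_mul hp, emultiplicity_eq_zero.mpr hτ, zero_add]

end Primitive

namespace FormSystem

variable {m : ℕ} {T : Type*} [CommRing T] [IsDomain T] (F : FormSystem m T)

theorem mem_dual_of_smul_mem_dual {a : T} (ha : a ≠ 0) {ψ : MvPolynomial (V m) T →ₗ[T] T}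
    (hψ : a • ψ ∈ F.dual) : ψ ∈ F.dual :=
  ⟨fun f hf => by simpa [ha] using hψ.1 f hf, fun f => by simpa [ha] using hψ.2 f⟩

variable {F} [UniqueFactorizationMonoid T] [IsNoetherianRing T]
  (h : (m + 2 : ℕ∞) ≤ F.ideal.height)
include h

theorem torsionIdeal_eq_span (hT : ¬ IsField T) {ψ : MvPolynomial (V m) T →ₗ[T] T}
    (hψ : ψ ∈ F.dual) (hprim : IsPrimitive ψ) : F.torsionIdeal = Ideal.span {ψ F.socle} := by
  refine le_antisymm (fun u hu => ?_)
    ((Ideal.span_singleton_le_iff_mem _).mpr (F.apply_socle_mem_torsionIdeal hψ))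
  rw [Ideal.mem_span_singleton]
  rcases eq_or_ne (ψ F.socle) 0 with h0 | h0
  · obtain ⟨p, hp⟩ := exists_prime_of_not_isField hT
    obtain ⟨f, hf⟩ := hprim p hp
    have htor : F.torsionIdeal = ⊥ := by
      by_contra htor
      exact hf (by simp [eq_zero_of_apply_socle_eq_zero h hT htor hψ h0])
    simpa [h0, htor] using hu
  refine dvd_of_forall_prime_exists_dvd_mul h0 fun p hp => ?_
  obtain ⟨f, hf⟩ := hprim p hp
  have := (Ideal.span_singleton_prime hp.ne_zero).mpr hp
  obtain ⟨τ, hτ, c, hc⟩ := exists_mul_apply_eq_mul_apply_socle h (P := Ideal.span {p}) ⟨p, rfl⟩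
    (by simpa using hp.ne_zero) hu f
  rw [Ideal.mem_span_singleton] at hτ
  exact ⟨τ * ψ f, hp.not_dvd_mul hτ hf, c, by linear_combination hc ψ hψ⟩

end FormSystem

section EvalQuadratic

variable {ι S : Type*} [CommRing S]

/-- The functional `f ↦ f₂(a)`, where `f₂` is the component of degree two of `f`. -/
def evalQuadratic (a : ι → S) : MvPolynomial ι S →ₗ[S] S :=
  (aeval a : MvPolynomial ι S →ₐ[S] S).toLinearMap ∘ₗ homogeneousComponent 2

theorem evalQuadratic_apply_of_isHomogeneous (a : ι → S) {f : MvPolynomial ι S}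
    (hf : f.IsHomogeneous 2) : evalQuadratic a f = eval a f := by
  simp [evalQuadratic, homogeneousComponent_eq_self hf]

theorem evalQuadratic_X_mul_X (a : ι → S) (i j : ι) : evalQuadratic a (X i * X j) = a i * a j := by
  rw [evalQuadratic_apply_of_isHomogeneous a ((isHomogeneous_X S i).mul (isHomogeneous_X S j)),
    map_mul, eval_X, eval_X]

theorem homogeneousComponent_map {S' : Type*} [CommRing S'] (g : S →+* S') (n : ℕ)
    (f : MvPolynomial ι S) : homogeneousComponent n (MvPolynomial.map g f) =
      MvPolynomial.map g (homogeneousComponent n f) := by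
  ext d
  simp only [coeff_homogeneousComponent, coeff_map, apply_ite g, map_zero]

theorem evalQuadratic_map {S' : Type*} [CommRing S'] (g : S →+* S') (a : ι → S)
    (f : MvPolynomial ι S) :
    evalQuadratic (g ∘ a) (MvPolynomial.map g f) = g (evalQuadratic a f) := by
  simp [evalQuadratic, homogeneousComponent_map, map_eval]

theorem eval_smul_add_smul_of_isHomogeneous_one {f : MvPolynomial ι S} (hf : f.IsHomogeneous 1)
    (a b : ι → S) (x y : S) : eval (x • a + y • b) f = x * eval a f + y * eval b f := by
  rw [← mem_homogeneousSubmodule, homogeneousSubmodule_one_eq_span_X] at hf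
  induction hf using Submodule.span_induction with
  | mem f hf =>
    obtain ⟨i, rfl⟩ := hf
    simp
  | zero => simp
  | add f g _ _ hf hg => rw [map_add, hf, hg, map_add, map_add]; ring
  | smul c f _ hf => rw [smul_eval, hf, smul_eval, smul_eval]; ring

theorem eval_smul_add_smul_of_isHomogeneous_two {f : MvPolynomial ι S} (hf : f.IsHomogeneous 2)
    (a b : ι → S) (x y : S) : eval (x • a + y • b) f = (x ^ 2 - x * y) * eval a f +
      (y ^ 2 - x * y) * eval b f + x * y * eval (a + b) f := by
  rw [← mem_homogeneousSubmodule, ← homogeneousSubmodule_one_pow, sq] at hf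
  have hadd {f : MvPolynomial ι S} (hf : f.IsHomogeneous 1) :
      eval (a + b) f = eval a f + eval b f := by
    simpa using eval_smul_add_smul_of_isHomogeneous_one hf a b 1 1
  induction hf using Submodule.mul_induction_on' with
  | mem_mul_mem f hf g hg =>
    rw [map_mul, map_mul, map_mul, map_mul, hadd hf, hadd hg,
      eval_smul_add_smul_of_isHomogeneous_one hf, eval_smul_add_smul_of_isHomogeneous_one hg]
    ring
  | add f _ g _ hf hg => rw [map_add, hf, hg, map_add, map_add, map_add]; ring

theorem evalQuadratic_smul_add_smul (a b : ι → S) (x y : S) (f : MvPolynomial ι S) :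
    evalQuadratic (x • a + y • b) f = (x ^ 2 - x * y) * evalQuadratic a f +
      (y ^ 2 - x * y) * evalQuadratic b f + x * y * evalQuadratic (a + b) f := by
  simpa [evalQuadratic, coe_aeval_eq_eval] using eval_smul_add_smul_of_isHomogeneous_two
    (homogeneousComponent_isHomogeneous 2 f) a b x y

-- On the products `X u * X v`, the relation becomes, for each fixed `u`, a relation between the
-- vectors `w l`, whose coefficients must vanish.
theorem mul_add_mul_eq_zero_of_sum_smul_evalQuadratic_eq_zero {n : ℕ} {w : Fin n → ι → S}
    (hw : LinearIndependent S w) {i j : Fin n} {t : Fin (n + 1) → S}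
    (ht : ∑ l, t l • evalQuadratic (Matrix.vecCons (w i + w j) w l) = 0) (u : ι) (l : Fin n) :
    t 0 * (w i u + w j u) * (Pi.single i 1 + Pi.single j 1 : Fin n → S) l +
      t l.succ * w l u = 0 := by
  refine Fintype.linearIndependent_iff.mp hw (fun l => t 0 * (w i u + w j u) *
    (Pi.single i 1 + Pi.single j 1 : Fin n → S) l + t l.succ * w l u) ?_ l
  ext1 v
  have := LinearMap.congr_fun ht (X u * X v)
  simp only [Fin.sum_univ_succ, Matrix.cons_val_zero, Matrix.cons_val_succ, LinearMap.add_apply,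
    LinearMap.smul_apply, LinearMap.sum_apply, evalQuadratic_X_mul_X, Pi.add_apply, smul_eq_mul,
    LinearMap.zero_apply] at this
  simpa [add_mul, mul_add, Finset.sum_add_distrib, Pi.single_apply, mul_assoc] using this

theorem linearIndependent_evalQuadratic {n : ℕ} {w : Fin n → ι → S} (hw : LinearIndependent S w)
    {i j : Fin n} (hij : i ≠ j) : LinearIndependent S
      fun l => evalQuadratic (Matrix.vecCons (w i + w j) w l) := by
  rw [Fintype.linearIndependent_iff]
  intro t ht
  have hcoeff := mul_add_mul_eq_zero_of_sum_smul_evalQuadratic_eq_zero hw ht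
  rw [Fintype.linearIndependent_iff] at hw
  have hsucc (l : Fin n) (h0 : t 0 = 0) : t l.succ = 0 := by
    have := hw (Pi.single l (t l.succ)) (by
      ext1 u
      simpa [h0, Pi.single_apply, ite_apply] using hcoeff u l) l
    simpa using this
  have hzero : t 0 = 0 := by
    have := hw (Pi.single i (t 0 + t i.succ) + Pi.single j (t 0)) (by
      ext1 u
      have := hcoeff u i
      simp only [Pi.add_apply, Pi.single_eq_same, Pi.single_eq_of_ne hij] at this
      simp only [Pi.add_apply, add_smul, Finset.sum_add_distrib, Pi.single_apply, ite_smul,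
        zero_smul, Finset.sum_ite_eq', Finset.mem_univ, if_true, Pi.smul_apply, smul_eq_mul,
        Pi.zero_apply]
      linear_combination this) j
    simpa [hij.symm] using this
  exact Fin.cases hzero fun l => hsucc l hzero

end EvalQuadratic

section PlaneFunctional

open Matrix

variable {ι S : Type*} [CommRing S]

/-- The functional `f ↦ det (q, r, f)`, where each quadratic form is replaced by its values at the
three points `a + b`, `a`, `b`, which determine its restriction to the plane spanned by `a`
and `b`. -/
def planeFunctional (q r : MvPolynomial ι S) (a b : ι → S) : MvPolynomial ι S →ₗ[S] S :=
  Fintype.linearCombination S (fun l => evalQuadratic (![a + b, a, b] l))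
    ((fun l => evalQuadratic (![a + b, a, b] l) q) ⨯₃ fun l => evalQuadratic (![a + b, a, b] l) r)

theorem planeFunctional_apply (q r : MvPolynomial ι S) (a b : ι → S) (f : MvPolynomial ι S) :
    planeFunctional q r a b f = ∑ l, ((fun l => evalQuadratic (![a + b, a, b] l) q) ⨯₃
      fun l => evalQuadratic (![a + b, a, b] l) r) l * evalQuadratic (![a + b, a, b] l) f := by
  rw [planeFunctional, Fintype.linearCombination_apply, LinearMap.sum_apply]
  rfl

-- The substitution acts on binary quadratic forms through the symmetric square, whose determinant
-- is the cube of the determinant.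
theorem planeFunctional_smul_add_smul (q r : MvPolynomial ι S) (a b : ι → S) (x y z w : S) :
    planeFunctional q r (x • a + y • b) (z • a + w • b) =
      (x * w - y * z) ^ 3 • planeFunctional q r a b := by
  have hadd : x • a + y • b + (z • a + w • b) = (x + z) • a + (y + w) • b := by module
  refine LinearMap.ext fun f => ?_
  simp only [LinearMap.smul_apply, planeFunctional_apply, Fin.sum_univ_three, cross_apply, hadd,
    cons_val_zero, cons_val_one, cons_val, evalQuadratic_smul_add_smul, smul_eq_mul]
  ring

theorem planeFunctional_map {S' : Type*} [CommRing S'] (g : S →+* S') (q r : MvPolynomial ι S)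
    (a b : ι → S) (f : MvPolynomial ι S) :
    planeFunctional (MvPolynomial.map g q) (MvPolynomial.map g r) (g ∘ a) (g ∘ b)
      (MvPolynomial.map g f) = g (planeFunctional q r a b f) := by
  have hadd : g ∘ a + g ∘ b = g ∘ (a + b) := by
    ext1 i
    simp
  simp only [planeFunctional_apply, Fin.sum_univ_three, cross_apply, hadd, cons_val_zero,
    cons_val_one, cons_val, evalQuadratic_map, map_add, map_sub, map_mul]

end PlaneFunctional

namespace FormSystem

open Matrix

section Minor

variable {m : ℕ} {S : Type*} (F : FormSystem m S)

/-- The coefficient matrix of the linear forms, completed to a square matrix by the rows `v`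
and `w`. -/
def borderedMatrix (v w : V m → S) : Matrix (V m) (V m) S := of (Sum.elim F.lin ![v, w])

@[simp]
theorem borderedMatrix_inl (v w : V m → S) (i : Fin m) :
    F.borderedMatrix v w (Sum.inl i) = F.lin i := rfl

@[simp]
theorem borderedMatrix_inr_zero (v w : V m → S) : F.borderedMatrix v w (Sum.inr 0) = v := rfl

@[simp]
theorem borderedMatrix_inr_one (v w : V m → S) : F.borderedMatrix v w (Sum.inr 1) = w := rfl

theorem updateRow_borderedMatrix_inr_zero (v w u : V m → S) :
    (F.borderedMatrix v w).updateRow (Sum.inr 0) u = F.borderedMatrix u w := by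
  ext1 (a | a)
  · simp
  · fin_cases a <;> simp

theorem updateRow_borderedMatrix_inr_one (v w u : V m → S) :
    (F.borderedMatrix v w).updateRow (Sum.inr 1) u = F.borderedMatrix v u := by
  ext1 (a | a)
  · simp
  · fin_cases a <;> simp

variable [CommRing S]

theorem borderedMatrix_mulVec (v w u : V m → S) :
    F.borderedMatrix v w *ᵥ u = Sum.elim (F.lin *ᵥ u) ![v ⬝ᵥ u, w ⬝ᵥ u] := by
  ext1 (a | a)
  · rfl
  · fin_cases a <;> rfl

/-- The signed maximal minor of the linear forms that omits the variables `i` and `j`. -/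
def minor (i j : V m) : S := (F.borderedMatrix (Pi.single i 1) (Pi.single j 1)).det

theorem adjugate_borderedMatrix_inr_zero (v : V m → S) (j l : V m) :
    (F.borderedMatrix v (Pi.single j 1)).adjugate l (Sum.inr 0) = F.minor l j := by
  rw [adjugate_apply, updateRow_borderedMatrix_inr_zero, minor]

theorem adjugate_borderedMatrix_inr_one (i l : V m) (w : V m → S) :
    (F.borderedMatrix (Pi.single i 1) w).adjugate l (Sum.inr 1) = F.minor i l := by
  rw [adjugate_apply, updateRow_borderedMatrix_inr_one, minor]

theorem lin_mulVec_minor_left (j : V m) : F.lin *ᵥ (fun l => F.minor l j) = 0 := by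
  ext1 i
  have := congr_fun₂ (mul_adjugate (F.borderedMatrix 0 (Pi.single j 1))) (Sum.inl i) (Sum.inr 0)
  simpa [mul_apply, adjugate_borderedMatrix_inr_zero, mulVec, dotProduct] using this

theorem lin_mulVec_minor_right (i : V m) : F.lin *ᵥ F.minor i = 0 := by
  ext1 j
  have := congr_fun₂ (mul_adjugate (F.borderedMatrix (Pi.single i 1) 0)) (Sum.inl j) (Sum.inr 1)
  simpa [mul_apply, adjugate_borderedMatrix_inr_one, mulVec, dotProduct] using this

theorem minor_self (i : V m) : F.minor i i = 0 :=
  det_zero_of_row_eq (i := Sum.inr 0) (j := Sum.inr 1) (by simp) rfl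

theorem minor_swap (i j : V m) : F.minor j i = -F.minor i j := by
  have h := det_permute (Equiv.swap (Sum.inr 0) (Sum.inr 1))
    (F.borderedMatrix (Pi.single i 1) (Pi.single j 1))
  rw [Equiv.Perm.sign_swap (by simp), Units.val_neg, Units.val_one, Int.cast_neg, Int.cast_one,
    neg_one_mul] at h
  rw [minor, minor, ← h]
  congr 1
  ext1 (a | a)
  · simp [Equiv.swap_apply_def]
  · fin_cases a <;> simp

theorem minor_mul_apply_of_lin_mulVec_eq_zero {w : V m → S} (hw : F.lin *ᵥ w = 0) (i j : V m) :
    F.minor i j • w = w i • (fun l => F.minor l j) + w j • F.minor i := by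
  have hadj := congrArg (· *ᵥ w)
    (adjugate_mul (F.borderedMatrix (Pi.single i 1) (Pi.single j 1)))
  simp only [← mulVec_mulVec, borderedMatrix_mulVec, hw, single_one_dotProduct, smul_mulVec,
    one_mulVec] at hadj
  rw [minor, ← hadj]
  ext l
  simp [mulVec, dotProduct, adjugate_borderedMatrix_inr_zero, adjugate_borderedMatrix_inr_one,
    mul_comm]

theorem minor_mul_minor_sub (i j i' j' : V m) :
    F.minor i j' * F.minor i' j - F.minor j j' * F.minor i' i = F.minor i j * F.minor i' j' := by
  have := congr_fun (F.minor_mul_apply_of_lin_mulVec_eq_zero (F.lin_mulVec_minor_left j') i j) i'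
  simp only [Pi.smul_apply, Pi.add_apply, smul_eq_mul] at this
  rw [this, F.minor_swap i i']
  ring

theorem minor_map {S' : Type*} [CommRing S'] (g : S →+* S') (i j : V m) :
    (F.map g).minor i j = g (F.minor i j) := by
  rw [minor, minor, RingHom.map_det]
  congr 1
  ext (a | a) b
  · simp
  · fin_cases a <;> simp [Pi.single_apply, apply_ite g]

theorem exists_linearIndependent_of_minor_eq_zero [IsDomain S] (h : ∀ i j, F.minor i j = 0) :
    ∃ w : Fin 3 → V m → S, LinearIndependent S w ∧ ∀ l, F.lin *ᵥ w l = 0 := by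
  have hker (i j : V m) : ∃ v ≠ 0, F.lin *ᵥ v = 0 ∧ v i = 0 ∧ v j = 0 := by
    obtain ⟨v, hv0, hv⟩ := exists_mulVec_eq_zero_iff.mpr (h i j)
    rw [borderedMatrix_mulVec] at hv
    refine ⟨v, hv0, _root_.funext fun l => congr_fun hv (Sum.inl l), ?_, ?_⟩
    · simpa using congr_fun hv (Sum.inr 0)
    · simpa using congr_fun hv (Sum.inr 1)
  obtain ⟨u, hu0, hu, -⟩ := hker (Sum.inr 0) (Sum.inr 0)
  obtain ⟨i, hi : u i ≠ 0⟩ := Function.ne_iff.mp hu0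
  obtain ⟨v, hv0, hv, hvi, -⟩ := hker i i
  obtain ⟨j, hj : v j ≠ 0⟩ := Function.ne_iff.mp hv0
  obtain ⟨w, hw0, hw, hwi, hwj⟩ := hker i j
  obtain ⟨l, hl : w l ≠ 0⟩ := Function.ne_iff.mp hw0
  refine ⟨![u, v, w], ?_, Fin.forall_fin_succ.mpr ⟨hu, Fin.forall_fin_two.mpr ⟨hv, hw⟩⟩⟩
  rw [Fintype.linearIndependent_iff]
  intro t ht
  simp only [Fin.sum_univ_three, cons_val_zero, cons_val_one, cons_val] at ht
  have h0 : t 0 = 0 := by simpa [hvi, hwi, hi] using congr_fun ht i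
  have h1 : t 1 = 0 := by simpa [h0, hwj, hj] using congr_fun ht j
  have h2 : t 2 = 0 := by simpa [h0, h1, hl] using congr_fun ht l
  exact Fin.forall_fin_succ.mpr ⟨h0, Fin.forall_fin_two.mpr ⟨h1, h2⟩⟩

end Minor

end FormSystem

namespace FormSystem

open Matrix

section MinorFunctional

variable {m : ℕ} {S : Type*} [CommRing S] (F : FormSystem m S)

/-- The values of the two quadrics at the points `p l`. -/
def quadricValues {ι : Type*} (p : ι → V m → S) : Matrix (Fin 2) ι S :=
  of fun a l => evalQuadratic (p l) (F.form (Sum.inr a))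

theorem sum_smul_evalQuadratic_mem_dual {ι : Type*} [Fintype ι] {p : ι → V m → S}
    (hp : ∀ l, F.lin *ᵥ p l = 0) {t : ι → S} (ht : F.quadricValues p *ᵥ t = 0) :
    ∑ l, t l • evalQuadratic (p l) ∈ F.dual := by
  have hlin (g : MvPolynomial (V m) S) (i : Fin m) (l : ι) :
      evalQuadratic (p l) (g * F.form (Sum.inl i)) = 0 := by
    have hform : eval (p l) (F.form (Sum.inl i)) = 0 := by
      rw [form_inl, toMvPolynomial_eval_eq_apply, hp, Pi.zero_apply]
    simp [evalQuadratic, hform, homogeneousComponent_add_mul_of_isHomogeneous g 1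
      (F.isHomogeneous_form_inl i)]
  have hquad (g : MvPolynomial (V m) S) (a : Fin 2) (l : ι) :
      evalQuadratic (p l) (g * F.form (Sum.inr a)) = coeff 0 g * F.quadricValues p a l := by
    have := homogeneousComponent_add_mul_of_isHomogeneous g 0 (F.isHomogeneous_form_inr a)
    rw [zero_add] at this
    simp [evalQuadratic, this, quadricValues,
      homogeneousComponent_eq_self (F.isHomogeneous_form_inr a)]
  refine ⟨fun f hf => ?_, fun f => ?_⟩
  · obtain ⟨g, rfl⟩ := Ideal.mem_span_range_iff_exists_fun.mp hf
    rw [map_sum]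
    refine Finset.sum_eq_zero fun i _ => ?_
    rcases i with i | a
    · simp [hlin]
    · have := congr_fun ht a
      simp only [mulVec, dotProduct, Pi.zero_apply] at this
      simp [hquad, mul_left_comm _ (coeff 0 (g _)), ← Finset.mul_sum, mul_comm (t _), this]
  · simp [evalQuadratic, homogeneousComponent_of_mem (homogeneousComponent_mem _ _)]

/-- The functional `Ψᵢⱼ` on quadrics: the determinant of the two quadrics of the system and of the
argument, restricted to the plane spanned by two vectors of minors that are annihilated by the
linear forms. -/
def minorFunctional (i j : V m) : MvPolynomial (V m) S →ₗ[S] S :=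
  planeFunctional (F.form (Sum.inr 0)) (F.form (Sum.inr 1)) (fun l => F.minor l j) (F.minor i)

/-- The three points at which `minorFunctional` evaluates quadrics. -/
def minorPoint (i j : V m) : Fin 3 → V m → S :=
  ![(fun l => F.minor l j) + F.minor i, fun l => F.minor l j, F.minor i]

theorem minorFunctional_eq_sum (i j : V m) : F.minorFunctional i j =
    ∑ l, (F.quadricValues (F.minorPoint i j) 0 ⨯₃ F.quadricValues (F.minorPoint i j) 1) l •
      evalQuadratic (F.minorPoint i j l) :=
  Fintype.linearCombination_apply S _ _

theorem lin_mulVec_minorPoint (i j : V m) (l : Fin 3) : F.lin *ᵥ F.minorPoint i j l = 0 := by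
  fin_cases l
  · simp [minorPoint, mulVec_add, lin_mulVec_minor_left, lin_mulVec_minor_right]
  · exact F.lin_mulVec_minor_left j
  · exact F.lin_mulVec_minor_right i

theorem minorFunctional_mem_dual (i j : V m) : F.minorFunctional i j ∈ F.dual := by
  rw [minorFunctional_eq_sum]
  refine F.sum_smul_evalQuadratic_mem_dual (F.lin_mulVec_minorPoint i j) ?_
  ext1 a
  fin_cases a
  · exact dot_self_cross _ _
  · exact dot_cross_self _ _

theorem minorFunctional_map {S' : Type*} [CommRing S'] (g : S →+* S') (i j : V m)
    (f : MvPolynomial (V m) S) :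
    (F.map g).minorFunctional i j (MvPolynomial.map g f) = g (F.minorFunctional i j f) := by
  have hleft : (fun l => (F.map g).minor l j) = g ∘ fun l => F.minor l j :=
    _root_.funext fun l => F.minor_map g l j
  have hright : (F.map g).minor i = g ∘ F.minor i := _root_.funext (F.minor_map g i)
  rw [minorFunctional, minorFunctional, form_map, form_map, hleft, hright, planeFunctional_map]

variable [IsDomain S]

theorem minor_pow_smul_minorFunctional_comm {i j : V m} (h : F.minor i j ≠ 0) (i' j' : V m) :
    F.minor i j ^ 3 • F.minorFunctional i' j' = F.minor i' j' ^ 3 • F.minorFunctional i j := by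
  set D := F.minor i j
  have hleft := F.minor_mul_apply_of_lin_mulVec_eq_zero (F.lin_mulVec_minor_left j') i j
  have hright := F.minor_mul_apply_of_lin_mulVec_eq_zero (F.lin_mulVec_minor_right i') i j
  have hscale := planeFunctional_smul_add_smul (F.form (Sum.inr 0)) (F.form (Sum.inr 1))
    (fun l => F.minor l j') (F.minor i') D 0 0 D
  have hsubst := planeFunctional_smul_add_smul (F.form (Sum.inr 0)) (F.form (Sum.inr 1))
    (fun l => F.minor l j) (F.minor i) (F.minor i j') (F.minor j j') (F.minor i' i) (F.minor i' j)
  rw [← hleft, ← hright, F.minor_mul_minor_sub] at hsubst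
  simp only [zero_smul, add_zero, zero_add] at hscale
  rw [hscale] at hsubst
  refine smul_right_injective _ (pow_ne_zero 3 h) ?_
  simp only [minorFunctional, smul_smul]
  convert hsubst using 2 <;> ring

theorem linearIndependent_evalQuadratic_minorPoint {i j : V m} (h : F.minor i j ≠ 0) :
    LinearIndependent S fun l => evalQuadratic (F.minorPoint i j l) := by
  have hpair : LinearIndependent S ![fun l => F.minor l j, F.minor i] := by
    refine LinearIndependent.pair_iff.mpr fun s t hst => ⟨?_, ?_⟩
    · simpa [minor_self, h] using congr_fun hst i
    · simpa [minor_self, h] using congr_fun hst j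
  have hpoint : F.minorPoint i j = vecCons
      (![fun l => F.minor l j, F.minor i] 0 + ![fun l => F.minor l j, F.minor i] 1)
      ![fun l => F.minor l j, F.minor i] := rfl
  rw [hpoint]
  exact linearIndependent_evalQuadratic hpair (by decide)

theorem exists_linearIndependent_evalQuadratic : ∃ p : Fin 3 → V m → S,
    (∀ l, F.lin *ᵥ p l = 0) ∧ LinearIndependent S fun l => evalQuadratic (p l) := by
  by_cases h : ∀ i j, F.minor i j = 0
  · obtain ⟨w, hw, hker⟩ := F.exists_linearIndependent_of_minor_eq_zero h
    have hind := linearIndependent_evalQuadratic hw (i := 0) (j := 1) (by decide)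
    exact ⟨w, hker, by
      simpa only [Function.comp_def, cons_val_succ] using hind.comp _ (Fin.succ_injective 3)⟩
  · push Not at h
    obtain ⟨i, j, hij⟩ := h
    exact ⟨_, F.lin_mulVec_minorPoint i j, F.linearIndependent_evalQuadratic_minorPoint hij⟩

theorem dual_ne_bot : F.dual ≠ ⊥ := by
  obtain ⟨p, hp, hind⟩ := F.exists_linearIndependent_evalQuadratic
  have hker : LinearMap.ker (F.quadricValues p).mulVecLin ≠ ⊥ := fun h => by
    simpa using card_le_of_injective S _ (LinearMap.ker_eq_bot.mp h)
  obtain ⟨t, ht, ht0⟩ := Submodule.exists_mem_ne_zero_of_ne_bot hker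
  refine Submodule.ne_bot_iff _ |>.mpr
    ⟨_, F.sum_smul_evalQuadratic_mem_dual hp ht, fun hsum => ht0 ?_⟩
  ext1 l
  exact Fintype.linearIndependent_iff.mp hind t hsum l

end MinorFunctional

section Field

variable {m : ℕ} {K : Type*} [Field K] (F : FormSystem m K)

theorem card_le_rank_dual_add_rank_quadricValues {r : ℕ} {p : Fin r → V m → K}
    (hp : ∀ l, F.lin *ᵥ p l = 0) (hind : LinearIndependent K fun l => evalQuadratic (p l)) :
    (r : Cardinal) ≤ Module.rank K F.dual + (F.quadricValues p).rank := by
  let M := (F.quadricValues p).mulVecLin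
  let Φ : LinearMap.ker M →ₗ[K] F.dual :=
    ((Fintype.linearCombination K fun l => evalQuadratic (p l)).comp
      (LinearMap.ker M).subtype).codRestrict F.dual fun t => by
        simpa [Fintype.linearCombination_apply] using F.sum_smul_evalQuadratic_mem_dual hp t.2
  have hΦ : Function.Injective Φ := fun t t' htt' =>
    Subtype.ext (hind.fintypeLinearCombination_injective (congrArg Subtype.val htt'))
  have hrank := LinearMap.finrank_range_add_finrank_ker M
  rw [Module.finrank_fintype_fun_eq_card, Fintype.card_fin] at hrank
  calc (r : Cardinal) = Module.rank K (LinearMap.ker M) + (F.quadricValues p).rank := by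
        rw [← Module.finrank_eq_rank, ← Nat.cast_add, add_comm, Nat.cast_inj]
        exact hrank.symm
    _ ≤ _ := add_le_add_left (LinearMap.rank_le_of_injective Φ hΦ) _

theorem exists_minor_ne_zero_of_rank_dual_le_one (h : Module.rank K F.dual ≤ 1) :
    ∃ i j, F.minor i j ≠ 0 ∧ F.minorFunctional i j ≠ 0 := by
  have hle {r : ℕ} {p : Fin r → V m → K} (hp : ∀ l, F.lin *ᵥ p l = 0)
      (hind : LinearIndependent K fun l => evalQuadratic (p l)) :
      r ≤ 1 + (F.quadricValues p).rank := by
    have := (F.card_le_rank_dual_add_rank_quadricValues hp hind).trans (add_le_add_left h _)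
    exact_mod_cast this
  by_contra! hcon
  by_cases hminor : ∀ i j, F.minor i j = 0
  · obtain ⟨w, hw, hker⟩ := F.exists_linearIndependent_of_minor_eq_zero hminor
    have hrank := hle (Fin.cons (by simp [mulVec_add, hker]) hker)
      (linearIndependent_evalQuadratic hw (i := 0) (j := 1) (by decide))
    have := (F.quadricValues (vecCons (w 0 + w 1) w)).rank_le_card_height
    rw [Fintype.card_fin] at this
    omega
  · push Not at hminor
    obtain ⟨i, j, hij⟩ := hminor
    have hind := F.linearIndependent_evalQuadratic_minorPoint hij
    have hrank := hle (F.lin_mulVec_minorPoint i j) hind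
    have hrows : LinearIndependent K (F.quadricValues (F.minorPoint i j)).row := by
      rw [linearIndependent_iff_card_le_finrank_span, Set.finrank, ← rank_eq_finrank_span_row,
        Fintype.card_fin]
      omega
    have hcross :
        F.quadricValues (F.minorPoint i j) 0 ⨯₃ F.quadricValues (F.minorPoint i j) 1 ≠ 0 :=
      crossProduct_ne_zero_iff_linearIndependent.mpr (by
        convert hrows
        ext a : 1
        fin_cases a <;> rfl)
    refine hcross ?_
    have := hcon i j hij
    rw [minorFunctional_eq_sum] at this
    ext1 l
    exact Fintype.linearIndependent_iff.mp hind _ this l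

end Field

end FormSystem

namespace FormSystem

open Matrix

section Primitive

variable {m : ℕ} {T : Type*} [CommRing T] (F : FormSystem m T)

theorem exists_not_dvd_minorFunctional {κ : Type*} [Field κ] (g : T →+* κ) {p : T} (hp : g p = 0)
    (h : Module.rank κ (F.map g).dual ≤ 1) :
    ∃ i j, ¬ p ∣ F.minor i j ∧ ∃ f, ¬ p ∣ F.minorFunctional i j f := by
  have hdvd {t : T} (ht : p ∣ t) : g t = 0 := by
    obtain ⟨c, rfl⟩ := ht
    rw [map_mul, hp, zero_mul]
  obtain ⟨i, j, hminor, hfun⟩ := (F.map g).exists_minor_ne_zero_of_rank_dual_le_one h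
  refine ⟨i, j, fun hp => hminor (by rw [minor_map, hdvd hp]), ?_⟩
  contrapose! hfun
  refine linearMap_ext fun d => LinearMap.ext_ring ?_
  simpa [hdvd (hfun _)] using F.minorFunctional_map g i j (monomial d 1)

variable [IsDomain T]

theorem exists_isPrimitive_mem_dual [WfDvdMonoid T] : ∃ ψ ∈ F.dual, IsPrimitive ψ :=
  exists_isPrimitive_mem F.dual_ne_bot fun _ ha _ => F.mem_dual_of_smul_mem_dual ha

-- Each functional `Ψᵢⱼ` is the cube of the minor times one common functional.
theorem exists_isPrimitive_minorFunctional_eq_smul [UniqueFactorizationMonoid T]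
    (hex : ∃ p : T, Prime p) (h : ∀ p, Prime p →
      ∃ i j, ¬ p ∣ F.minor i j ∧ ∃ f, ¬ p ∣ F.minorFunctional i j f) :
    ∃ ψ ∈ F.dual, IsPrimitive ψ ∧
      ∃ i j, F.minor i j ≠ 0 ∧ F.minorFunctional i j = F.minor i j ^ 3 • ψ := by
  obtain ⟨p₀, hp₀⟩ := hex
  obtain ⟨i, j, hij, -⟩ := h p₀ hp₀
  have hne : F.minor i j ≠ 0 := fun h0 => hij (h0 ▸ dvd_zero p₀)
  have hpow : F.minor i j ^ 3 ≠ 0 := pow_ne_zero 3 hne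
  have hcomm (i' j' : V m) (f : MvPolynomial (V m) T) :
      F.minor i j ^ 3 * F.minorFunctional i' j' f = F.minor i' j' ^ 3 * F.minorFunctional i j f :=
    LinearMap.congr_fun (F.minor_pow_smul_minorFunctional_comm hne i' j') f
  obtain ⟨ψ, hψ⟩ := exists_eq_smul_of_forall_dvd hpow fun f =>
    dvd_of_forall_prime_exists_dvd_mul hpow fun p hp => by
      obtain ⟨i', j', hij', -⟩ := h p hp
      exact ⟨_, fun hdvd => hij' (hp.dvd_of_dvd_pow hdvd), _, (hcomm i' j' f).symm⟩
  refine ⟨ψ, F.mem_dual_of_smul_mem_dual hpow (hψ ▸ F.minorFunctional_mem_dual i j),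
    fun p hp => ?_, i, j, hne, hψ⟩
  obtain ⟨i', j', -, f, hf⟩ := h p hp
  refine ⟨f, fun hdvd => hf ?_⟩
  have : F.minorFunctional i' j' f = F.minor i' j' ^ 3 * ψ f := by
    refine mul_left_cancel₀ hpow ?_
    rw [hcomm, hψ, LinearMap.smul_apply, smul_eq_mul, mul_left_comm]
  exact this ▸ hdvd.mul_left _

end Primitive

end FormSystem

section Degree

variable {σ R : Type*} [CommRing R]

theorem isHomogeneous_det {ι : Type*} [Fintype ι] [DecidableEq ι]
    {M : Matrix ι ι (MvPolynomial σ R)} {r : ι → ℕ} (h : ∀ i j, (M i j).IsHomogeneous (r i)) :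
    M.det.IsHomogeneous (∑ i, r i) := by
  rw [← Matrix.det_transpose, Matrix.det_apply']
  refine .sum _ _ _ fun p _ => ?_
  have hsign : ((p.sign : ℤ) : MvPolynomial σ R).IsHomogeneous 0 := by
    simpa using isHomogeneous_C σ ((p.sign : ℤ) : R)
  simpa using hsign.mul (.prod _ _ _ fun i _ => h i (p i))

theorem isHomogeneous_of_mul_left [IsDomain R] {p q : MvPolynomial σ R} {a b : ℕ}
    (hp : p.IsHomogeneous a) (hp0 : p ≠ 0) (h : (p * q).IsHomogeneous (b + a)) :
    q.IsHomogeneous b := by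
  have := homogeneousComponent_add_mul_of_isHomogeneous q b hp
  rw [mul_comm q, homogeneousComponent_eq_self h, mul_comm p] at this
  rw [mul_right_cancel₀ hp0 this]
  exact homogeneousComponent_isHomogeneous b q

namespace FormSystem

open Matrix

theorem isHomogeneous_socle {m : ℕ} (F : FormSystem m R) : F.socle.IsHomogeneous 2 := by
  have : F.socle.IsHomogeneous (∑ i, Sum.elim 0 1 i) := isHomogeneous_det fun i j => by
    rcases i with i | a
    · exact isHomogeneous_C _ _
    · exact toMvPolynomial_isHomogeneous _ _
  simpa using this

/-- All coefficients of the system are linear forms. -/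
structure HasLinearCoeffs {m : ℕ} (F : FormSystem m (MvPolynomial σ R)) : Prop where
  lin : ∀ i j, (F.lin i j).IsHomogeneous 1
  gram : ∀ a i j, (F.gram a i j).IsHomogeneous 1

variable {m : ℕ} {F : FormSystem m (MvPolynomial σ R)} (hF : F.HasLinearCoeffs)
include hF

theorem HasLinearCoeffs.isHomogeneous_minor (i j : V m) : (F.minor i j).IsHomogeneous m := by
  have hsingle (i j : V m) : ((Pi.single i 1 : V m → MvPolynomial σ R) j).IsHomogeneous 0 := by
    rw [Pi.single_apply]
    split_ifs
    exacts [isHomogeneous_one _ _, isHomogeneous_zero _ _ _]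
  have : (F.minor i j).IsHomogeneous (∑ i, Sum.elim 1 0 i) := isHomogeneous_det fun a b => by
    rcases a with a | a
    · exact hF.lin a b
    · fin_cases a
      exacts [hsingle i b, hsingle j b]
  simpa using this

theorem HasLinearCoeffs.isHomogeneous_eval_gram {t : ℕ} {p : V m → MvPolynomial σ R}
    (hp : ∀ l, (p l).IsHomogeneous t) (a : Fin 2) (i : V m) :
    (eval p ((F.gram a).toMvPolynomial i)).IsHomogeneous (1 + t) := by
  rw [toMvPolynomial_eval_eq_apply, mulVec, dotProduct]
  exact .sum _ _ _ fun l _ => (hF.gram a i l).mul (hp l)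

theorem HasLinearCoeffs.isHomogeneous_evalQuadratic_form_inr {t : ℕ} {p : V m → MvPolynomial σ R}
    (hp : ∀ l, (p l).IsHomogeneous t) (a : Fin 2) :
    (evalQuadratic p (F.form (Sum.inr a))).IsHomogeneous (1 + t + t) := by
  rw [evalQuadratic_apply_of_isHomogeneous p (F.isHomogeneous_form_inr a), form_inr, map_sum]
  refine .sum _ _ _ fun l _ => ?_
  rw [map_mul, eval_X]
  exact (hF.isHomogeneous_eval_gram hp a l).mul (hp l)

theorem HasLinearCoeffs.isHomogeneous_evalQuadratic_socle {t : ℕ} {p : V m → MvPolynomial σ R}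
    (hp : ∀ l, (p l).IsHomogeneous t) :
    (evalQuadratic p F.socle).IsHomogeneous (m + 2 * (1 + t)) := by
  rw [evalQuadratic_apply_of_isHomogeneous p F.isHomogeneous_socle, socle, RingHom.map_det]
  have : ((eval p).mapMatrix F.coeffMatrix).det.IsHomogeneous
      (∑ i, Sum.elim (fun _ => 1) (fun _ => 1 + t) i) := isHomogeneous_det fun i j => by
    rcases i with i | a
    · simpa [coeffMatrix] using hF.lin i j
    · exact hF.isHomogeneous_eval_gram hp a j
  simpa using this

theorem HasLinearCoeffs.isHomogeneous_minorFunctional_socle (i j : V m) :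
    (F.minorFunctional i j F.socle).IsHomogeneous (4 * m + 4 + m * 3) := by
  have hleft (l : V m) : (F.minor l j).IsHomogeneous m := hF.isHomogeneous_minor l j
  have hright (l : V m) : (F.minor i l).IsHomogeneous m := hF.isHomogeneous_minor i l
  have hpoint (l : Fin 3) (u : V m) : (F.minorPoint i j l u).IsHomogeneous m := by
    fin_cases l
    exacts [(hleft u).add (hright u), hleft u, hright u]
  have hvalue (a : Fin 2) (l : Fin 3) :=
    hF.isHomogeneous_evalQuadratic_form_inr (hpoint l) a
  rw [minorFunctional_eq_sum, LinearMap.sum_apply]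
  refine .sum _ _ _ fun l _ => ?_
  rw [show 4 * m + 4 + m * 3 = 1 + m + m + (1 + m + m) + (m + 2 * (1 + m)) by ring]
  refine .mul ?_ (hF.isHomogeneous_evalQuadratic_socle (hpoint l))
  rw [cross_apply]
  fin_cases l
  all_goals exact ((hvalue 0 _).mul (hvalue 1 _)).sub ((hvalue 0 _).mul (hvalue 1 _))

theorem HasLinearCoeffs.isHomogeneous_apply_socle [IsDomain R]
    {ψ : MvPolynomial (V m) (MvPolynomial σ R) →ₗ[MvPolynomial σ R] MvPolynomial σ R} {i j : V m}
    (hne : F.minor i j ≠ 0) (hψ : F.minorFunctional i j = F.minor i j ^ 3 • ψ) :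
    (ψ F.socle).IsHomogeneous (4 * m + 4) := by
  refine isHomogeneous_of_mul_left ((hF.isHomogeneous_minor i j).pow 3) (pow_ne_zero 3 hne) ?_
  rw [← smul_eq_mul, ← LinearMap.smul_apply, ← hψ]
  exact hF.isHomogeneous_minorFunctional_socle i j

end FormSystem

end Degree

section Rank

open Matrix

variable {T ι κ' : Type*} [CommRing T] [Fintype κ']

theorem rank_ge_of_map_det_ne_zero {K : Type*} [Field K] {g : T →+* K} {A : Matrix ι κ' T} {r : ℕ}
    {f : Fin r → ι} {e : Fin r → κ'} (h : g (A.submatrix f e).det ≠ 0) :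
    r ≤ (A.map g).rank := by
  have := rank_submatrix_le (A.map g) f e
  rwa [submatrix_map, rank_of_isUnit, Fintype.card_fin] at this
  rw [isUnit_iff_isUnit_det, isUnit_iff_ne_zero]
  rwa [RingHom.map_det] at h

theorem rank_map_algebraMap [Finite ι] (K : Type*) [Field K] [Algebra T K] [IsFractionRing T K]
    (A : Matrix ι κ' T) : (A.map (algebraMap T K)).rank = A.rank := by
  let f := LinearMap.pi fun i : ι => Algebra.linearMap T K ∘ₗ LinearMap.proj i
  have hspan : (Submodule.span T (Set.range A.col)).localized' K (nonZeroDivisors T) f =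
      Submodule.span K (Set.range (A.map (algebraMap T K)).col) := by
    rw [Submodule.localized'_span, ← Set.range_comp]
    rfl
  rw [rank_eq_finrank_span_cols, rank_eq_finrank_span_cols, ← hspan,
    IsFractionRing.finrank_right_eq T,
    IsLocalizedModule.finrank_eq (nonZeroDivisors T) ((Submodule.span T _).toLocalized' K _ f)
      le_rfl]

variable [Fintype ι] [IsDomain T]

theorem rank_transpose_of_isDomain (A : Matrix ι κ' T) : Aᵀ.rank = A.rank := by
  rw [← rank_map_algebraMap (FractionRing T) A, ← rank_map_algebraMap (FractionRing T) Aᵀ,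
    transpose_map, rank_transpose]

theorem rank_add_finrank_ker_vecMulLinear (A : Matrix ι κ' T) :
    A.rank + Module.finrank T (LinearMap.ker A.vecMulLinear) = Fintype.card ι := by
  have h : Aᵀ.mulVecLin = A.vecMulLinear := LinearMap.ext fun v => by simp
  rw [← rank_transpose_of_isDomain, rank, h, ← Module.finrank_fintype_fun_eq_card (R := T),
    ← A.vecMulLinear.quotKerEquivRange.finrank_eq, Submodule.finrank_quotient_add_finrank]

end Rank

namespace FormSystem

open Matrix

theorem map_ringHom_smul {σ R S : Type*} [CommRing R] [CommRing S] (g : R →+* S) (c : R)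
    (f : MvPolynomial σ R) : MvPolynomial.map g (c • f) = g c • MvPolynomial.map g f := by
  simp [smul_eq_C_mul]

variable {m : ℕ} {T ι κ' : Type*} [CommRing T] [Fintype ι] [Fintype κ']

/-- `ρ` presents the degree-two part of `T[x] ⧸ F.ideal` on the classes of the quadrics `r i`. -/
structure IsPresentation (F : FormSystem m T) (r : ι → MvPolynomial (V m) T) (ρ : Matrix ι κ' T) :
    Prop where
  isHomogeneous : ∀ i, (r i).IsHomogeneous 2
  exists_sub_mem : ∀ f : MvPolynomial (V m) T, f.IsHomogeneous 2 →
    ∃ t : ι → T, f - ∑ i, t i • r i ∈ F.ideal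
  sum_mem_iff : ∀ t : ι → T, ∑ i, t i • r i ∈ F.ideal ↔ t ∈ LinearMap.range ρ.mulVecLin

namespace IsPresentation

variable {F : FormSystem m T} {r : ι → MvPolynomial (V m) T} {ρ : Matrix ι κ' T}
  (hρ : F.IsPresentation r ρ)
include hρ

theorem exists_mem_dual_apply_eq {w : ι → T} (hw : w ᵥ* ρ = 0) :
    ∃ ψ ∈ F.dual, ∀ i, ψ (r i) = w i := by
  classical
  let I := F.ideal.restrictScalars T
  let π : (ι → T) →ₗ[T] MvPolynomial (V m) T ⧸ I := I.mkQ ∘ₗ Fintype.linearCombination T r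
  have hker (t : ι → T) (ht : t ∈ LinearMap.ker π) : w ⬝ᵥ t = 0 := by
    have ht : Fintype.linearCombination T r t ∈ I := by simpa [π] using ht
    obtain ⟨s, rfl⟩ := (hρ.sum_mem_iff t).mp ht
    rw [mulVecLin_apply, dotProduct_mulVec, hw, zero_dotProduct]
  have hrange (f : MvPolynomial (V m) T) :
      I.mkQ (homogeneousComponent 2 f) ∈ LinearMap.range π := by
    obtain ⟨t, ht⟩ := hρ.exists_sub_mem _ (homogeneousComponent_isHomogeneous 2 f)
    exact ⟨t, ((Submodule.Quotient.eq I).mpr ht).symm⟩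
  let ψ := (LinearMap.ker π).liftQ (dotProductBilin T T w) hker ∘ₗ
    π.quotKerEquivRange.symm.toLinearMap ∘ₗ (I.mkQ ∘ₗ homogeneousComponent 2).codRestrict _ hrange
  have hψ (f : MvPolynomial (V m) T) (t : ι → T) (h : I.mkQ (homogeneousComponent 2 f) = π t) :
      ψ f = w ⬝ᵥ t := by
    have : π.quotKerEquivRange.symm ⟨_, hrange f⟩ = (LinearMap.ker π).mkQ t := by
      rw [LinearEquiv.symm_apply_eq]
      exact Subtype.ext h
    simp only [ψ, LinearMap.comp_apply]
    exact (congrArg _ this).trans (Submodule.liftQ_apply _ _ _)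
  refine ⟨ψ, ⟨fun f hf => ?_, fun f => ?_⟩, fun i => ?_⟩
  · rw [hψ f 0, dotProduct_zero]
    simpa [I] using F.homogeneousComponent_mem_ideal hf 2
  · obtain ⟨t, ht⟩ := hrange f
    rw [hψ f t ht.symm, hψ _ t]
    rw [ht, homogeneousComponent_eq_self (homogeneousComponent_isHomogeneous 2 f)]
  · rw [hψ (r i) (Pi.single i 1), dotProduct_single_one]
    simp [π, homogeneousComponent_eq_self (hρ.isHomogeneous i)]

theorem vecMul_apply_eq_zero {K : Type*} [CommRing K] (g : T →+* K)
    {χ : MvPolynomial (V m) K →ₗ[K] K} (hχ : χ ∈ (F.map g).dual) :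
    (fun i => χ (map g (r i))) ᵥ* ρ.map g = 0 := by
  classical
  ext j
  have hmem : ∑ i, ρ i j • r i ∈ F.ideal :=
    (hρ.sum_mem_iff _).mpr ⟨Pi.single j 1, by rw [mulVecLin_apply, mulVec_single_one]; rfl⟩
  have := hχ.1 _ (by rw [ideal_map]; exact Ideal.mem_map_of_mem _ hmem)
  simpa [map_ringHom_smul, vecMul, dotProduct, mul_comm] using this

theorem eq_zero_of_apply_eq_zero {K : Type*} [CommRing K] (g : T →+* K)
    {χ : MvPolynomial (V m) K →ₗ[K] K} (hχ : χ ∈ (F.map g).dual)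
    (h : ∀ i, χ (map g (r i)) = 0) : χ = 0 := by
  refine linearMap_ext fun α => LinearMap.ext_ring ?_
  obtain ⟨t, ht⟩ := hρ.exists_sub_mem _ (homogeneousComponent_isHomogeneous 2 (monomial α 1))
  have := hχ.1 _ (by rw [ideal_map]; exact Ideal.mem_map_of_mem _ ht)
  rw [map_sub, ← homogeneousComponent_map, map_monomial, map_one, map_sub, hχ.2,
    sub_eq_zero] at this
  simpa [map_ringHom_smul, h] using this

theorem card_le_rank_add_one [IsDomain T] (h : Module.rank T F.dual ≤ 1) :
    Fintype.card ι ≤ ρ.rank + 1 := by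
  let ev : F.dual →ₗ[T] ι → T := LinearMap.pi fun i => LinearMap.applyₗ (r i) ∘ₗ F.dual.subtype
  have hker : LinearMap.ker ρ.vecMulLinear ≤ LinearMap.range ev := fun w hw => by
    obtain ⟨ψ, hψ, hw⟩ := hρ.exists_mem_dual_apply_eq hw
    exact ⟨⟨ψ, hψ⟩, _root_.funext hw⟩
  have hrank : Module.rank T (LinearMap.range ev) ≤ 1 := by
    simpa using (lift_rank_range_le ev).trans (Cardinal.lift_le.mpr h)
  rw [← rank_add_finrank_ker_vecMulLinear ρ]
  gcongr
  exact Module.finrank_le_of_rank_le (by exact_mod_cast (Submodule.rank_mono hker).trans hrank)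

theorem rank_dual_map_le_one {K : Type*} [Field K] (g : T →+* K)
    (h : Fintype.card ι ≤ (ρ.map g).rank + 1) : Module.rank K (F.map g).dual ≤ 1 := by
  let ev : (F.map g).dual →ₗ[K] ι → K :=
    LinearMap.pi fun i => LinearMap.applyₗ (MvPolynomial.map g (r i)) ∘ₗ (F.map g).dual.subtype
  have hker : LinearMap.range ev ≤ LinearMap.ker (ρ.map g).vecMulLinear := by
    rintro _ ⟨χ, rfl⟩
    exact hρ.vecMul_apply_eq_zero g χ.2
  have hev : Function.Injective ev :=
    LinearMap.ker_eq_bot.mp <| LinearMap.ker_eq_bot'.mpr fun χ h =>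
      Subtype.ext (hρ.eq_zero_of_apply_eq_zero g χ.2 fun i => congr_fun h i)
  have hrank : Module.rank K (LinearMap.ker (ρ.map g).vecMulLinear) ≤ 1 := by
    rw [← rank_add_finrank_ker_vecMulLinear (ρ.map g), add_le_add_iff_left] at h
    rw [← Module.finrank_eq_rank]
    exact_mod_cast h
  simpa using (lift_rank_range_of_injective ev hev).symm.trans_le
    (Cardinal.lift_le.mpr ((Submodule.rank_mono hker).trans hrank))

end IsPresentation

end FormSystem

theorem exists_submatrix_det_notMem_of_htGE_two {T : Type} [CommRing T] [IsNoetherianRing T]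
    {ι κ' : Type} {ρ : Matrix ι κ' T} {r : ℕ} (h : htGE (minorsIdeal ρ r) 2) {P : Ideal T}
    [P.IsPrime] (hP : P.IsPrincipal) :
    ∃ (f : Fin r → ι) (e : Fin r → κ'), (ρ.submatrix f e).det ∉ P := by
  by_contra! hdet
  have hle : minorsIdeal ρ r ≤ P := Ideal.span_le.mpr fun _ ⟨f, e, hfe⟩ => hfe ▸ hdet f e
  have hheight := h P inferInstance hle
  rw [IsLocalization.AtPrime.ringKrullDim_eq_height P] at hheight
  have : P.height ≤ 1 := Ideal.height_le_one_of_isPrincipal_of_mem_minimalPrimes P P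
    (by rw [Ideal.minimalPrimes_eq_subsingleton_self]; rfl)
  exact absurd ((WithBot.coe_le_coe.mp hheight).trans this) (by norm_num)

namespace FormSystem

theorem rank_dual_le_one {m : ℕ} {T : Type*} [CommRing T] [IsDomain T] [IsNoetherianRing T]
    [UniqueFactorizationMonoid T] {F : FormSystem m T} (h : (m + 2 : ℕ∞) ≤ F.ideal.height)
    (hT : ¬ IsField T) (htor : F.torsionIdeal ≠ ⊥) : Module.rank T F.dual ≤ 1 := by
  let ev : F.dual →ₗ[T] T := LinearMap.applyₗ F.socle ∘ₗ F.dual.subtype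
  have hev : Function.Injective ev := LinearMap.ker_eq_bot.mp <| LinearMap.ker_eq_bot'.mpr
    fun ψ h0 => Subtype.ext (eq_zero_of_apply_socle_eq_zero h hT htor ψ.2 h0)
  simpa using LinearMap.lift_rank_le_of_injective ev hev

theorem exists_torsionIdeal_eq_span {m : ℕ} {T : Type*} [CommRing T] [IsDomain T]
    [IsNoetherianRing T] [UniqueFactorizationMonoid T] {F : FormSystem m T}
    (h : (m + 2 : ℕ∞) ≤ F.ideal.height) (hT : ¬ IsField T) :
    ∃ s, F.torsionIdeal = Ideal.span {s} :=
  have ⟨ψ, hψ, hprim⟩ := F.exists_isPrimitive_mem_dual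
  ⟨ψ F.socle, torsionIdeal_eq_span h hT hψ hprim⟩

theorem IsPresentation.exists_not_dvd_minorFunctional {m : ℕ} {T : Type} [CommRing T] [IsDomain T]
    [IsNoetherianRing T] {ι κ' : Type} [Fintype ι] [Fintype κ'] {F : FormSystem m T}
    {r : ι → MvPolynomial (V m) T} {ρ : Matrix ι κ' T} (hρ : F.IsPresentation r ρ)
    (hrank : Module.rank T F.dual ≤ 1) (hht : htGE (minorsIdeal ρ ρ.rank) 2) {p : T}
    (hp : Prime p) : ∃ i j, ¬ p ∣ F.minor i j ∧ ∃ f, ¬ p ∣ F.minorFunctional i j f := by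
  let P := Ideal.span {p}
  have : P.IsPrime := (Ideal.span_singleton_prime hp.ne_zero).mpr hp
  obtain ⟨f, e, hdet⟩ := exists_submatrix_det_notMem_of_htGE_two hht (P := P) ⟨p, rfl⟩
  have hres : ρ.rank ≤ (ρ.map (algebraMap T P.ResidueField)).rank :=
    rank_ge_of_map_det_ne_zero (f := f) (e := e)
      (mt Ideal.algebraMap_residueField_eq_zero.mp hdet)
  exact F.exists_not_dvd_minorFunctional (algebraMap T P.ResidueField)
    (Ideal.algebraMap_residueField_eq_zero.mpr (Ideal.mem_span_singleton_self p))
    (hρ.rank_dual_map_le_one _ ((hρ.card_le_rank_add_one hrank).trans (by gcongr)))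

theorem HasLinearCoeffs.exists_torsionIdeal_eq_span {m n : ℕ} {k : Type} [Field k]
    {F : FormSystem m (MvPolynomial (Fin n) k)} (hF : F.HasLinearCoeffs)
    (h : (m + 2 : ℕ∞) ≤ F.ideal.height) (hT : ¬ IsField (MvPolynomial (Fin n) k)) {ι κ' : Type}
    [Fintype ι] [Fintype κ'] {r : ι → MvPolynomial (V m) (MvPolynomial (Fin n) k)}
    {ρ : Matrix ι κ' (MvPolynomial (Fin n) k)} (hρ : F.IsPresentation r ρ)
    (hht : htGE (minorsIdeal ρ ρ.rank) 2) :
    ∃ s, s.IsHomogeneous (4 * m + 4) ∧ F.torsionIdeal = Ideal.span {s} := by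
  by_cases htor : F.torsionIdeal = ⊥
  · exact ⟨0, isHomogeneous_zero _ _ _, by simp [htor]⟩
  obtain ⟨ψ, hψ, hprim, i, j, hne, heq⟩ := F.exists_isPrimitive_minorFunctional_eq_smul
    (exists_prime_of_not_isField hT) fun p hp =>
      hρ.exists_not_dvd_minorFunctional (rank_dual_le_one h hT htor) hht hp
  exact ⟨ψ F.socle, hF.isHomogeneous_apply_socle hne heq, torsionIdeal_eq_span h hT hψ hprim⟩

end FormSystem

section Rank

open Matrix TensorProduct

variable {R F : Type*} [CommRing R] [Field F]

theorem finrank_tensorProduct_add_rank [Algebra R F] {E : Type*} [AddCommGroup E] [Module R E]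
    {ι κ' : Type*} [Fintype ι] [Fintype κ'] {φ : Matrix ι κ' R} {π : (ι → R) →ₗ[R] E}
    (hsurj : Function.Surjective π) (hker : LinearMap.ker π = LinearMap.range φ.mulVecLin) :
    Module.finrank F (F ⊗[R] E) + (φ.map (algebraMap R F)).rank = Fintype.card ι := by
  classical
  have hexact : LinearMap.ker (π.baseChange F) = LinearMap.range (φ.mulVecLin.baseChange F) :=
    Submodule.ext (lTensor_exact F (LinearMap.exact_iff.mpr hker) hsurj)
  have htop : LinearMap.range (π.baseChange F) = ⊤ :=
    LinearMap.range_eq_top.mpr (LinearMap.lTensor_surjective F hsurj)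
  let b := Algebra.TensorProduct.basis F (Pi.basisFun R κ')
  let c := Algebra.TensorProduct.basis F (Pi.basisFun R ι)
  have hrank : (φ.map (algebraMap R F)).rank =
      Module.finrank F (LinearMap.range (φ.mulVecLin.baseChange F)) := by
    have : φ.map (algebraMap R F) = LinearMap.toMatrix b c (φ.mulVecLin.baseChange F) := by
      ext
      simp [b, c, LinearMap.toMatrix_apply]
    rw [this, rank_eq_finrank_range_toLin _ c b, toLin_toMatrix]
  have := (π.baseChange F).finrank_range_add_finrank_ker
  rwa [htop, finrank_top, hexact, ← hrank, Module.finrank_eq_card_basis c] at this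

theorem card_le_rank_add_card_of_span_eq_top {S E E' : Type*} [CommRing S] [Algebra R S]
    [Algebra S F] [Algebra R F] [IsScalarTower R S F] [AddCommGroup E] [Module R E]
    [AddCommGroup E'] [Module R E'] [Module S E'] [IsScalarTower R S E'] {f : E →ₗ[R] E'}
    (hf : IsBaseChange S f) {ι κ' : Type*} [Fintype ι] [Fintype κ'] {φ : Matrix ι κ' R}
    {π : (ι → R) →ₗ[R] E} (hsurj : Function.Surjective π)
    (hker : LinearMap.ker π = LinearMap.range φ.mulVecLin) {s : Finset E'}
    (hs : Submodule.span S (s : Set E') = ⊤) :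
    Fintype.card ι ≤ (φ.map (algebraMap R F)).rank + s.card := by
  classical
  rw [← finrank_tensorProduct_add_rank (F := F) hsurj hker, add_comm]
  gcongr
  have e := (hf.comp (TensorProduct.isBaseChange S E' F)).equiv
  have hspan : Submodule.span F (s.image (TensorProduct.mk S F E' 1) : Set (F ⊗[S] E')) = ⊤ := by
    rw [Finset.coe_image, ← Submodule.baseChange_span, hs, Submodule.baseChange_top]
  rw [e.finrank_eq, ← finrank_top F, ← hspan]
  exact (finrank_span_finset_le_card _).trans Finset.card_image_le

theorem rank_map_algebraMap_eq_of_isScalarTower (K : Type*) [Field K] [Algebra R K] [Algebra K F]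
    [Algebra R F] [IsScalarTower R K F] {ι κ' : Type*} [Finite ι] [Fintype κ']
    (φ : Matrix ι κ' R) : (φ.map (algebraMap R F)).rank = (φ.map (algebraMap R K)).rank := by
  have := Fintype.ofFinite ι
  let π := (LinearMap.range φ.mulVecLin).mkQ
  have hF := finrank_tensorProduct_add_rank (F := F) (π := π) (Submodule.mkQ_surjective _)
    (Submodule.ker_mkQ _)
  have hK := finrank_tensorProduct_add_rank (F := K) (π := π) (Submodule.mkQ_surjective _)
    (Submodule.ker_mkQ _)
  rw [← (AlgebraTensorModule.cancelBaseChange R K F F _).finrank_eq, Module.finrank_baseChange,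
    ← hK] at hF
  exact Nat.add_left_cancel hF

theorem rank_map_of_injective [IsDomain R] [Algebra R F] [FaithfulSMul R F] {ι κ' : Type*}
    [Finite ι] [Fintype κ'] {φ : Matrix ι κ' R} (hφ : Function.Injective φ.mulVecLin) :
    (φ.map (algebraMap R F)).rank = Fintype.card κ' := by
  let _ := FractionRing.liftAlgebra R F
  rw [rank_map_algebraMap_eq_of_isScalarTower (FractionRing R), rank_map_algebraMap, rank,
    LinearMap.finrank_range_of_inj hφ, Module.finrank_fintype_fun_eq_card]

end Rank

section Height

variable {R F σ τ : Type*} [CommRing R] [Field F]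

/-- The endomorphism of `F[z]` that sends the variables indexed by `t` to `0` and fixes the
others. -/
def killVars (F : Type*) [Field F] {τ : Type*} [DecidableEq τ] (t : Finset τ) :
    MvPolynomial τ F →ₐ[F] MvPolynomial τ F :=
  aeval fun i => if i ∈ t then 0 else X i

theorem killVars_X [DecidableEq τ] (t : Finset τ) (i : τ) :
    killVars F t (X i) = if i ∈ t then 0 else X i :=
  aeval_X _ _

theorem killVars_insert [DecidableEq τ] (a : τ) (t : Finset τ) :
    killVars F (insert a t) = (killVars F {a}).comp (killVars F t) := by
  refine MvPolynomial.algHom_ext fun i => ?_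
  by_cases hi : i ∈ t <;> simp [killVars_X, hi]

theorem height_ker_add_card_le_height_ker_killVars [IsNoetherianRing R] [Finite σ] [DecidableEq τ]
    {g : R →+* F} {θ : MvPolynomial σ R →+* MvPolynomial τ F} (hθ : ∀ r, θ (C r) = C (g r))
    {ℓ : τ → MvPolynomial σ R} {t : Finset τ} (hℓ : ∀ i ∈ t, θ (ℓ i) = X i) :
    (RingHom.ker g).height + t.card ≤
      (RingHom.ker ((killVars F t : MvPolynomial τ F →+* MvPolynomial τ F).comp θ)).height := by
  have hprime (s : Finset τ) := RingHom.ker_isPrime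
    ((killVars F s : MvPolynomial τ F →+* MvPolynomial τ F).comp θ)
  induction t using Finset.induction_on with
  | empty =>
    have := RingHom.ker_isPrime g
    have := hprime ∅
    have : (RingHom.ker (((killVars F ∅ : MvPolynomial τ F →ₐ[F] MvPolynomial τ F) :
        MvPolynomial τ F →+* MvPolynomial τ F).comp θ)).LiesOver (RingHom.ker g) :=
      ⟨by ext; simp [RingHom.mem_ker, hθ, algebraMap_eq]⟩
    simpa using le_self_add.trans
      (Ideal.height_eq_height_add_of_liesOver_of_hasGoingDown (RingHom.ker g) _).ge
  | insert a t ha ih =>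
    have := hprime t
    have := hprime (insert a t)
    rw [Finset.card_insert_of_notMem ha, Nat.cast_add, Nat.cast_one, ← add_assoc]
    refine (add_le_add_left (ih fun i hi => hℓ i (Finset.mem_insert_of_mem hi)) 1).trans
      (Ideal.height_add_one_le_of_lt_of_isPrime (SetLike.lt_iff_le_and_exists.mpr ⟨?_, ℓ a, ?_⟩))
    · intro f hf
      simp_all [RingHom.mem_ker, killVars_insert]
    · simp [RingHom.mem_ker, hℓ a (Finset.mem_insert_self a t), killVars_X, ha]

open Matrix in
theorem height_ker_add_card_le_height_ker_eval₂Hom [IsNoetherianRing R] [Fintype σ] [Finite τ]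
    (g : R →+* F) (b : Module.Basis τ F (σ → F)) {t : Finset τ} {a : τ → σ → R}
    (hb : ∀ i ∈ t, b i = fun j => g (a i j)) {y : σ → F} (hy : ∀ i ∈ t, b i ⬝ᵥ y = 0) :
    (RingHom.ker g).height + t.card ≤ (RingHom.ker (eval₂Hom g y)).height := by
  classical
  let lin : (σ → F) →ₗ[F] MvPolynomial τ F := b.constr F X
  let θ := eval₂Hom (C.comp g) fun j => lin (Pi.single j 1)
  have hθ (i) (hi : i ∈ t) : θ (∑ j, C (a i j) * X j) = X i := by
    have : θ (∑ j, C (a i j) * X j) = lin (b i) := by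
      rw [hb i hi, ← (Pi.basisFun F σ).sum_repr fun j => g (a i j)]
      simp [θ, smul_eq_C_mul]
    rw [this, b.constr_basis]
  refine (height_ker_add_card_le_height_ker_killVars (θ := θ) (fun r => by simp [θ])
    hθ).trans (Ideal.height_mono fun f hf => ?_)
  let ev : MvPolynomial τ F →ₐ[F] F := (aeval fun i => b i ⬝ᵥ y).comp (killVars F t)
  have hlin : ev.toLinearMap ∘ₗ lin = (dotProductBilin F F).flip y := b.ext fun i => by
    by_cases hi : i ∈ t <;> simp [ev, lin, b.constr_basis, killVars_X, hi, hy]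
  have hev : (ev : MvPolynomial τ F →+* F).comp θ = eval₂Hom g y := by
    refine MvPolynomial.ringHom_ext (fun r => by simp [θ]) fun j => ?_
    simpa [θ] using LinearMap.congr_fun hlin (Pi.single j 1)
  have hf' : killVars F t (θ f) = 0 := hf
  rw [RingHom.mem_ker, ← hev, RingHom.comp_apply]
  simp [ev, hf']

end Height

section Height

open Matrix

variable {R F σ κ' : Type*} [CommRing R] [IsNoetherianRing R] [Field F] [Fintype σ] [Fintype κ']

theorem height_ker_add_card_le_of_linearIndependent (g : R →+* F) {a : κ' → σ → R}
    (ha : LinearIndependent F fun i j => g (a i j)) {y : σ → F}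
    (hy : ∀ i, ∑ j, g (a i j) * y j = 0) :
    (RingHom.ker g).height + Fintype.card κ' ≤ (RingHom.ker (eval₂Hom g y)).height := by
  classical
  let b := Module.Basis.sumExtend ha
  have := FiniteDimensional.fintypeBasisIndex b
  have hb (i) : b (Sum.inl i) = fun j => g (a i j) := by
    simp only [b, Module.Basis.sumExtend, Module.Basis.reindex_apply,
      Module.Basis.extend_apply_self]
    rfl
  simpa using height_ker_add_card_le_height_ker_eval₂Hom g b (t := Finset.univ.map .inl)
    (a := Sum.elim a 0) (by simp [hb]) (by simpa [hb, dotProduct] using hy)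

theorem height_ker_add_rank_le (g : R →+* F) (φ : Matrix σ κ' R) {y : σ → F}
    (hy : ∀ i, ∑ j, g (φ j i) * y j = 0) :
    (RingHom.ker g).height + (φ.map g).rank ≤ (RingHom.ker (eval₂Hom g y)).height := by
  obtain ⟨μ, c, hc, hspan, hli⟩ := exists_linearIndependent' F (φ.map g).col
  have := Fintype.ofInjective c hc
  rw [rank_eq_finrank_span_cols, ← hspan, finrank_span_eq_card hli]
  exact height_ker_add_card_le_of_linearIndependent g (a := fun i j => φ j (c i)) hli fun i =>
    hy (c i)

end Height

section SatisfiesG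

open Matrix

/-- The Artin–Nagata type condition `G_s` for a module `E` of rank `e`:
`μ(E_p) ≤ dim R_p + e - 1` for every prime `p` with `1 ≤ dim R_p ≤ s - 1`. -/
def SatisfiesG (R E : Type*) [CommRing R] [AddCommGroup E] [Module R E] (e s : ℕ) : Prop :=
  ∀ (p : Ideal R) (_ : p.IsPrime) (c : ℕ),
    ringKrullDim (Localization.AtPrime p) = (c : WithBot ℕ∞) → 1 ≤ c → c ≤ s - 1 →
    ∃ t : Finset (LocalizedModule p.primeCompl E), t.card ≤ c + e - 1 ∧
      Submodule.span (Localization.AtPrime p)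
        (t : Set (LocalizedModule p.primeCompl E)) = ⊤

variable {R F E σ κ' : Type*} [CommRing R] [Field F] [Algebra R F] [AddCommGroup E] [Module R E]
  [Fintype σ] [Fintype κ'] {φ : Matrix σ κ' R} {π : (σ → R) →ₗ[R] E}

theorem card_le_rank_add_card_of_span_localizedModule_eq_top (hsurj : Function.Surjective π)
    (hker : LinearMap.ker π = LinearMap.range φ.mulVecLin) {p : Ideal R} [p.IsPrime]
    (hp : RingHom.ker (algebraMap R F) = p) {s : Finset (LocalizedModule p.primeCompl E)}
    (hs : Submodule.span (Localization.AtPrime p)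
      (s : Set (LocalizedModule p.primeCompl E)) = ⊤) :
    Fintype.card σ ≤ (φ.map (algebraMap R F)).rank + s.card := by
  have hunit (x : p.primeCompl) : IsUnit (algebraMap R F x) :=
    isUnit_iff_ne_zero.mpr fun h => x.2 (hp.le h)
  let _ : Algebra (Localization.AtPrime p) F := (IsLocalization.lift hunit).toAlgebra
  have : IsScalarTower R (Localization.AtPrime p) F :=
    .of_algebraMap_eq fun x => (IsLocalization.lift_eq hunit x).symm
  exact card_le_rank_add_card_of_span_eq_top (IsLocalizedModule.isBaseChange p.primeCompl
    (Localization.AtPrime p) (LocalizedModule.mkLinearMap p.primeCompl E)) hsurj hker hs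

theorem SatisfiesG.card_le_height_ker_add_rank [IsDomain R] [IsNoetherianRing R] {e : ℕ}
    (hG : SatisfiesG R E e (Fintype.card κ')) (hcard : Fintype.card σ = Fintype.card κ' + e)
    (hinj : Function.Injective φ.mulVecLin) (hsurj : Function.Surjective π)
    (hker : LinearMap.ker π = LinearMap.range φ.mulVecLin) :
    (Fintype.card κ' : ℕ∞) ≤
      (RingHom.ker (algebraMap R F)).height + (φ.map (algebraMap R F)).rank := by
  let p := RingHom.ker (algebraMap R F)
  have hp : p.IsPrime := RingHom.ker_isPrime _
  rcases le_or_gt (Fintype.card κ' : ℕ∞) p.height with hle | hlt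
  · exact hle.trans le_self_add
  obtain ⟨c, hc⟩ := ENat.ne_top_iff_exists.mp (ne_top_of_lt hlt)
  have hcd : c < Fintype.card κ' := by exact_mod_cast hc ▸ hlt
  rcases c.eq_zero_or_pos with rfl | hpos
  · have hbot : p = ⊥ := Ideal.height_eq_zero_iff_eq_bot.mp hc.symm
    have : FaithfulSMul R F :=
      (faithfulSMul_iff_algebraMap_injective R F).mpr
        ((RingHom.injective_iff_ker_eq_bot _).mpr hbot)
    rw [rank_map_of_injective hinj]
    exact le_add_self
  · obtain ⟨t, ht, hspan⟩ := hG p hp c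
      (by rw [IsLocalization.AtPrime.ringKrullDim_eq_height p, ← hc]; rfl) hpos (by omega)
    have := card_le_rank_add_card_of_span_localizedModule_eq_top hsurj hker rfl hspan
    change _ ≤ p.height + _
    rw [← hc]
    exact_mod_cast (show Fintype.card κ' ≤ c + (φ.map (algebraMap R F)).rank by omega)

theorem SatisfiesG.card_le_height_span [IsDomain R] [IsNoetherianRing R] {e : ℕ}
    (hG : SatisfiesG R E e (Fintype.card κ')) (hcard : Fintype.card σ = Fintype.card κ' + e)
    (hinj : Function.Injective φ.mulVecLin) (hsurj : Function.Surjective π)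
    (hker : LinearMap.ker π = LinearMap.range φ.mulVecLin) :
    (Fintype.card κ' : ℕ∞) ≤ (Ideal.span (Set.range fun i : κ' =>
      (∑ j, C (φ j i) * X j : MvPolynomial σ R))).height := by
  rw [Ideal.height_eq_inf_minimalPrimes]
  refine le_iInf₂ fun P hP => ?_
  have : P.IsPrime := hP.1.1
  let y (j : σ) : P.ResidueField := algebraMap (MvPolynomial σ R) P.ResidueField (X j)
  let g : R →+* P.ResidueField := algebraMap R P.ResidueField
  have hy : eval₂Hom g y = algebraMap (MvPolynomial σ R) P.ResidueField :=
    MvPolynomial.ringHom_ext (fun a => by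
      simp [g, IsScalarTower.algebraMap_apply R (MvPolynomial σ R) P.ResidueField, algebraMap_eq])
      fun j => by simp [y]
  have hzero (i : κ') : ∑ j, g (φ j i) * y j = 0 := by
    have := Ideal.algebraMap_residueField_eq_zero.mpr (hP.1.2 (Ideal.subset_span ⟨i, rfl⟩))
    simpa [← hy] using this
  calc (Fintype.card κ' : ℕ∞) ≤ (RingHom.ker g).height + (φ.map g).rank :=
        hG.card_le_height_ker_add_rank hcard hinj hsurj hker
    _ ≤ (RingHom.ker (eval₂Hom g y)).height := height_ker_add_rank_le g φ hzero
    _ = P.height := by rw [hy, Ideal.ker_algebraMap_residueField]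

end SatisfiesG

section Homogeneous

open Matrix

variable {R S σ τ M M' : Type*} [CommRing R]

theorem isWeightedHomogeneous_ringHom_apply [CommRing S] [AddCommMonoid M] [AddCommMonoid M']
    {F : Type*} [FunLike F (MvPolynomial σ R) (MvPolynomial τ S)]
    [RingHomClass F (MvPolynomial σ R) (MvPolynomial τ S)] {w : σ → M} {w' : τ → M'} (θ : M →+ M')
    (g : F)
    (hC : ∀ a, (g (C a)).IsWeightedHomogeneous w' 0)
    (hX : ∀ i, (g (X i)).IsWeightedHomogeneous w' (θ (w i))) {f : MvPolynomial σ R} {n : M}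
    (hf : f.IsWeightedHomogeneous w n) : (g f).IsWeightedHomogeneous w' (θ n) := by
  rw [f.as_sum, map_sum]
  refine IsWeightedHomogeneous.sum _ _ _ fun α hα => ?_
  have hn : θ n = 0 + ∑ i ∈ α.support, α i • θ (w i) := by
    simp [← hf (mem_support_iff.mp hα), Finsupp.weight_apply, Finsupp.sum]
  rw [monomial_eq, map_mul, Finsupp.prod, map_prod, hn]
  refine (hC _).mul (IsWeightedHomogeneous.prod _ _ _ fun i _ => ?_)
  rw [map_pow]
  exact (hX i).pow _

variable [Fintype σ]

theorem exists_isHomogeneous_eq_sum_mul_X {f : MvPolynomial σ R} {n : ℕ}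
    (hf : f.IsHomogeneous (n + 1)) :
    ∃ g : σ → MvPolynomial σ R, (∀ i, (g i).IsHomogeneous n) ∧ f = ∑ i, g i * X i := by
  have hmem : f ∈ Ideal.span (Set.range X) := by
    rw [← idealOfVars, ← pow_one (idealOfVars σ R), mem_pow_idealOfVars_iff']
    exact fun α hα => hf.coeff_eq_zero (by omega)
  obtain ⟨c, rfl⟩ := Ideal.mem_span_range_iff_exists_fun.mp hmem
  refine ⟨fun i => homogeneousComponent n (c i),
    fun i => homogeneousComponent_isHomogeneous _ _, ?_⟩
  rw [← homogeneousComponent_eq_self hf, map_sum]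
  exact Finset.sum_congr rfl fun i _ =>
    homogeneousComponent_add_mul_of_isHomogeneous _ _ (isHomogeneous_X _ i)

theorem exists_eq_toMvPolynomial {f : τ → MvPolynomial σ R} (hf : ∀ i, (f i).IsHomogeneous 1) :
    ∃ A : Matrix τ σ R, f = A.toMvPolynomial := by
  choose g hg hfg using fun i => exists_isHomogeneous_eq_sum_mul_X (hf i)
  refine ⟨of fun i j => coeff 0 (g i j), _root_.funext fun i => ?_⟩
  rw [hfg, toMvPolynomial_eq_sum_C_mul_X]
  exact Finset.sum_congr rfl fun j _ =>
    congrArg (· * X j) (totalDegree_eq_zero_iff_eq_C.mp (Nat.le_zero.mp (hg i j).totalDegree_le))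

theorem exists_eq_sum_toMvPolynomial_mul_X {f : MvPolynomial σ R} (hf : f.IsHomogeneous 2) :
    ∃ A : Matrix σ σ R, f = ∑ i, A.toMvPolynomial i * X i := by
  obtain ⟨g, hg, rfl⟩ := exists_isHomogeneous_eq_sum_mul_X hf
  obtain ⟨A, rfl⟩ := exists_eq_toMvPolynomial hg
  exact ⟨A, rfl⟩

end Homogeneous

namespace FormSystem

open Matrix

variable {m : ℕ} {R τ : Type*} [CommRing R]

theorem exists_form_eq {f : V m → MvPolynomial (V m) R}
    (hlin : ∀ i, (f (Sum.inl i)).IsHomogeneous 1) (hquad : ∀ a, (f (Sum.inr a)).IsHomogeneous 2) :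
    ∃ F : FormSystem m R, F.form = f := by
  obtain ⟨A, hA⟩ := exists_eq_toMvPolynomial hlin
  choose Q hQ using fun a => exists_eq_sum_toMvPolynomial_mul_X (hquad a)
  refine ⟨⟨A, Q⟩, _root_.funext fun i => ?_⟩
  rcases i with i | a
  · rw [form_inl, ← hA]
  · rw [form_inr, hQ]

variable [Fintype τ] (G : τ → FormSystem m R)

/-- The generic linear combination `∑ j, y_j G_j` of a family of systems of forms. -/
@[simps] def generic : FormSystem m (MvPolynomial τ R) where
  lin := ∑ j, (X j : MvPolynomial τ R) • (G j).lin.map C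
  gram a := ∑ j, (X j : MvPolynomial τ R) • ((G j).gram a).map C

theorem hasLinearCoeffs_generic : (generic G).HasLinearCoeffs := by
  have h (c : τ → R) : (∑ j, X j * C (c j) : MvPolynomial τ R).IsHomogeneous 1 :=
    .sum _ _ _ fun j _ => (isHomogeneous_X R j).mul (isHomogeneous_C _ _)
  exact ⟨fun i j => by simpa [Matrix.sum_apply] using h _,
    fun a i j => by simpa [Matrix.sum_apply] using h _⟩

theorem coeffMatrix_generic (i l : V m) : (generic G).coeffMatrix i l =
    ∑ j, MvPolynomial.map C ((G j).coeffMatrix i l) * C (X j) := by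
  rcases i with i | a
  · simp [coeffMatrix, Matrix.sum_apply, mul_comm]
  · simp only [coeffMatrix, fromRows_apply_inr, of_apply, toMvPolynomial_eq_sum_C_mul_X,
      generic_gram, Matrix.sum_apply, Matrix.smul_apply, Matrix.map_apply, smul_eq_mul, map_sum,
      map_mul, map_C, map_X, Finset.sum_mul]
    rw [Finset.sum_comm]
    exact Finset.sum_congr rfl fun j _ => Finset.sum_congr rfl fun l _ => by ring

theorem form_generic (i : V m) :
    (generic G).form i = ∑ j, MvPolynomial.map C ((G j).form i) * C (X j) := by
  simp only [form, mulVec, dotProduct, coeffMatrix_generic, map_sum, map_mul, map_X,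
    Finset.sum_mul]
  rw [Finset.sum_comm]
  exact Finset.sum_congr rfl fun j _ => Finset.sum_congr rfl fun l _ => by ring

end FormSystem

section SplitVars

variable {k : Type} [Field k] {m n : ℕ}

variable (k m n) in
/-- The isomorphism `k[x_1,…,x_{m+2},y_1,…,y_n] ≃ k[y][x]`, under which the bigraded ring `B`
becomes a ring of polynomials over `T = k[y]` in variables indexed by `V m`. -/
def splitVars : B k (m + 2) n ≃ₐ[k] MvPolynomial (V m) (T k n) :=
  (renameEquiv k (finSumFinEquiv.symm.sumCongr (Equiv.refl _))).trans (sumAlgEquiv k (V m) (Fin n))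

theorem splitVars_X_inl (i : Fin (m + 2)) :
    splitVars k m n (X (Sum.inl i)) = X (finSumFinEquiv.symm i) := by
  simp [splitVars]

theorem splitVars_X_inr (j : Fin n) : splitVars k m n (X (Sum.inr j)) = C (X j) := by
  simp [splitVars]

theorem splitVars_rename_inr (t : T k n) : splitVars k m n (rename Sum.inr t) = C t := by
  have : (splitVars k m n).toAlgHom.comp (rename Sum.inr) =
      IsScalarTower.toAlgHom k (T k n) (MvPolynomial (V m) (T k n)) := by
    ext; simp [splitVars]
  exact DFunLike.congr_fun this t

theorem splitVars_rename_inl (f : MvPolynomial (Fin (m + 2)) k) :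
    splitVars k m n (rename Sum.inl f) =
      MvPolynomial.map C (rename finSumFinEquiv.symm f) := by
  have : (splitVars k m n).toAlgHom.comp (rename Sum.inl) =
      (mapAlgHom (Algebra.ofId k (T k n))).comp (rename finSumFinEquiv.symm) := by
    ext; simp [splitVars]
  exact DFunLike.congr_fun this f

theorem isWeightedHomogeneous_wx_rename_inr (d : ℕ) (t : T k n) :
    (rename Sum.inr t : B k d n).IsWeightedHomogeneous (wx d n) 0 :=
  isWeightedHomogeneous_ringHom_apply (w := 0) (n := 0) (0 : ℕ →+ ℕ)
    (rename Sum.inr : T k n →ₐ[k] B k d n)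
    (fun a => by simpa using isWeightedHomogeneous_C (R := k) (wx d n) a)
    (fun j => by simpa [wx] using isWeightedHomogeneous_X k (wx d n) (Sum.inr j))
    fun α _ => by simp [Finsupp.weight_apply]

theorem isWeightedHomogeneous_bwt_rename_inr (d : ℕ) {t : T k n} {j : ℕ} (ht : t.IsHomogeneous j) :
    (rename Sum.inr t : B k d n).IsWeightedHomogeneous (bwt d n) (0, j) :=
  isWeightedHomogeneous_ringHom_apply (AddMonoidHom.inr ℕ ℕ) (rename Sum.inr : T k n →ₐ[k] B k d n)
    (fun a => by simpa using isWeightedHomogeneous_C (R := k) (bwt d n) a)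
    (fun j => by simpa [bwt] using isWeightedHomogeneous_X k (bwt d n) (Sum.inr j)) ht

theorem isHomogeneous_splitVars {g : B k (m + 2) n} {j : ℕ}
    (hg : g.IsWeightedHomogeneous (wx (m + 2) n) j) : (splitVars k m n g).IsHomogeneous j := by
  refine isWeightedHomogeneous_ringHom_apply (w' := 1) (AddMonoidHom.id ℕ) (splitVars k m n)
    (fun a => ?_) (fun i => ?_) hg
  · simpa [splitVars, IsHomogeneous] using isHomogeneous_C (V m) (C a : T k n)
  · rcases i with i | j
    · rw [splitVars_X_inl]
      exact isHomogeneous_X _ _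
    · rw [splitVars_X_inr]
      exact isHomogeneous_C _ _

theorem isWeightedHomogeneous_splitVars_symm {f : MvPolynomial (V m) (T k n)} {j : ℕ}
    (hf : f.IsHomogeneous j) :
    ((splitVars k m n).symm f).IsWeightedHomogeneous (wx (m + 2) n) j := by
  refine isWeightedHomogeneous_ringHom_apply (w := 1) (AddMonoidHom.id ℕ) (splitVars k m n).symm
    (fun t => ?_) (fun i => ?_) hf
  · simpa [← splitVars_rename_inr] using isWeightedHomogeneous_wx_rename_inr (m + 2) t
  · obtain ⟨i, rfl⟩ := finSumFinEquiv.symm.surjective i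
    simpa [← splitVars_X_inl, wx] using isWeightedHomogeneous_X k (wx (m + 2) n) (Sum.inl i)

theorem mem_SxDeg {d : ℕ} {I : Ideal (B k d n)} {j : ℕ} {x : B k d n ⧸ I} :
    x ∈ SxDeg k d n I j ↔
      ∃ g : B k d n, g.IsWeightedHomogeneous (wx d n) j ∧ Ideal.Quotient.mk I g = x := by
  refine ⟨fun hx => ?_, fun ⟨g, hg, hgx⟩ => Submodule.subset_span ⟨g, hg, hgx⟩⟩
  induction hx using Submodule.span_induction with
  | mem _ hx => exact hx
  | zero => exact ⟨0, isWeightedHomogeneous_zero _ _ _, map_zero _⟩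
  | add x y _ _ hx hy =>
    obtain ⟨g, hg, rfl⟩ := hx
    obtain ⟨h, hh, rfl⟩ := hy
    exact ⟨g + h, hg.add hh, map_add _ _ _⟩
  | smul t x _ hx =>
    obtain ⟨g, hg, rfl⟩ := hx
    exact ⟨rename Sum.inr t * g, zero_add j ▸ (isWeightedHomogeneous_wx_rename_inr d t).mul hg, rfl⟩

theorem mk_mem_H0 {d : ℕ} {I : Ideal (B k d n)} {b : B k d n} :
    Ideal.Quotient.mk I b ∈ H0 k d n I ↔ ∃ N, ∀ f ∈ mxB k d n ^ N, f * b ∈ I := by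
  have hmono : Monotone fun N => Submodule.torsionBySet (B k d n) (B k d n ⧸ I)
      ((mxB k d n ^ N : Ideal (B k d n)) : Set (B k d n)) := fun N M h =>
    Submodule.torsionBySet_le_torsionBySet_of_subset (Ideal.pow_le_pow_right h)
  rw [H0, Submodule.mem_iSup_of_directed _ hmono.directed_le]
  simp only [Submodule.mem_torsionBySet_iff, Subtype.forall, SetLike.mem_coe,
    ← Ideal.Quotient.eq_zero_iff_mem]
  rfl

theorem map_splitVars_mxB :
    (mxB k (m + 2) n).map (splitVars k m n) = idealOfVars (V m) (T k n) := by
  rw [mxB, Ideal.map_span, ← Set.range_comp, idealOfVars,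
    ← finSumFinEquiv.symm.surjective.range_comp]
  exact congrArg _ (congrArg _ (_root_.funext splitVars_X_inl))

theorem mk_mem_H0_iff_splitVars_mem_saturation {I : Ideal (B k (m + 2) n)} {b : B k (m + 2) n} :
    Ideal.Quotient.mk I b ∈ H0 k (m + 2) n I ↔
      splitVars k m n b ∈ saturation (I.map (splitVars k m n)) := by
  have hmem (J : Ideal (B k (m + 2) n)) (f : B k (m + 2) n) :
      splitVars k m n f ∈ J.map (splitVars k m n) ↔ f ∈ J := by
    rw [← Ideal.mem_comap, Ideal.comap_map_of_bijective _ (splitVars k m n).bijective]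
  simp only [mk_mem_H0, mem_saturation_iff_exists_pow, ← map_splitVars_mxB, ← Ideal.map_pow,
    (splitVars k m n).surjective.forall, hmem, ← map_mul]

end SplitVars

section Bigraded

variable {k : Type} [Field k] {m n : ℕ} {I : Ideal (B k (m + 2) n)}

theorem mem_AcompZ_zero {x : B k (m + 2) n ⧸ I} :
    x ∈ AcompZ k (m + 2) n I 0 ↔
      ∃ t : T k n, C t ∈ saturation (I.map (splitVars k m n)) ∧
        Ideal.Quotient.mk I (rename Sum.inr t) = x := by
  rw [AcompZ, SxDegZ, if_pos le_rfl, Int.toNat_zero, Submodule.mem_inf,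
    Submodule.restrictScalars_mem, mem_SxDeg]
  constructor
  · rintro ⟨hx, g, hg, rfl⟩
    have hg : g = rename Sum.inr (coeff 0 (splitVars k m n g)) := (splitVars k m n).injective <| by
      rw [splitVars_rename_inr]
      exact totalDegree_eq_zero_iff_eq_C.mp
        (Nat.le_zero.mp (isHomogeneous_splitVars hg).totalDegree_le)
    refine ⟨_, ?_, by rw [← hg]⟩
    rwa [← splitVars_rename_inr, ← hg, ← mk_mem_H0_iff_splitVars_mem_saturation]
  · rintro ⟨t, ht, rfl⟩
    exact ⟨by rwa [mk_mem_H0_iff_splitVars_mem_saturation, splitVars_rename_inr],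
      _, isWeightedHomogeneous_wx_rename_inr _ t, rfl⟩

variable {F : FormSystem m (T k n)} (hI : I.map (splitVars k m n) = F.ideal)
include hI

theorem height_formSystem_ideal : F.ideal.height = I.height :=
  hI ▸ RingEquiv.height_map (splitVars k m n).toRingEquiv I

theorem AcompZ_zero_eq_span {s : T k n} (hs : F.torsionIdeal = Ideal.span {s}) :
    AcompZ k (m + 2) n I 0 =
      Submodule.span (T k n) {Ideal.Quotient.mk I (rename Sum.inr s)} := by
  ext x
  have hmem (t : T k n) : C t ∈ saturation F.ideal ↔ ∃ a, a * s = t := by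
    rw [← Ideal.mem_span_singleton', ← hs]
    rfl
  simp only [mem_AcompZ_zero, hI, hmem, Submodule.mem_span_singleton, exists_exists_eq_and,
    map_mul]
  rfl

theorem exists_isPresentation {ι κ' : Type*} [Fintype ι] [Fintype κ'] {ρ : Matrix ι κ' (T k n)}
    {π : (ι → T k n) →ₗ[T k n] SxDeg k (m + 2) n I 2} (hsurj : Function.Surjective π)
    (hker : LinearMap.ker π = LinearMap.range ρ.mulVecLin) :
    ∃ r : ι → MvPolynomial (V m) (T k n), F.IsPresentation r ρ := by
  classical
  choose g hg hgπ using fun i => mem_SxDeg.mp (π (Pi.single i 1)).2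
  have hπ (t : ι → T k n) : (π t : B k (m + 2) n ⧸ I) =
      Ideal.Quotient.mk I (∑ i, rename Sum.inr (t i) * g i) := by
    conv_lhs => rw [show t = ∑ i, t i • Pi.single i 1 from pi_eq_sum_univ' t]
    rw [map_sum, map_sum, AddSubmonoidClass.coe_finsetSum]
    refine Finset.sum_congr rfl fun i _ => ?_
    rw [map_smul, Submodule.coe_smul, ← hgπ, map_mul]
    rfl
  have hmem (b : B k (m + 2) n) : splitVars k m n b ∈ F.ideal ↔ Ideal.Quotient.mk I b = 0 := by
    rw [← hI, ← Ideal.mem_comap, Ideal.comap_map_of_bijective _ (splitVars k m n).bijective,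
      Ideal.Quotient.eq_zero_iff_mem]
  have hsum (t : ι → T k n) : ∑ i, t i • splitVars k m n (g i) =
      splitVars k m n (∑ i, rename Sum.inr (t i) * g i) := by
    simp [splitVars_rename_inr, smul_eq_C_mul]
  refine ⟨fun i => splitVars k m n (g i), fun i => isHomogeneous_splitVars (hg i), fun f hf => ?_,
    fun t => ?_⟩
  · obtain ⟨t, ht⟩ := hsurj ⟨Ideal.Quotient.mk I ((splitVars k m n).symm f),
      mem_SxDeg.mpr ⟨_, isWeightedHomogeneous_splitVars_symm hf, rfl⟩⟩
    refine ⟨t, ?_⟩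
    rw [← (splitVars k m n).apply_symm_apply f, hsum, ← map_sub, hmem, map_sub, ← hπ, ht, sub_self]
  · rw [hsum, hmem, ← hπ, ZeroMemClass.coe_eq_zero, ← LinearMap.mem_ker, hker]

end Bigraded

section SymmetricAlgebra

variable {k : Type} [Field k]

theorem SatisfiesG.card_le_height_span_range {σ τ E κ' : Type*} [Fintype σ] [Finite τ] [Fintype κ']
    [AddCommGroup E] [Module (MvPolynomial τ k) E] {φ : Matrix σ κ' (MvPolynomial τ k)}
    {π : (σ → MvPolynomial τ k) →ₗ[MvPolynomial τ k] E} {e : ℕ}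
    (hG : SatisfiesG (MvPolynomial τ k) E e (Fintype.card κ'))
    (hcard : Fintype.card σ = Fintype.card κ' + e) (hinj : Function.Injective φ.mulVecLin)
    (hsurj : Function.Surjective π) (hker : LinearMap.ker π = LinearMap.range φ.mulVecLin) :
    (Fintype.card κ' : ℕ∞) ≤ (Ideal.span (Set.range fun i =>
      (∑ j, rename Sum.inl (φ j i) * X (Sum.inr j) : MvPolynomial (τ ⊕ σ) k))).height := by
  obtain ⟨Θ, hΘ, hX⟩ : ∃ Θ : MvPolynomial (τ ⊕ σ) k ≃ₐ[k] MvPolynomial σ (MvPolynomial τ k),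
      (∀ f, Θ (rename Sum.inl f) = C f) ∧ ∀ j, Θ (X (Sum.inr j)) = X j := by
    let Θ := (renameEquiv k (Equiv.sumComm τ σ)).trans (sumAlgEquiv k σ τ)
    have hΘ : Θ.toAlgHom.comp (rename Sum.inl) =
        IsScalarTower.toAlgHom k (MvPolynomial τ k) (MvPolynomial σ (MvPolynomial τ k)) := by
      ext; simp [Θ]
    exact ⟨Θ, DFunLike.congr_fun hΘ, fun j => by simp [Θ]⟩
  rw [← RingEquiv.height_map Θ.toRingEquiv, Ideal.map_span, ← Set.range_comp]
  refine (hG.card_le_height_span hcard hinj hsurj hker).trans_eq ?_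
  congr! 4 with i
  simp [hΘ, hX]

theorem exists_formSystem_map_splitVars_span_eq {m n : ℕ}
    {φ : Matrix (Fin n) (Fin (m + 2)) (MvPolynomial (Fin (m + 2)) k)}
    (hlin : ∀ i (r : Fin m), (φ i (finSumFinEquiv (Sum.inl r))).IsHomogeneous 1)
    (hquad : ∀ i (a : Fin 2), (φ i (finSumFinEquiv (Sum.inr a))).IsHomogeneous 2) :
    ∃ F : FormSystem m (T k n), F.HasLinearCoeffs ∧
      (Ideal.span (Set.range fun i =>
        (∑ j, rename Sum.inl (φ j i) * X (Sum.inr j) : B k (m + 2) n))).map (splitVars k m n) =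
          F.ideal := by
  choose G hG using fun j => FormSystem.exists_form_eq
    (f := fun v => rename finSumFinEquiv.symm (φ j (finSumFinEquiv v)))
    (fun i => (hlin j i).rename_isHomogeneous) (fun a => (hquad j a).rename_isHomogeneous)
  refine ⟨.generic G, FormSystem.hasLinearCoeffs_generic G, ?_⟩
  rw [Ideal.map_span, ← Set.range_comp, FormSystem.ideal, ← finSumFinEquiv.surjective.range_comp]
  congr! 2
  ext1 v
  simp [FormSystem.form_generic, hG, splitVars_rename_inl, splitVars_X_inr]

end SymmetricAlgebra

theorem not_isField_mvPolynomial {k : Type} [Field k] {n : ℕ} (hn : n ≠ 0) : ¬ IsField (T k n) :=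
  fun h => hn <| by
    have := ringKrullDim_eq_zero_of_isField h
    simpa [MvPolynomial.ringKrullDim_of_isNoetherianRing] using this

theorem A0_generator_general {k : Type} [Field k] {d e : ℕ} (hd : 2 ≤ d) {E : Type*}
    [AddCommGroup E] [Module (MvPolynomial (Fin d) k) E]
    {φ : Matrix (Fin (d + e)) (Fin d) (MvPolynomial (Fin d) k)}
    (hinj : Function.Injective φ.mulVecLin)
    {π : (Fin (d + e) → MvPolynomial (Fin d) k) →ₗ[MvPolynomial (Fin d) k] E}
    (hsurj : Function.Surjective π)
    (hker : LinearMap.ker π = LinearMap.range φ.mulVecLin)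
    (hdeg : ∀ i (j : Fin d), ((j : ℕ) < d - 2 → (φ i j).IsHomogeneous 1) ∧
      (d - 2 ≤ (j : ℕ) → (φ i j).IsHomogeneous 2))
    (hG : SatisfiesG (MvPolynomial (Fin d) k) E e d)
    {L : Ideal (B k d (d + e))}
    (hL : L = Ideal.span (Set.range fun i =>
      ∑ j, rename Sum.inl (φ j i) * X (Sum.inr j)))
    {ι κ : Type} [Finite ι] [Fintype κ] {ρ : Matrix ι κ (T k (d + e))}
    (hρ : ∃ πρ : (ι → T k (d + e)) →ₗ[T k (d + e)] (SxDeg k d (d + e) L 2),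
      Function.Surjective πρ ∧ LinearMap.ker πρ = LinearMap.range ρ.mulVecLin) :
    (∃ z : B k d (d + e) ⧸ L,
      AcompZ k d (d + e) L 0 = Submodule.span (T k (d + e)) {z}) ∧
    (htGE (minorsIdeal ρ ρ.rank) 2 →
      ∃ g : B k d (d + e),
        g ∈ weightedHomogeneousSubmodule k (bwt d (d + e)) (0, 4 * d - 4) ∧
        AcompZ k d (d + e) L 0 =
          Submodule.span (T k (d + e)) {Ideal.Quotient.mk L g}) := by
  have := Fintype.ofFinite ι
  obtain ⟨m, rfl⟩ := Nat.exists_eq_add_of_le' hd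
  obtain ⟨F, hF, hFL⟩ := exists_formSystem_map_splitVars_span_eq (m := m)
    (fun i r => (hdeg i (finSumFinEquiv (Sum.inl r))).1 (by simp))
    (fun i a => (hdeg i (finSumFinEquiv (Sum.inr a))).2 (by simp))
  rw [← hL] at hFL
  have hheight : (m + 2 : ℕ∞) ≤ F.ideal.height := by
    rw [height_formSystem_ideal hFL, hL]
    simpa using SatisfiesG.card_le_height_span_range (e := e) (by simpa using hG) (by simp)
      hinj hsurj hker
  have hT : ¬ IsField (T k (m + 2 + e)) := not_isField_mvPolynomial (by omega)
  refine ⟨?_, fun hht => ?_⟩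
  · obtain ⟨s, hs⟩ := FormSystem.exists_torsionIdeal_eq_span hheight hT
    exact ⟨_, AcompZ_zero_eq_span hFL hs⟩
  · obtain ⟨πρ, hπsurj, hπker⟩ := hρ
    obtain ⟨r, hr⟩ := exists_isPresentation hFL hπsurj hπker
    obtain ⟨s, hdegs, hs⟩ := hF.exists_torsionIdeal_eq_span hheight hT hr hht
    refine ⟨rename Sum.inr s, ?_, AcompZ_zero_eq_span hFL hs⟩
    exact isWeightedHomogeneous_bwt_rename_inr _
      (by rwa [show 4 * (m + 2) - 4 = 4 * m + 4 by omega])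

theorem A0_generator
    (d e : ℕ) (hd : 3 ≤ d)
    (E : Type) [AddCommGroup E] [Module (MvPolynomial (Fin d) k) E]
    [Module.Finite (MvPolynomial (Fin d) k) E]
    -- `E` is torsion-free
    (htf : Submodule.torsion (MvPolynomial (Fin d) k) E = ⊥)
    -- `0 → R^d →φ R^{d+e} →π E → 0` is a (minimal) free resolution, so `pd E = 1`,
    -- `rank E = e`
    (φ : Matrix (Fin (d + e)) (Fin d) (MvPolynomial (Fin d) k))
    (hinj : Function.Injective φ.mulVecLin)
    (π : (Fin (d + e) → MvPolynomial (Fin d) k) →ₗ[MvPolynomial (Fin d) k] E)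
    (hsurj : Function.Surjective π)
    (hker : LinearMap.ker π = LinearMap.range φ.mulVecLin)
    -- `φ = [φ′ | φ″]`: the first `d−2` columns are linear, the last two are quadrics
    (hdeg : ∀ (i : Fin (d + e)) (j : Fin d),
      ((j : ℕ) < d - 2 → φ i j ∈ homogeneousSubmodule (Fin d) k 1) ∧
      (d - 2 ≤ (j : ℕ) → φ i j ∈ homogeneousSubmodule (Fin d) k 2))
    -- `I_1(φ) = (x_1,…,x_d)`
    (hI1 : Ideal.span {r : MvPolynomial (Fin d) k | ∃ i j, φ i j = r} =
      Ideal.span (Set.range X))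
    -- `E` is minimally generated by `μ(E) = d+e` elements
    (hμ : ∀ s : Finset E, Submodule.span (MvPolynomial (Fin d) k) (s : Set E) = ⊤ →
      d + e ≤ s.card)
    -- `E` satisfies `G_d`
    (hGd : ∀ (p : Ideal (MvPolynomial (Fin d) k)) (_ : p.IsPrime) (c : ℕ),
      ringKrullDim (Localization.AtPrime p) = (c : WithBot ℕ∞) → 1 ≤ c → c ≤ d - 1 →
      ∃ s : Finset (LocalizedModule p.primeCompl E), s.card ≤ c + e - 1 ∧
        Submodule.span (Localization.AtPrime p)
          (s : Set (LocalizedModule p.primeCompl E)) = ⊤)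
    -- the defining ideal `L` of the symmetric algebra: `[ℓ_1 … ℓ_d] = [y_1 … y_{d+e}]·φ`
    (ℓ : Fin d → B k d (d + e))
    (hℓ : ∀ i, ℓ i = ∑ j, (rename Sum.inl (φ j i)) * X (Sum.inr j))
    (L : Ideal (B k d (d + e))) (hL : L = Ideal.span (Set.range ℓ))
    -- `ρ`: the first map in the graded strand resolving `S(E)_2`, i.e. a matrix over `T`
    -- presenting the `T`-module `S(E)_2`
    (ι κ : Type) [Fintype ι] [Fintype κ] [DecidableEq ι] [DecidableEq κ]
    (ρ : Matrix ι κ (T k (d + e)))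
    (hρ : ∃ πρ : (ι → T k (d + e)) →ₗ[T k (d + e)] (SxDeg k d (d + e) L 2),
      Function.Surjective πρ ∧ LinearMap.ker πρ = LinearMap.range ρ.mulVecLin) :
    -- `A_0` is a principal ideal of `T` (a cyclic `T`-submodule of `S(E)_0 ≅ T`)
    (∃ z : B k d (d + e) ⧸ L,
      AcompZ k d (d + e) L 0 = Submodule.span (T k (d + e)) {z}) ∧
    -- if `ht I(ρ) ≥ 2` the generator has bidegree `(0, 4d−4)`
    (htGE (minorsIdeal ρ ρ.rank) 2 →
      ∃ g : B k d (d + e),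
        g ∈ weightedHomogeneousSubmodule k (bwt d (d + e)) (0, 4 * d - 4) ∧
        AcompZ k d (d + e) L 0 =
          Submodule.span (T k (d + e)) {Ideal.Quotient.mk L g}) :=
  A0_generator_general (by omega) hinj hsurj hker hdeg hGd (by rw [hL, _root_.funext hℓ]) hρ

end Stmt11
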